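/- Fix an integer d ≥ 1 and a multi-index κ ∈ ℕ^d. Let P₀ be any element of the finite linear span of the canonical basis vectors Φ_{κ,α}, α ∈ ℕ^d, of the true polyanalytic Fock space H_κ(ℂ^d). Then there exists a constant M = M(d, κ, P₀) > 0 such that for every F in H_κ(ℂ^d) one has inf_{|λ|=1} ‖F − λP₀‖_{γ_d} ≤ M · ‖ |F| − |P₀| ‖_{γ_d}. -/

import Mathlib

open MeasureTheory

/-- The one-dimensional Hermite basis functions
`Φ_{k,n}(z) = (1/√(k! n!)) Σ_{j=0}^{min(k,n)} (−1)^j C(k,j) (n!/(n−j)!) z^{n−j} conj(z)^{k−j}`. -/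
noncomputable def HermitePoly (k n : ℕ) (z : ℂ) : ℂ :=
  (((Real.sqrt ((Nat.factorial k) * (Nat.factorial n)) : ℝ) : ℂ))⁻¹ *
    ∑ j ∈ Finset.range (min k n + 1),
      (-1 : ℂ) ^ j * (Nat.choose k j : ℂ) * (Nat.descFactorial n j : ℂ) *
        z ^ (n - j) * (starRingEnd ℂ z) ^ (k - j)

/-- The `d`-dimensional basis `Φ_{κ,α}(z) = Π_q Φ_{κ_q, α_q}(z_q)`. -/
noncomputable def PhiBasis {d : ℕ} (κ α : Fin d → ℕ) (z : Fin d → ℂ) : ℂ :=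
  ∏ q : Fin d, HermitePoly (κ q) (α q) (z q)

/-- A finite linear combination of the canonical basis vectors `Φ_{κ,α}`,
indexed by a finitely supported coefficient family. -/
noncomputable def trueHermitePoly {d : ℕ} (κ : Fin d → ℕ)
    (F : (Fin d → ℕ) →₀ ℂ) (z : Fin d → ℂ) : ℂ :=
  F.sum fun α c => c * PhiBasis κ α z

/-- The Gaussian norm on `ℂ^d`:
`‖F‖_{γ_d}² = (1/π^d) ∫_{ℂ^d} ‖F(z)‖² e^{−Σ_q |z_q|²} dm(z)`. -/
noncomputable def gammaNormD (d : ℕ) {E : Type*} [NormedAddCommGroup E]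
    (F : (Fin d → ℂ) → E) : ℝ :=
  Real.sqrt ((1 / Real.pi ^ d) *
    ∫ z : Fin d → ℂ, ‖F z‖ ^ 2 * Real.exp (-∑ q, ‖z q‖ ^ 2))

/-!
Write `P = ∑ p α Φ_{κ,α}` and `F = P + H` with `H = ∑ h α Φ_{κ,α}`. On the circle `e^{iθ} z` through
a point `z` the function `H` rotates with angular velocity `|z|²`, up to the *rotation defect*
`∑ h α (|α| - |z|²) Φ_{κ,α}(z)`, which is smaller than `|z|² H` by a factor `1 / |z|` on average.
Meanwhile the phase of `P`, being that of a polynomial of bounded degree in `e^{iθ}`, hardly moves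
during a quarter turn of `H`. As `Re (H * conj (phase P)) ≤ |P + H| - |P|`, the quarter turns
convert the modulus gap into a bound for all of `|H|`, so that far from the origin `H` is controlled
by the gap and a small multiple of `‖H‖`. Near the origin `H` is determined, up to a small error, by
finitely many coefficients. Hence `‖h‖² ≤ C ‖|P + H| - |P|‖² + C ∑_{α ∈ A} |h α|²` for a finite
set `A` which does not depend on `h`.

If stability failed for `F = P + ε H`, `‖h‖ = 1`, then along a subsequence `h` would converge
coefficientwise to some `c`, nonzero by this estimate, whose series `f` satisfies
`2 Re (f * conj P) + ε |f|² = 0` on all of `ℂ^d`. Along each circle this is an identity between an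
entire function and its reflection, and Gaussian growth forces `f` to be a finite sum. Polarising
and comparing leading polynomials gives `f = ν P`, and the choice of the phase of `F` leaves only
`ν = 0`.
-/

namespace HermitePhaseRetrieval

open scoped ComplexConjugate

/-! ### Complex Hermite polynomials -/

section PolarHermite

variable {R : Type*} [CommRing R]

/-- The complex Hermite (Itô) polynomial `H_{k,n}` in two independent variables `x`, `y`,
homogenised by `s`. At `s = 1`, `y = conj x` it is `√(k! n!) Φ_{k,n}(x)`, and at `s = 0` it is the
leading monomial `x ^ n * y ^ k`. -/
def polarHermite (k n : ℕ) (s x y : R) : R :=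
  ∑ j ∈ Finset.range (k + 1), (-s) ^ j * k.choose j * n.descFactorial j * x ^ (n - j) * y ^ (k - j)

lemma polarHermite_eq_sum_range_min (k n : ℕ) (s x y : R) :
    polarHermite k n s x y = ∑ j ∈ Finset.range (min k n + 1),
      (-s) ^ j * k.choose j * n.descFactorial j * x ^ (n - j) * y ^ (k - j) := by
  refine (Finset.sum_subset (by grind) fun j _ hj => ?_).symm
  have : n < j := by grind
  simp [Nat.descFactorial_of_lt this]

@[simp]
lemma polarHermite_zero_left (n : ℕ) (s x y : R) : polarHermite 0 n s x y = x ^ n := by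
  simp [polarHermite]

@[simp]
lemma polarHermite_zero_homogenizer (k n : ℕ) (x y : R) :
    polarHermite k n 0 x y = x ^ n * y ^ k := by
  simp [polarHermite, Finset.sum_range_succ']

lemma polarHermite_succ_left (k n : ℕ) (s x y : R) :
    polarHermite (k + 1) n s x y =
      y * polarHermite k n s x y - s * n * polarHermite k (n - 1) s x y := by
  have hy : y * polarHermite k n s x y = ∑ j ∈ Finset.range (k + 2),
      (-s) ^ j * k.choose j * n.descFactorial j * x ^ (n - j) * y ^ (k + 1 - j) := by
    rw [Finset.sum_range_succ _ (k + 1), polarHermite, Finset.mul_sum]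
    simp only [Nat.choose_succ_self, Nat.cast_zero, mul_zero, zero_mul, add_zero]
    refine Finset.sum_congr rfl fun j hj => ?_
    rw [Nat.sub_add_comm (Nat.lt_succ_iff.1 (Finset.mem_range.1 hj)), pow_succ]
    ring
  have hs : s * n * polarHermite k (n - 1) s x y = -∑ j ∈ Finset.range (k + 1),
      (-s) ^ (j + 1) * k.choose j * n.descFactorial (j + 1) * x ^ (n - (j + 1)) *
        y ^ (k + 1 - (j + 1)) := by
    rw [polarHermite, Finset.mul_sum, ← Finset.sum_neg_distrib]
    refine Finset.sum_congr rfl fun j _ => ?_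
    have hdesc : (n.descFactorial (j + 1) : R) = n * (n - 1).descFactorial j := by
      cases n with
      | zero => simp
      | succ m => rw [Nat.succ_descFactorial_succ]; push_cast; simp
    rw [hdesc, show n - (j + 1) = n - 1 - j by omega, Nat.add_sub_add_right]
    ring
  rw [hy, hs, polarHermite, Finset.sum_range_succ', Finset.sum_range_succ' _ (k + 1),
    sub_neg_eq_add, add_right_comm, ← Finset.sum_add_distrib]
  congr 1
  · refine Finset.sum_congr rfl fun j _ => ?_
    rw [Nat.choose_succ_succ]
    push_cast
    ring
  · simp

/-- Euler's identity for `x ∂ₓ - y ∂ᵧ`, since `∂ₓ H_{k,n} = n H_{k,n-1}` and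
`∂ᵧ H_{k,n} = k H_{k-1,n}`. -/
lemma polarHermite_euler (k n : ℕ) (s x y : R) :
    ((n : R) - k) * polarHermite k n s x y =
      n * x * polarHermite k (n - 1) s x y - k * y * polarHermite (k - 1) n s x y := by
  induction k generalizing n with
  | zero => cases n <;> simp [pow_succ']; ring
  | succ k ih =>
    have hk : (k : R) * polarHermite k n s x y =
        k * (y * polarHermite (k - 1) n s x y - s * n * polarHermite (k - 1) (n - 1) s x y) := by
      cases k with
      | zero => simp
      | succ k => rw [polarHermite_succ_left, Nat.add_sub_cancel]
    have hn : (n : R) * ((n - 1 : ℕ) : R) = n * (n - 1) := by cases n <;> simp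
    rw [polarHermite_succ_left, polarHermite_succ_left, Nat.add_sub_cancel]
    push_cast
    linear_combination y * ih n - s * n * ih (n - 1) + y * hk +
      s * polarHermite k (n - 1) s x y * hn

lemma polarHermite_three_term (k n : ℕ) (x y : R) :
    ((n : R) - k - x * y) * polarHermite k n 1 x y =
      -x * polarHermite (k + 1) n 1 x y - k * y * polarHermite (k - 1) n 1 x y := by
  rw [polarHermite_succ_left]
  linear_combination polarHermite_euler k n 1 x y

lemma polarHermite_homogeneous (k n : ℕ) (a b s x y : R) :
    polarHermite k n (a * b * s) (a * x) (b * y) = a ^ n * b ^ k * polarHermite k n s x y := by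
  simp only [polarHermite_eq_sum_range_min, Finset.mul_sum]
  refine Finset.sum_congr rfl fun j hj => ?_
  obtain ⟨k', rfl⟩ : ∃ k', k = j + k' := Nat.exists_eq_add_of_le (by grind)
  obtain ⟨n', rfl⟩ : ∃ n', n = j + n' := Nat.exists_eq_add_of_le (by grind)
  simp only [Nat.add_sub_cancel_left]
  ring

end PolarHermite

lemma conj_polarHermite (k n : ℕ) (s x y : ℂ) :
    conj (polarHermite k n s x y) = polarHermite k n (conj s) (conj x) (conj y) := by
  simp [polarHermite, map_sum]

lemma norm_polarHermite_le (k n : ℕ) {x y : ℂ} {ρ : ℝ} (hρ : 1 ≤ ρ) (hx : ‖x‖ ≤ ρ) (hy : ‖y‖ ≤ ρ) :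
    ‖polarHermite k n 1 x y‖ ≤ ρ ^ k * (ρ * 2 ^ k) ^ n := by
  have hterm (j : ℕ) : ‖(-1 : ℂ) ^ j * k.choose j * n.descFactorial j * x ^ (n - j) * y ^ (k - j)‖ ≤
      ρ ^ (n + k) * (n ^ j * 1 ^ (k - j) * k.choose j) := by
    have hpow : ‖x‖ ^ (n - j) * ‖y‖ ^ (k - j) ≤ ρ ^ (n + k) :=
      calc ‖x‖ ^ (n - j) * ‖y‖ ^ (k - j) ≤ ρ ^ (n - j) * ρ ^ (k - j) := by gcongr
        _ = ρ ^ (n - j + (k - j)) := (pow_add ..).symm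
        _ ≤ ρ ^ (n + k) := pow_le_pow_right₀ hρ (by omega)
    have hdesc : (n.descFactorial j : ℝ) ≤ n ^ j := by exact_mod_cast n.descFactorial_le_pow j
    calc _ = ‖x‖ ^ (n - j) * ‖y‖ ^ (k - j) * (n.descFactorial j * k.choose j) := by
          simp only [norm_mul, norm_pow, norm_neg, norm_one, one_pow, Complex.norm_natCast]
          ring
      _ ≤ ρ ^ (n + k) * (n ^ j * k.choose j) := by gcongr
      _ = _ := by ring
  have htwo : (n : ℝ) + 1 ≤ 2 ^ n := by exact_mod_cast Nat.lt_two_pow_self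
  calc ‖polarHermite k n 1 x y‖
      ≤ ∑ j ∈ Finset.range (k + 1), ρ ^ (n + k) * (n ^ j * 1 ^ (k - j) * k.choose j) :=
        norm_sum_le_of_le _ fun j _ => hterm j
    _ = ρ ^ (n + k) * ((n : ℝ) + 1) ^ k := by rw [← Finset.mul_sum, add_pow]
    _ ≤ ρ ^ (n + k) * (2 ^ n) ^ k := by gcongr
    _ = ρ ^ k * (ρ * 2 ^ k) ^ n := by
        rw [mul_pow, pow_add, ← pow_mul, ← pow_mul, mul_comm n k]
        ring

/-! ### Orthogonality for the planar Gaussian -/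

section PlanarGaussian

/-- The unnormalised Gaussian density `e^{-|z|²}` on `ℂ`, complex-valued so that it can be
integrated against polynomials in `z` and `conj z`. -/
noncomputable def gaussianWeight (z : ℂ) : ℂ := (Real.exp (-‖z‖ ^ 2) : ℝ)

lemma continuous_gaussianWeight : Continuous gaussianWeight := by
  unfold gaussianWeight
  fun_prop

lemma integral_norm_pow_mul_exp_neg_sq (m : ℕ) :
    ∫ z : ℂ, ‖z‖ ^ m * Real.exp (-‖z‖ ^ 2) = Real.pi * Real.Gamma ((m + 2) / 2) := by
  have h := Complex.integral_rpow_mul_exp_neg_rpow (p := 2) (q := m) (by norm_num)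
    (by linarith [m.cast_nonneg (α := ℝ)])
  simp only [Real.rpow_natCast, Real.rpow_ofNat] at h
  rw [h]
  ring

lemma integrable_norm_pow_mul_exp_neg_sq (m : ℕ) :
    Integrable fun z : ℂ => ‖z‖ ^ m * Real.exp (-‖z‖ ^ 2) := by
  refine .of_integral_ne_zero ?_
  rw [integral_norm_pow_mul_exp_neg_sq]
  have := Real.Gamma_pos_of_pos (s := ((m : ℝ) + 2) / 2) (by positivity)
  positivity

lemma integrable_pow_mul_conj_pow_mul_gaussianWeight (a b : ℕ) :
    Integrable fun z : ℂ => z ^ a * conj z ^ b * gaussianWeight z := by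
  refine (integrable_norm_pow_mul_exp_neg_sq (a + b)).mono' ?_ (.of_forall fun z => ?_)
  · have := continuous_gaussianWeight
    exact (by fun_prop : Continuous _).aestronglyMeasurable
  · rw [gaussianWeight, norm_mul, norm_mul, norm_pow, norm_pow, RCLike.norm_conj, pow_add,
      Complex.norm_real, Real.norm_of_nonneg (Real.exp_pos _).le]

lemma integral_pow_mul_conj_pow_mul_gaussianWeight_of_ne {a b : ℕ} (h : a ≠ b) :
    ∫ z : ℂ, z ^ a * conj z ^ b * gaussianWeight z = 0 := by
  have hab : (a : ℂ) - b ≠ 0 := sub_ne_zero.2 (by exact_mod_cast h)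
  -- A rotation under which the integrand changes sign.
  let u : Circle := Circle.exp (Real.pi / ((a : ℝ) - b))
  have hu : (u : ℂ) ^ a * conj (u : ℂ) ^ b = -1 := by
    rw [← Circle.coe_inv_eq_conj, ← Circle.exp_neg, Circle.coe_exp, Circle.coe_exp,
      ← Complex.exp_nat_mul, ← Complex.exp_nat_mul, ← Complex.exp_add, ← Complex.exp_pi_mul_I]
    congr 1
    push_cast
    field_simp
    ring
  have hrot := (rotation u).measurePreserving.integral_comp
    (rotation u).toHomeomorph.measurableEmbedding fun z => z ^ a * conj z ^ b * gaussianWeight z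
  have hneg (z : ℂ) : rotation u z ^ a * conj (rotation u z) ^ b * gaussianWeight (rotation u z) =
      -(z ^ a * conj z ^ b * gaussianWeight z) := by
    rw [gaussianWeight, LinearIsometryEquiv.norm_map, ← gaussianWeight, rotation_apply, map_mul,
      mul_pow, mul_pow]
    linear_combination (z ^ a * conj z ^ b * gaussianWeight z) * hu
  simp_rw [hneg, integral_neg] at hrot
  linear_combination (-1 / 2 : ℂ) * hrot

lemma integral_pow_mul_conj_pow_mul_gaussianWeight (a b : ℕ) :
    ∫ z : ℂ, z ^ a * conj z ^ b * gaussianWeight z =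
      if a = b then (Real.pi * b.factorial : ℂ) else 0 := by
  split_ifs with h
  · subst h
    have hreal (z : ℂ) : z ^ a * conj z ^ a * gaussianWeight z =
        ((‖z‖ ^ (2 * a) * Real.exp (-‖z‖ ^ 2) : ℝ) : ℂ) := by
      rw [← mul_pow, Complex.mul_conj, Complex.normSq_eq_norm_sq, gaussianWeight, pow_mul]
      push_cast
      rfl
    simp_rw [hreal]
    rw [integral_complex_ofReal, integral_norm_pow_mul_exp_neg_sq,
      show (((2 * a : ℕ) : ℝ) + 2) / 2 = a + 1 by push_cast; ring, Real.Gamma_nat_eq_factorial]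
    push_cast
    rfl
  · exact integral_pow_mul_conj_pow_mul_gaussianWeight_of_ne h

lemma polarHermite_succ_moment (k n p q : ℕ) (z : ℂ) :
    polarHermite (k + 1) n 1 z (conj z) * z ^ p * conj z ^ q * gaussianWeight z =
      polarHermite k n 1 z (conj z) * z ^ p * conj z ^ (q + 1) * gaussianWeight z -
        n * (polarHermite k (n - 1) 1 z (conj z) * z ^ p * conj z ^ q * gaussianWeight z) := by
  rw [polarHermite_succ_left]
  ring

lemma integrable_polarHermite_moment (k n p q : ℕ) :
    Integrable fun z : ℂ =>
      polarHermite k n 1 z (conj z) * z ^ p * conj z ^ q * gaussianWeight z := by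
  induction k generalizing n q with
  | zero =>
    simp_rw [polarHermite_zero_left, ← pow_add]
    exact integrable_pow_mul_conj_pow_mul_gaussianWeight (n + p) q
  | succ k ih =>
    simp_rw [polarHermite_succ_moment]
    exact (ih n (q + 1)).sub ((ih (n - 1) q).const_mul _)

lemma integral_polarHermite_moment (k n p q : ℕ) :
    ∫ z : ℂ, polarHermite k n 1 z (conj z) * z ^ p * conj z ^ q * gaussianWeight z =
      Real.pi * p.descFactorial k * if n + p = k + q then (q.factorial : ℂ) else 0 := by
  induction k generalizing n q with
  | zero =>
    simp_rw [polarHermite_zero_left, ← pow_add]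
    rw [integral_pow_mul_conj_pow_mul_gaussianWeight]
    simp
  | succ k ih =>
    simp_rw [polarHermite_succ_moment]
    rw [integral_sub (integrable_polarHermite_moment ..)
        ((integrable_polarHermite_moment ..).const_mul _), integral_const_mul, ih, ih,
      Nat.descFactorial_succ]
    by_cases hpk : p < k
    · simp [Nat.descFactorial_of_lt hpk]
    rw [Nat.cast_mul, Nat.cast_sub (not_lt.1 hpk)]
    by_cases h : n + p = k + (q + 1)
    · have hn : (n : ℂ) * (if n - 1 + p = k + q then (q.factorial : ℂ) else 0) =
          n * q.factorial := by
        rcases n with _ | n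
        · simp
        · rw [if_pos (by omega)]
      have h' : (n : ℂ) + p = k + (q + 1) := by exact_mod_cast h
      rw [if_pos h, if_pos (show n + p = k + 1 + q by omega), Nat.factorial_succ]
      push_cast
      linear_combination -(Real.pi * p.descFactorial k * q.factorial) * h' -
        Real.pi * p.descFactorial k * hn
    · rcases n with _ | n
      · simp [show ¬p = k + (q + 1) by omega, show ¬p = k + 1 + q by omega]
      · simp [h, show ¬n + p = k + q by omega, show ¬n + 1 + p = k + 1 + q by omega]

/-- The constant `1 / √(k! n!)` normalising the Hermite polynomial `H_{k,n}`. -/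
noncomputable def hermiteConst (k n : ℕ) : ℝ := (√(k.factorial * n.factorial))⁻¹

lemma hermiteConst_pos (k n : ℕ) : 0 < hermiteConst k n := by
  unfold hermiteConst
  positivity

lemma hermiteConst_sq_mul_factorial (k n : ℕ) :
    hermiteConst k n ^ 2 * (k.factorial * n.factorial) = 1 := by
  rw [hermiteConst, inv_pow, Real.sq_sqrt (by positivity)]
  exact inv_mul_cancel₀ (by positivity)

lemma hermiteConst_le (k n : ℕ) : hermiteConst k n ≤ (√n.factorial)⁻¹ := by
  refine inv_anti₀ (by positivity) (Real.sqrt_le_sqrt ?_)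
  exact le_mul_of_one_le_left (by positivity) (by exact_mod_cast k.factorial_pos)

lemma sqrt_succ_mul_hermiteConst_succ (k n : ℕ) :
    √(k + 1) * hermiteConst (k + 1) n = hermiteConst k n := by
  rw [hermiteConst, hermiteConst, Nat.factorial_succ, Nat.cast_mul, mul_assoc,
    Real.sqrt_mul (by positivity), mul_inv, ← mul_assoc, Nat.cast_succ,
    mul_inv_cancel₀ (by positivity), one_mul]

lemma sqrt_mul_hermiteConst_pred (k n : ℕ) :
    √k * hermiteConst (k - 1) n = k * hermiteConst k n := by
  cases k with
  | zero => simp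
  | succ k =>
    rw [Nat.add_sub_cancel, ← sqrt_succ_mul_hermiteConst_succ, ← mul_assoc, Nat.cast_succ,
      Real.mul_self_sqrt (by positivity)]

lemma HermitePoly_eq_polarHermite (k n : ℕ) (z : ℂ) :
    HermitePoly k n z = hermiteConst k n * polarHermite k n 1 z (conj z) := by
  rw [HermitePoly, hermiteConst, polarHermite_eq_sum_range_min]
  push_cast
  rfl

lemma conj_HermitePoly (k m : ℕ) (z : ℂ) :
    conj (HermitePoly k m z) = ∑ j ∈ Finset.range (k + 1),
      hermiteConst k m * ((-1) ^ j * k.choose j * m.descFactorial j) *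
        (z ^ (k - j) * conj z ^ (m - j)) := by
  rw [HermitePoly_eq_polarHermite, map_mul, conj_polarHermite, polarHermite, Finset.mul_sum]
  refine Finset.sum_congr rfl fun j _ => ?_
  rw [Complex.conj_conj, Complex.conj_ofReal, map_one]
  ring

lemma HermitePoly_mul_conj_mul_gaussianWeight (k n m : ℕ) (z : ℂ) :
    HermitePoly k n z * conj (HermitePoly k m z) * gaussianWeight z =
      ∑ j ∈ Finset.range (k + 1),
        hermiteConst k n * hermiteConst k m * ((-1) ^ j * k.choose j * m.descFactorial j) *
          (polarHermite k n 1 z (conj z) * z ^ (k - j) * conj z ^ (m - j) * gaussianWeight z) := by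
  rw [conj_HermitePoly, HermitePoly_eq_polarHermite, Finset.mul_sum, Finset.sum_mul]
  exact Finset.sum_congr rfl fun j _ => by ring

lemma integrable_HermitePoly_mul_conj (k n m : ℕ) :
    Integrable fun z : ℂ => HermitePoly k n z * conj (HermitePoly k m z) * gaussianWeight z := by
  simp_rw [HermitePoly_mul_conj_mul_gaussianWeight]
  exact integrable_finsetSum _ fun j _ => (integrable_polarHermite_moment ..).const_mul _

lemma integral_HermitePoly_mul_conj (k n m : ℕ) :
    ∫ z : ℂ, HermitePoly k n z * conj (HermitePoly k m z) * gaussianWeight z =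
      if n = m then (Real.pi : ℂ) else 0 := by
  simp_rw [HermitePoly_mul_conj_mul_gaussianWeight]
  rw [integral_finsetSum _ fun j _ => (integrable_polarHermite_moment ..).const_mul _]
  simp_rw [integral_const_mul, integral_polarHermite_moment]
  -- `H_{k,n}` is orthogonal to `z ^ a * conj z ^ b` for `a < k`, so only the leading term survives.
  rw [Finset.sum_eq_single_of_mem 0 (by simp) fun j hj hj0 => by
    simp [Nat.descFactorial_of_lt (show k - j < k by grind)]]
  split_ifs with h h' h'
  · subst h'
    have hconst : (hermiteConst k n : ℂ) ^ 2 * (k.factorial * n.factorial) = 1 := by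
      exact_mod_cast hermiteConst_sq_mul_factorial k n
    simp only [Nat.sub_zero, Nat.descFactorial_self, Nat.descFactorial_zero, Nat.choose_zero_right]
    linear_combination (Real.pi : ℂ) * hconst
  all_goals first | omega | simp

end PlanarGaussian

/-! ### The Gaussian measure and the rotation defect -/

section GaussianMeasure

variable {d : ℕ} {E : Type*} [NormedAddCommGroup E]

/-- The squared Euclidean norm on `ℂ^d`; the norm of the type `Fin d → ℂ` is the supremum norm. -/
noncomputable def euclideanSq (z : Fin d → ℂ) : ℝ := ∑ q, ‖z q‖ ^ 2

lemma euclideanSq_nonneg (z : Fin d → ℂ) : 0 ≤ euclideanSq z := by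
  unfold euclideanSq
  positivity

@[fun_prop]
lemma continuous_euclideanSq : Continuous (euclideanSq (d := d)) := by
  unfold euclideanSq
  fun_prop

lemma sq_norm_apply_le_euclideanSq (z : Fin d → ℂ) (q : Fin d) : ‖z q‖ ^ 2 ≤ euclideanSq z :=
  Finset.single_le_sum (f := fun q => ‖z q‖ ^ 2) (fun _ _ => by positivity) (Finset.mem_univ q)

/-- The density `π^{-d} e^{-|z|²}` of the standard complex Gaussian measure on `ℂ^d`. -/
noncomputable def gaussianDensity (d : ℕ) (z : Fin d → ℂ) : ℝ :=
  (1 / Real.pi ^ d) * Real.exp (-euclideanSq z)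

lemma gaussianDensity_pos (z : Fin d → ℂ) : 0 < gaussianDensity d z := by
  have := Real.pi_pos
  unfold gaussianDensity
  positivity

lemma continuous_gaussianDensity : Continuous (gaussianDensity d) := by
  unfold gaussianDensity
  fun_prop

/-- The standard Gaussian probability measure on `ℂ^d`. -/
noncomputable def gaussian (d : ℕ) : Measure (Fin d → ℂ) :=
  volume.withDensity fun z => ENNReal.ofReal (gaussianDensity d z)

lemma gaussian_absolutelyContinuous : gaussian d ≪ volume :=
  withDensity_absolutelyContinuous _ _

lemma absolutelyContinuous_gaussian : volume ≪ gaussian d :=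
  withDensity_absolutelyContinuous'
    continuous_gaussianDensity.measurable.ennreal_ofReal.aemeasurable
    (.of_forall fun z => by simp [gaussianDensity_pos])

section Integral

variable [NormedSpace ℝ E] (f : (Fin d → ℂ) → E)

lemma integral_gaussian : ∫ z, f z ∂gaussian d = ∫ z, gaussianDensity d z • f z := by
  rw [gaussian, integral_withDensity_eq_integral_toReal_smul
    continuous_gaussianDensity.measurable.ennreal_ofReal (.of_forall fun _ => by simp)]
  simp only [ENNReal.toReal_ofReal (gaussianDensity_pos _).le]

lemma integrable_gaussian_iff :
    Integrable f (gaussian d) ↔ Integrable fun z => gaussianDensity d z • f z := by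
  rw [gaussian, integrable_withDensity_iff_integrable_smul'
    continuous_gaussianDensity.measurable.ennreal_ofReal (.of_forall fun _ => by simp)]
  simp only [ENNReal.toReal_ofReal (gaussianDensity_pos _).le]

end Integral

lemma gammaNormD_eq_sqrt_integral (F : (Fin d → ℂ) → E) :
    gammaNormD d F = √(∫ z, ‖F z‖ ^ 2 ∂gaussian d) := by
  rw [gammaNormD, integral_gaussian, ← integral_const_mul]
  congr 2 with z
  rw [gaussianDensity, euclideanSq, smul_eq_mul]
  ring

end GaussianMeasure

section Orthonormality

variable {d : ℕ} (κ α β : Fin d → ℕ)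

@[fun_prop]
lemma continuous_PhiBasis : Continuous (PhiBasis κ α) := by
  unfold PhiBasis HermitePoly
  fun_prop

lemma gaussianDensity_smul_PhiBasis_mul_conj (z : Fin d → ℂ) :
    gaussianDensity d z • (PhiBasis κ α z * conj (PhiBasis κ β z)) =
      (1 / Real.pi ^ d : ℂ) * ∏ q, (HermitePoly (κ q) (α q) (z q) *
        conj (HermitePoly (κ q) (β q) (z q)) * gaussianWeight (z q)) := by
  have hweight : ∏ q, gaussianWeight (z q) = (Real.exp (-euclideanSq z) : ℝ) := by
    simp only [gaussianWeight, euclideanSq]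
    rw [← Complex.ofReal_prod, ← Real.exp_sum, Finset.sum_neg_distrib]
  rw [Finset.prod_mul_distrib, Finset.prod_mul_distrib, hweight, gaussianDensity,
    Complex.real_smul, PhiBasis, PhiBasis, map_prod]
  push_cast
  ring

lemma integrable_PhiBasis_mul_conj :
    Integrable (fun z => PhiBasis κ α z * conj (PhiBasis κ β z)) (gaussian d) := by
  simp_rw [integrable_gaussian_iff, gaussianDensity_smul_PhiBasis_mul_conj]
  refine Integrable.const_mul ?_ _
  exact Integrable.fintype_prod fun q => integrable_HermitePoly_mul_conj (κ q) (α q) (β q)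

lemma integral_PhiBasis_mul_conj :
    ∫ z, PhiBasis κ α z * conj (PhiBasis κ β z) ∂gaussian d = if α = β then 1 else 0 := by
  simp_rw [integral_gaussian, gaussianDensity_smul_PhiBasis_mul_conj, integral_const_mul]
  rw [integral_fintype_prod_volume_eq_prod (f := fun q z =>
    HermitePoly (κ q) (α q) z * conj (HermitePoly (κ q) (β q) z) * gaussianWeight z)]
  simp_rw [integral_HermitePoly_mul_conj]
  split_ifs with h
  · have hπ : (Real.pi : ℂ) ≠ 0 := by exact_mod_cast Real.pi_ne_zero
    simp [h, hπ]
  · obtain ⟨q, hq⟩ := Function.ne_iff.1 h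
    rw [Finset.prod_eq_zero (Finset.mem_univ q) (if_neg hq), mul_zero]

lemma PhiBasis_zero_zero (z : Fin d → ℂ) : PhiBasis 0 0 z = 1 := by
  simp [PhiBasis, HermitePoly]

instance isProbabilityMeasure_gaussian : IsProbabilityMeasure (gaussian d) := by
  have hint := integrable_PhiBasis_mul_conj (d := d) 0 0 0
  have hone := integral_PhiBasis_mul_conj (d := d) 0 0 0
  simp only [PhiBasis_zero_zero, map_one, mul_one, if_true, integral_const, Complex.real_smul]
    at hint hone
  have : IsFiniteMeasure (gaussian d) := by simpa [integrable_const_iff] using hint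
  rw [isProbabilityMeasure_iff_real]
  exact_mod_cast hone

end Orthonormality

section FiniteCombinations

variable {d : ℕ} (κ : Fin d → ℕ) (a b c : (Fin d → ℕ) →₀ ℂ)

/-- The squared `ℓ²`-norm of a finitely supported coefficient family. -/
noncomputable def coeffSq (c : (Fin d → ℕ) →₀ ℂ) : ℝ := ∑ α ∈ c.support, ‖c α‖ ^ 2

lemma coeffSq_nonneg : 0 ≤ coeffSq c := by
  unfold coeffSq
  positivity

lemma sq_norm_apply_le_coeffSq (α : Fin d → ℕ) : ‖c α‖ ^ 2 ≤ coeffSq c := by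
  by_cases h : α ∈ c.support
  · exact Finset.single_le_sum (f := fun α => ‖c α‖ ^ 2) (fun _ _ => by positivity) h
  · simpa [Finsupp.notMem_support_iff.1 h] using coeffSq_nonneg c

lemma coeffSq_smul (t : ℂ) : coeffSq (t • c) = ‖t‖ ^ 2 * coeffSq c := by
  have hsum : (t • c).sum (fun _ z => ‖z‖ ^ 2) = c.sum fun _ z => ‖t * z‖ ^ 2 :=
    Finsupp.sum_smul_index (by simp)
  simpa only [coeffSq, Finsupp.sum, norm_mul, mul_pow, ← Finset.mul_sum] using hsum

lemma coeffSq_pos {c : (Fin d → ℕ) →₀ ℂ} (hc : c ≠ 0) : 0 < coeffSq c := by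
  obtain ⟨α, hα⟩ := Finsupp.ne_iff.1 hc
  exact (pow_pos (norm_pos_iff.2 hα) 2).trans_le (sq_norm_apply_le_coeffSq c α)

lemma trueHermitePoly_eq_sum (z : Fin d → ℂ) :
    trueHermitePoly κ c z = ∑ α ∈ c.support, c α * PhiBasis κ α z := rfl

lemma trueHermitePoly_eq_linearCombination :
    trueHermitePoly κ c = Finsupp.linearCombination ℂ (PhiBasis κ) c := by
  ext z
  simp [trueHermitePoly_eq_sum, Finsupp.linearCombination_apply, Finsupp.sum]

lemma trueHermitePoly_sub (z : Fin d → ℂ) :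
    trueHermitePoly κ (a - b) z = trueHermitePoly κ a z - trueHermitePoly κ b z := by
  simp [trueHermitePoly_eq_linearCombination]

lemma trueHermitePoly_smul (t : ℂ) (z : Fin d → ℂ) :
    trueHermitePoly κ (t • c) z = t * trueHermitePoly κ c z := by
  simp [trueHermitePoly_eq_linearCombination]

@[fun_prop]
lemma continuous_trueHermitePoly : Continuous (trueHermitePoly κ c) := by
  have : trueHermitePoly κ c = fun z => ∑ α ∈ c.support, c α * PhiBasis κ α z := rfl
  rw [this]
  fun_prop

lemma sq_norm_trueHermitePoly (z : Fin d → ℂ) :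
    ((‖trueHermitePoly κ c z‖ ^ 2 : ℝ) : ℂ) = ∑ α ∈ c.support, ∑ β ∈ c.support,
      (c α * conj (c β)) * (PhiBasis κ α z * conj (PhiBasis κ β z)) := by
  rw [← Complex.normSq_eq_norm_sq, ← Complex.mul_conj, trueHermitePoly_eq_sum, map_sum,
    Finset.sum_mul_sum]
  simp only [map_mul, mul_mul_mul_comm]

lemma integrable_sq_norm_trueHermitePoly :
    Integrable (fun z => ‖trueHermitePoly κ c z‖ ^ 2) (gaussian d) := by
  suffices h : Integrable (fun z => ((‖trueHermitePoly κ c z‖ ^ 2 : ℝ) : ℂ)) (gaussian d) from h.re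
  simp_rw [sq_norm_trueHermitePoly]
  exact integrable_finsetSum _ fun α _ => integrable_finsetSum _ fun β _ =>
    (integrable_PhiBasis_mul_conj κ α β).const_mul _

lemma integral_sq_norm_trueHermitePoly :
    ∫ z, ‖trueHermitePoly κ c z‖ ^ 2 ∂gaussian d = coeffSq c := by
  have hint (α β : Fin d → ℕ) := (integrable_PhiBasis_mul_conj κ α β).const_mul (c α * conj (c β))
  rw [← Complex.ofReal_inj, ← integral_complex_ofReal]
  simp_rw [sq_norm_trueHermitePoly]
  rw [integral_finsetSum _ fun α _ => integrable_finsetSum _ fun β _ => hint α β, coeffSq,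
    Complex.ofReal_sum]
  refine Finset.sum_congr rfl fun α hα => ?_
  rw [integral_finsetSum _ fun β _ => hint α β]
  simp_rw [integral_const_mul, integral_PhiBasis_mul_conj, mul_ite, mul_one, mul_zero]
  rw [Finset.sum_ite_eq, if_pos hα, Complex.mul_conj, Complex.normSq_eq_norm_sq]

lemma memLp_trueHermitePoly : MemLp (trueHermitePoly κ c) 2 (gaussian d) :=
  (memLp_two_iff_integrable_sq_norm (continuous_trueHermitePoly κ c).aestronglyMeasurable).2
    (integrable_sq_norm_trueHermitePoly κ c)

end FiniteCombinations

section Rotation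

variable {d : ℕ} (κ α : Fin d → ℕ) (c : (Fin d → ℕ) →₀ ℂ) (z : Fin d → ℂ)

/-- The total degree `|α|` of a multi-index. -/
def degree (α : Fin d → ℕ) : ℕ := ∑ q, α q

lemma pow_degree_mul_PhiBasis_smul {u : ℂ} (hu : ‖u‖ = 1) :
    u ^ degree κ * PhiBasis κ α (u • z) = u ^ degree α * PhiBasis κ α z := by
  have hconj : u * conj u = 1 := by rw [Complex.mul_conj, Complex.normSq_eq_norm_sq, hu]; simp
  simp only [degree, PhiBasis, ← Finset.prod_pow_eq_pow_sum, ← Finset.prod_mul_distrib]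
  refine Finset.prod_congr rfl fun q _ => ?_
  have hhom := polarHermite_homogeneous (κ q) (α q) u (conj u) 1 (z q) (conj (z q))
  rw [hconj, one_mul] at hhom
  have hpow : u ^ κ q * conj u ^ κ q = 1 := by rw [← mul_pow, hconj, one_pow]
  rw [HermitePoly_eq_polarHermite, HermitePoly_eq_polarHermite, Pi.smul_apply, smul_eq_mul,
    map_mul, hhom]
  linear_combination (u ^ α q * hermiteConst (κ q) (α q) *
    polarHermite (κ q) (α q) 1 (z q) (conj (z q))) * hpow

/-- The indices `κ`, `κ + e_q`, `κ - e_q` of the spaces met when `Φ_{κ,α}` is multiplied by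
`|α| - |z|²`. For `κ_q = 0` the index `κ - e_q` is truncated to `κ`; its coefficient in
`ladderCoeff` is then zero. -/
def ladderIndex (κ : Fin d → ℕ) : Option (Fin d ⊕ Fin d) → Fin d → ℕ
  | none => κ
  | some (.inl q) => Function.update κ q (κ q + 1)
  | some (.inr q) => Function.update κ q (κ q - 1)

/-- The coefficient of `Φ_{ladderIndex κ i, α}(z)` in the expansion of `(|α| - |z|²) Φ_{κ,α}(z)`;
it does not depend on `α`. -/
noncomputable def ladderCoeff (κ : Fin d → ℕ) (z : Fin d → ℂ) : Option (Fin d ⊕ Fin d) → ℂ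
  | none => degree κ
  | some (.inl q) => -z q * √(κ q + 1 : ℝ)
  | some (.inr q) => -conj (z q) * √(κ q : ℝ)

lemma PhiBasis_update (q : Fin d) (k : ℕ) :
    PhiBasis (Function.update κ q k) α z =
      HermitePoly k (α q) (z q) * ∏ i ∈ Finset.univ.erase q, HermitePoly (κ i) (α i) (z i) := by
  rw [PhiBasis, ← Finset.mul_prod_erase _ _ (Finset.mem_univ q), Function.update_self]
  congr 1
  exact Finset.prod_congr rfl fun i hi => by rw [Function.update_of_ne (Finset.ne_of_mem_erase hi)]

lemma HermitePoly_three_term (k n : ℕ) (w : ℂ) :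
    ((n : ℂ) - k - w * conj w) * HermitePoly k n w =
      -w * √(k + 1 : ℝ) * HermitePoly (k + 1) n w -
        conj w * √(k : ℝ) * HermitePoly (k - 1) n w := by
  have hup : ((√(k + 1 : ℝ) : ℝ) : ℂ) * hermiteConst (k + 1) n = hermiteConst k n := by
    exact_mod_cast sqrt_succ_mul_hermiteConst_succ k n
  have hdown : ((√(k : ℝ) : ℝ) : ℂ) * hermiteConst (k - 1) n = k * hermiteConst k n := by
    exact_mod_cast sqrt_mul_hermiteConst_pred k n
  simp only [HermitePoly_eq_polarHermite]
  linear_combination (hermiteConst k n : ℂ) * polarHermite_three_term k n w (conj w) +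
    w * polarHermite (k + 1) n 1 w (conj w) * hup +
    conj w * polarHermite (k - 1) n 1 w (conj w) * hdown

lemma degree_sub_euclideanSq_mul_PhiBasis :
    ((degree α : ℂ) - euclideanSq z) * PhiBasis κ α z =
      ∑ i, ladderCoeff κ z i * PhiBasis (ladderIndex κ i) α z := by
  have hsum : (degree α : ℂ) - euclideanSq z =
      degree κ + ∑ q, ((α q : ℂ) - κ q - z q * conj (z q)) := by
    simp only [degree, euclideanSq, Finset.sum_sub_distrib, Complex.mul_conj,
      Complex.normSq_eq_norm_sq]
    push_cast
    ring
  simp only [Fintype.sum_option, Fintype.sum_sum_type, ladderCoeff, ladderIndex]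
  rw [hsum, add_mul, Finset.sum_mul, ← Finset.sum_add_distrib]
  congr 1
  refine Finset.sum_congr rfl fun q _ => ?_
  have hself := PhiBasis_update κ α z q (κ q)
  rw [Function.update_eq_self] at hself
  rw [hself, PhiBasis_update, PhiBasis_update]
  linear_combination (∏ i ∈ Finset.univ.erase q, HermitePoly (κ i) (α i) (z i)) *
    HermitePoly_three_term (κ q) (α q) (z q)

/-- The rotation defect: how far `P = trueHermitePoly κ c` is from being an eigenfunction of
eigenvalue `|z|²` of the generator `Φ_{κ,α} ↦ |α| Φ_{κ,α}` of the rotations `z ↦ e^{iθ} z`. -/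
noncomputable def rotationDefect (κ : Fin d → ℕ) (c : (Fin d → ℕ) →₀ ℂ) (z : Fin d → ℂ) : ℂ :=
  ∑ α ∈ c.support, c α * (((degree α : ℂ) - euclideanSq z) * PhiBasis κ α z)

lemma rotationDefect_eq_sum_ladder :
    rotationDefect κ c z = ∑ i, ladderCoeff κ z i * trueHermitePoly (ladderIndex κ i) c z := by
  simp only [rotationDefect, degree_sub_euclideanSq_mul_PhiBasis, trueHermitePoly_eq_sum,
    Finset.mul_sum]
  rw [Finset.sum_comm]
  simp only [mul_left_comm]

lemma sq_norm_ladderCoeff_le (hz : 1 ≤ euclideanSq z) (i : Option (Fin d ⊕ Fin d)) :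
    ‖ladderCoeff κ z i‖ ^ 2 ≤ (degree κ + 1) ^ 2 * euclideanSq z := by
  have hκ (q : Fin d) : (κ q : ℝ) ≤ degree κ := by
    exact_mod_cast Finset.single_le_sum (fun _ _ => Nat.zero_le _) (Finset.mem_univ q)
  rcases i with _ | q | q
  · rw [ladderCoeff, Complex.norm_natCast]
    nlinarith [(degree κ).cast_nonneg (α := ℝ)]
  · rw [ladderCoeff, norm_mul, norm_neg, mul_pow, Complex.norm_real, Real.norm_eq_abs, sq_abs,
      Real.sq_sqrt (by positivity), mul_comm]
    exact mul_le_mul (by nlinarith [hκ q]) (sq_norm_apply_le_euclideanSq z q) (by positivity)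
      (by positivity)
  · rw [ladderCoeff, norm_mul, norm_neg, mul_pow, Complex.norm_real, Real.norm_eq_abs, sq_abs,
      Real.sq_sqrt (by positivity), mul_comm, RCLike.norm_conj]
    exact mul_le_mul (by nlinarith [hκ q]) (sq_norm_apply_le_euclideanSq z q) (by positivity)
      (by positivity)

/-- A majorant `V` with `‖rotationDefect κ c z‖² ≤ |z|² V(z)` away from the unit ball. -/
noncomputable def defectMajorant (κ : Fin d → ℕ) (c : (Fin d → ℕ) →₀ ℂ) (z : Fin d → ℂ) : ℝ :=
  (2 * d + 1) * (degree κ + 1) ^ 2 * ∑ i, ‖trueHermitePoly (ladderIndex κ i) c z‖ ^ 2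

/-- The constant of proportionality between the mean of `defectMajorant κ c` and `coeffSq c`. -/
noncomputable def defectConst (κ : Fin d → ℕ) : ℝ := (2 * d + 1) ^ 2 * (degree κ + 1) ^ 2

lemma defectMajorant_nonneg : 0 ≤ defectMajorant κ c z := by
  unfold defectMajorant
  positivity

lemma sq_norm_rotationDefect_le (hz : 1 ≤ euclideanSq z) :
    ‖rotationDefect κ c z‖ ^ 2 ≤ euclideanSq z * defectMajorant κ c z := by
  have hterm (i : Option (Fin d ⊕ Fin d)) :
      ‖ladderCoeff κ z i * trueHermitePoly (ladderIndex κ i) c z‖ ^ 2 ≤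
        (degree κ + 1) ^ 2 * euclideanSq z * ‖trueHermitePoly (ladderIndex κ i) c z‖ ^ 2 := by
    rw [norm_mul, mul_pow]
    gcongr
    exact sq_norm_ladderCoeff_le κ z hz i
  have hcard : (Fintype.card (Option (Fin d ⊕ Fin d)) : ℝ) = 2 * d + 1 := by
    simp [two_mul]
  calc ‖rotationDefect κ c z‖ ^ 2
      ≤ (∑ i, ‖ladderCoeff κ z i * trueHermitePoly (ladderIndex κ i) c z‖) ^ 2 := by
        rw [rotationDefect_eq_sum_ladder]
        gcongr
        exact norm_sum_le _ _
    _ ≤ (2 * d + 1) * ∑ i, ‖ladderCoeff κ z i * trueHermitePoly (ladderIndex κ i) c z‖ ^ 2 := by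
        rw [← hcard]
        exact sq_sum_le_card_mul_sum_sq
    _ ≤ (2 * d + 1) * ∑ i, (degree κ + 1) ^ 2 * euclideanSq z *
          ‖trueHermitePoly (ladderIndex κ i) c z‖ ^ 2 := by
        gcongr with i
        exact hterm i
    _ = euclideanSq z * defectMajorant κ c z := by
        rw [defectMajorant, ← Finset.mul_sum]
        ring

lemma integrable_defectMajorant : Integrable (defectMajorant κ c) (gaussian d) :=
  (integrable_finsetSum _ fun _ _ => integrable_sq_norm_trueHermitePoly _ c).const_mul _

lemma integral_defectMajorant :
    ∫ z, defectMajorant κ c z ∂gaussian d = defectConst κ * coeffSq c := by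
  simp only [defectMajorant, defectConst]
  rw [integral_const_mul,
    integral_finsetSum _ fun i _ => integrable_sq_norm_trueHermitePoly (ladderIndex κ i) c]
  simp only [integral_sq_norm_trueHermitePoly, Finset.sum_const, Finset.card_univ,
    Fintype.card_option, Fintype.card_sum, Fintype.card_fin, nsmul_eq_mul]
  push_cast
  ring

end Rotation

/-! ### Phases of complex numbers -/

section Phase

/-- The phase `z / |z|` of a complex number. The phase of `0` is `0`, which keeps `phase`
multiplicative. -/
noncomputable def phase : ℂ →*₀ ℂ where
  toFun z := z / ‖z‖
  map_zero' := zero_div _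
  map_one' := by simp
  map_mul' x y := by rw [norm_mul, Complex.ofReal_mul, mul_div_mul_comm]

lemma phase_apply (z : ℂ) : phase z = z / ‖z‖ := rfl

lemma measurable_phase : Measurable phase := by
  have : (phase : ℂ → ℂ) = fun z : ℂ => z / ‖z‖ := rfl
  rw [this]
  fun_prop

lemma norm_phase {z : ℂ} (hz : z ≠ 0) : ‖phase z‖ = 1 := by
  rw [phase_apply, norm_div, Complex.norm_real, norm_norm, div_self (norm_ne_zero_iff.2 hz)]

lemma norm_phase_le_one (z : ℂ) : ‖phase z‖ ≤ 1 := by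
  rcases eq_or_ne z 0 with rfl | hz
  · simp
  · exact (norm_phase hz).le

lemma norm_mul_phase (z : ℂ) : ‖z‖ * phase z = z :=
  mul_div_cancel_of_imp' fun h => by simpa using h

lemma norm_phase_sub_phase_le_two (x y : ℂ) : ‖phase y - phase x‖ ≤ 2 := by
  linarith [norm_sub_le (phase y) (phase x), norm_phase_le_one x, norm_phase_le_one y]

lemma norm_phase_sub_phase_le {x : ℂ} (hx : x ≠ 0) (y : ℂ) :
    ‖phase y - phase x‖ ≤ 2 * (‖y - x‖ / ‖x‖) := by
  have hsplit : (‖x‖ : ℂ) * (phase y - phase x) = (‖x‖ - ‖y‖ : ℝ) * phase y + (y - x) := by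
    push_cast
    linear_combination norm_mul_phase y - norm_mul_phase x
  have hnorm : ‖x‖ * ‖phase y - phase x‖ ≤ ‖y - x‖ * 1 + ‖y - x‖ := by
    rw [← norm_norm x, ← Complex.norm_real, ← norm_mul, hsplit]
    refine (norm_add_le _ _).trans ?_
    rw [norm_mul, Complex.norm_real, Real.norm_eq_abs, abs_sub_comm]
    gcongr
    · exact abs_norm_sub_norm_le y x
    · exact norm_phase_le_one y
  rw [← mul_div_assoc, le_div_iff₀ (norm_pos_iff.2 hx)]
  linarith

lemma norm_phase_sub_phase_le_rpow {x : ℂ} (hx : x ≠ 0) (y : ℂ) {t : ℝ} (h0 : 0 ≤ t) (h1 : t ≤ 1) :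
    ‖phase y - phase x‖ ≤ 2 * (‖y - x‖ / ‖x‖) ^ t := by
  rcases le_total (‖y - x‖ / ‖x‖) 1 with h | h
  · refine (norm_phase_sub_phase_le hx y).trans ?_
    gcongr
    exact Real.self_le_rpow_of_le_one (by positivity) h h1
  · linarith [norm_phase_sub_phase_le_two x y, Real.one_le_rpow h h0]

lemma re_mul_conj_phase_le (p h : ℂ) : (h * conj (phase p)).re ≤ ‖p + h‖ - ‖p‖ := by
  rcases eq_or_ne p 0 with rfl | hp
  · simp
  have hunit : phase p * conj (phase p) = 1 := by
    rw [Complex.mul_conj, Complex.normSq_eq_norm_sq, norm_phase hp]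
    simp
  have hsum : (p + h) * conj (phase p) = ‖p‖ + h * conj (phase p) := by
    linear_combination (‖p‖ : ℂ) * hunit - conj (phase p) * norm_mul_phase p
  have hre := Complex.re_le_norm ((p + h) * conj (phase p))
  rw [norm_mul, RCLike.norm_conj, norm_phase hp, mul_one, hsum, Complex.add_re,
    Complex.ofReal_re] at hre
  linarith

lemma norm_multiset_prod_sub_prod_le {ι : Type*} (m : Multiset ι) {f g : ι → ℂ}
    (hf : ∀ i, ‖f i‖ ≤ 1) (hg : ∀ i, ‖g i‖ ≤ 1) :
    ‖(m.map f).prod - (m.map g).prod‖ ≤ (m.map fun i => ‖f i - g i‖).sum := by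
  have hprod (m : Multiset ι) : ‖(m.map f).prod‖ ≤ 1 := by
    induction m using Multiset.induction_on with
    | empty => simp
    | cons i m ih =>
      rw [Multiset.map_cons, Multiset.prod_cons, norm_mul]
      exact mul_le_one₀ (hf i) (norm_nonneg _) ih
  induction m using Multiset.induction_on with
  | empty => simp
  | cons i m ih =>
    simp only [Multiset.map_cons, Multiset.prod_cons, Multiset.sum_cons]
    calc ‖f i * (m.map f).prod - g i * (m.map g).prod‖
        = ‖(f i - g i) * (m.map f).prod + g i * ((m.map f).prod - (m.map g).prod)‖ := by ring_nf
      _ ≤ ‖f i - g i‖ * ‖(m.map f).prod‖ + ‖g i‖ * ‖(m.map f).prod - (m.map g).prod‖ := by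
        rw [← norm_mul, ← norm_mul]
        exact norm_add_le _ _
      _ ≤ ‖f i - g i‖ * 1 + 1 * (m.map fun i => ‖f i - g i‖).sum := by
        gcongr
        exacts [hprod m, hg i]
      _ = _ := by ring

lemma sq_norm_eq_sum_range_sq_max_re (w : ℂ) :
    ‖w‖ ^ 2 = ∑ j ∈ Finset.range 4, max (Complex.I ^ j * w).re 0 ^ 2 := by
  have h3 : Complex.I ^ 3 = -Complex.I := by simp [pow_succ]
  rw [← Complex.normSq_eq_norm_sq, Complex.normSq_apply]
  simp only [Finset.sum_range_succ, Finset.sum_range_zero, h3, Complex.I_sq]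
  rcases le_total w.re 0 with h | h <;> rcases le_total w.im 0 with h' | h' <;>
    simp [h, h'] <;> ring

lemma sq_max_zero_le {x y g e f : ℝ} (hxy : |x - y| ≤ e + f) (hy : y ≤ g) :
    max x 0 ^ 2 ≤ 2 * g ^ 2 + 4 * e ^ 2 + 4 * f ^ 2 := by
  have h := abs_le.1 hxy
  rcases le_total x 0 with hx | hx
  · rw [max_eq_right hx]
    nlinarith [sq_nonneg g, sq_nonneg e, sq_nonneg f]
  · rw [max_eq_left hx]
    nlinarith [sq_nonneg (e - f), sq_nonneg (g - (e + f))]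

/-- If `h'` is close to `I ^ j * h` then `Re (I ^ j * h * conj (phase p))` is controlled by a
difference of moduli; letting `j` run over a full period recovers `‖h‖`. -/
lemma sq_norm_le_sum_quarter_turns {p h : ℂ} (hp : p ≠ 0) (p' h' : ℕ → ℂ) :
    ‖h‖ ^ 2 ≤ ∑ j ∈ Finset.range 4, (2 * (‖p' j + h' j‖ - ‖p' j‖) ^ 2 +
      4 * ‖h' j - Complex.I ^ j * h‖ ^ 2 + 4 * (‖h‖ * ‖phase (p' j) - phase p‖) ^ 2) := by
  have hnorm : ‖h‖ ^ 2 = ‖h * conj (phase p)‖ ^ 2 := by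
    rw [norm_mul, RCLike.norm_conj, norm_phase hp, mul_one]
  rw [hnorm, sq_norm_eq_sum_range_sq_max_re]
  refine Finset.sum_le_sum fun j _ => sq_max_zero_le ?_ (re_mul_conj_phase_le (p' j) (h' j))
  have hsplit : Complex.I ^ j * (h * conj (phase p)) - h' j * conj (phase (p' j)) =
      -((h' j - Complex.I ^ j * h) * conj (phase (p' j))) -
        Complex.I ^ j * h * conj (phase (p' j) - phase p) := by
    rw [map_sub]
    ring
  rw [← Complex.sub_re, hsplit]
  refine (Complex.abs_re_le_norm _).trans ((norm_sub_le _ _).trans ?_)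
  simp only [norm_neg, norm_mul, RCLike.norm_conj, norm_pow, Complex.norm_I, one_pow, one_mul]
  gcongr
  exact mul_le_of_le_one_right (norm_nonneg _) (norm_phase_le_one _)

end Phase

/-! ### Modulus of continuity of the phase of a polynomial -/

section SingularWeight

lemma abs_sin_sub_arg_le (θ : ℝ) (a : ℂ) :
    |Real.sin (θ - a.arg)| ≤ ‖Complex.exp (θ * Complex.I) - a‖ := by
  have hrot : (Complex.exp (θ * Complex.I) - a) * Complex.exp ((-a.arg : ℝ) * Complex.I) =
      Complex.exp ((θ - a.arg : ℝ) * Complex.I) - ‖a‖ := by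
    have hunit : Complex.exp ((-a.arg : ℝ) * Complex.I) * Complex.exp (a.arg * Complex.I) = 1 := by
      rw [← Complex.exp_add]
      simp
    have hsplit : Complex.exp ((θ - a.arg : ℝ) * Complex.I) =
        Complex.exp (θ * Complex.I) * Complex.exp ((-a.arg : ℝ) * Complex.I) := by
      rw [← Complex.exp_add]
      push_cast
      ring_nf
    linear_combination Complex.exp ((-a.arg : ℝ) * Complex.I) * Complex.norm_mul_exp_arg_mul_I a -
      ‖a‖ * hunit - hsplit
  have hnorm := congrArg norm hrot
  rw [norm_mul, Complex.norm_exp_ofReal_mul_I, mul_one] at hnorm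
  rw [hnorm]
  refine le_trans (le_of_eq ?_) (Complex.abs_im_le_norm _)
  rw [Complex.sub_im, Complex.exp_ofReal_mul_I_im, Complex.ofReal_im, sub_zero]

/-- The singular weight `|sin θ| ^ (-3/4)`, which measures how fast the phase of `e^{iθ} - a` can
vary when `a` has argument `0`; any exponent in `(-1, -1/2)` would do. -/
noncomputable def sinWeight (θ : ℝ) : ℝ := |Real.sin θ| ^ (-(3 / 4) : ℝ)

lemma sinWeight_nonneg (θ : ℝ) : 0 ≤ sinWeight θ := by
  unfold sinWeight
  positivity

lemma periodic_sinWeight : Function.Periodic sinWeight Real.pi := fun θ => by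
  rw [sinWeight, sinWeight, Real.sin_add_pi, abs_neg]

lemma intervalIntegrable_sinWeight (a b : ℝ) : IntervalIntegrable sinWeight volume a b := by
  have hquarter : IntervalIntegrable sinWeight volume 0 (Real.pi / 2) := by
    have hpow := (intervalIntegral.intervalIntegrable_rpow' (a := 0) (b := Real.pi / 2)
      (r := -(3 / 4)) (by norm_num)).const_mul ((2 / Real.pi) ^ (-(3 / 4) : ℝ))
    refine hpow.mono_fun' (Real.measurable_sin.norm.pow_const _).aestronglyMeasurable ?_
    rw [Set.uIoc_of_le (by positivity)]
    refine ae_restrict_of_forall_mem measurableSet_Ioc fun x hx => ?_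
    have hsin := Real.mul_le_sin hx.1.le hx.2
    have hpos : 0 < 2 / Real.pi * x := mul_pos (by positivity) hx.1
    beta_reduce
    rw [Real.norm_of_nonneg (sinWeight_nonneg x), sinWeight, abs_of_pos (hpos.trans_le hsin),
      ← Real.mul_rpow (by positivity) hx.1.le]
    exact Real.rpow_le_rpow_of_nonpos hpos hsin (by norm_num)
  have hmirror : IntervalIntegrable sinWeight volume (Real.pi / 2) Real.pi := by
    have h := hquarter.comp_sub_left Real.pi
    simp only [sinWeight, Real.sin_pi_sub, sub_zero, sub_half] at h
    exact h.symm
  exact periodic_sinWeight.intervalIntegrable₀ Real.pi_ne_zero (hquarter.trans hmirror) a b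

/-- The total mass of `sinWeight` over a full turn. -/
noncomputable def sinWeightMass : ℝ := ∫ θ in (0 : ℝ)..2 * Real.pi, sinWeight θ

lemma sinWeightMass_nonneg : 0 ≤ sinWeightMass :=
  intervalIntegral.integral_nonneg Real.two_pi_pos.le fun θ _ => sinWeight_nonneg θ

lemma integral_comp_add_right_of_periodic {E : Type*} [NormedAddCommGroup E] [NormedSpace ℝ E]
    {f : ℝ → E} {T : ℝ} (hf : Function.Periodic f T) (t : ℝ) :
    ∫ x in (0 : ℝ)..T, f (x + t) = ∫ x in (0 : ℝ)..T, f x := by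
  simpa [add_comm] using hf.intervalIntegral_add_eq t 0

lemma integral_sinWeight_sub (t : ℝ) :
    ∫ θ in (0 : ℝ)..2 * Real.pi, sinWeight (θ - t) = sinWeightMass := by
  have hper : Function.Periodic sinWeight (2 * Real.pi) := by
    simpa using periodic_sinWeight.nsmul 2
  simp only [sub_eq_add_neg]
  exact integral_comp_add_right_of_periodic hper (-t)

lemma intervalIntegrable_sinWeight_sub (t : ℝ) :
    IntervalIntegrable (fun θ => sinWeight (θ - t)) volume 0 (2 * Real.pi) := by
  simpa using (intervalIntegrable_sinWeight (0 - t) (2 * Real.pi - t)).comp_sub_right t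

end SingularWeight

section PhaseOfPolynomial

lemma intervalIntegrable_multiset_sum_sinWeight (m : Multiset ℂ) :
    IntervalIntegrable (fun θ : ℝ => (m.map fun a => sinWeight (θ - a.arg)).sum)
      volume 0 (2 * Real.pi) := by
  induction m using Multiset.induction_on with
  | empty => simp
  | cons a m ih =>
    simp only [Multiset.map_cons, Multiset.sum_cons]
    exact (intervalIntegrable_sinWeight_sub a.arg).add ih

lemma integral_multiset_sum_sinWeight (m : Multiset ℂ) :
    ∫ θ in (0 : ℝ)..2 * Real.pi, (m.map fun a => sinWeight (θ - a.arg)).sum =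
      m.card * sinWeightMass := by
  induction m using Multiset.induction_on with
  | empty => simp
  | cons a m ih =>
    simp only [Multiset.map_cons, Multiset.sum_cons, Multiset.card_cons]
    rw [intervalIntegral.integral_add (intervalIntegrable_sinWeight_sub a.arg)
      (intervalIntegrable_multiset_sum_sinWeight m), integral_sinWeight_sub, ih]
    push_cast
    ring

/-- The sum of the singular weights attached to the roots of a polynomial. -/
noncomputable def rootWeight (Q : Polynomial ℂ) (θ : ℝ) : ℝ :=
  (Q.roots.map fun a => sinWeight (θ - a.arg)).sum

lemma intervalIntegrable_rootWeight (Q : Polynomial ℂ) :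
    IntervalIntegrable (rootWeight Q) volume 0 (2 * Real.pi) :=
  intervalIntegrable_multiset_sum_sinWeight Q.roots

lemma integral_rootWeight_le {Q : Polynomial ℂ} {N : ℕ} (hQ : Q.natDegree ≤ N) :
    ∫ θ in (0 : ℝ)..2 * Real.pi, rootWeight Q θ ≤ N * sinWeightMass := by
  have hcard : (Q.roots.card : ℝ) ≤ N := by exact_mod_cast Q.card_roots'.trans hQ
  exact (integral_multiset_sum_sinWeight Q.roots).trans_le
    (mul_le_mul_of_nonneg_right hcard sinWeightMass_nonneg)

lemma ae_forall_roots_sin_ne_zero (Q : Polynomial ℂ) :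
    ∀ᵐ θ : ℝ, ∀ a ∈ Q.roots, Real.sin (θ - a.arg) ≠ 0 := by
  have hcount : (⋃ a ∈ Q.roots.toFinset,
      Set.range fun n : ℤ => (n : ℝ) * Real.pi + a.arg).Countable :=
    .biUnion (Finset.countable_toSet _) fun _ _ => Set.countable_range _
  filter_upwards [hcount.ae_notMem volume] with θ hθ a ha hsin
  obtain ⟨n, hn⟩ := Real.sin_eq_zero_iff.1 hsin
  exact hθ (Set.mem_biUnion (Multiset.mem_toFinset.2 ha) ⟨n, by simp only [hn]; ring⟩)

variable {Q : Polynomial ℂ} {θ : ℝ}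

lemma eval_exp_ne_zero (hQ : Q ≠ 0) (hθ : ∀ a ∈ Q.roots, Real.sin (θ - a.arg) ≠ 0) :
    Q.eval (Complex.exp (θ * Complex.I)) ≠ 0 := fun h => by
  refine hθ _ ((Polynomial.mem_roots hQ).2 h) ?_
  simpa using abs_sin_sub_arg_le θ (Complex.exp (θ * Complex.I))

lemma norm_exp_add_sub_exp_le {s : ℝ} (hs : 0 ≤ s) :
    ‖Complex.exp ((θ + s : ℝ) * Complex.I) - Complex.exp (θ * Complex.I)‖ ≤ s := by
  have hfactor : Complex.exp ((θ + s : ℝ) * Complex.I) - Complex.exp (θ * Complex.I) =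
      Complex.exp (θ * Complex.I) * (Complex.exp (Complex.I * s) - 1) := by
    rw [mul_sub_one, ← Complex.exp_add]
    push_cast
    ring_nf
  rw [hfactor, norm_mul, Complex.norm_exp_ofReal_mul_I, one_mul]
  simpa [abs_of_nonneg hs] using Real.norm_exp_I_mul_ofReal_sub_one_le (x := s)

lemma norm_phase_eval_sub_le (hθ : ∀ a ∈ Q.roots, Real.sin (θ - a.arg) ≠ 0) {s : ℝ} (hs : 0 ≤ s) :
    ‖phase (Q.eval (Complex.exp ((θ + s : ℝ) * Complex.I))) -
        phase (Q.eval (Complex.exp (θ * Complex.I)))‖ ≤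
      2 * s ^ (3 / 4 : ℝ) * rootWeight Q θ := by
  have hfactor (u : ℂ) : phase (Q.eval u) =
      phase Q.leadingCoeff * (Q.roots.map fun a => phase (u - a)).prod := by
    rw [(IsAlgClosed.splits Q).eval_eq_prod_roots, map_mul, map_multiset_prod, Multiset.map_map]
    rfl
  rw [hfactor, hfactor, ← mul_sub, norm_mul, rootWeight, ← Multiset.sum_map_mul_left]
  refine (mul_le_of_le_one_left (norm_nonneg _) (norm_phase_le_one _)).trans ?_
  refine (norm_multiset_prod_sub_prod_le _ (fun _ => norm_phase_le_one _)
    fun _ => norm_phase_le_one _).trans (Multiset.sum_map_le_sum_map _ _ fun a ha => ?_)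
  have hsin : 0 < |Real.sin (θ - a.arg)| := abs_pos.2 (hθ a ha)
  have hdist := hsin.trans_le (abs_sin_sub_arg_le θ a)
  calc ‖phase (Complex.exp ((θ + s : ℝ) * Complex.I) - a) -
          phase (Complex.exp (θ * Complex.I) - a)‖
      ≤ 2 * (‖Complex.exp ((θ + s : ℝ) * Complex.I) - Complex.exp (θ * Complex.I)‖ /
          ‖Complex.exp (θ * Complex.I) - a‖) ^ (3 / 4 : ℝ) := by
        simpa using norm_phase_sub_phase_le_rpow (norm_pos_iff.1 hdist)
          (Complex.exp ((θ + s : ℝ) * Complex.I) - a) (t := 3 / 4) (by norm_num) (by norm_num)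
    _ ≤ 2 * (s / |Real.sin (θ - a.arg)|) ^ (3 / 4 : ℝ) := by
        gcongr
        · exact norm_exp_add_sub_exp_le hs
        · exact abs_sin_sub_arg_le θ a
    _ = 2 * s ^ (3 / 4 : ℝ) * sinWeight (θ - a.arg) := by
        rw [Real.div_rpow hs hsin.le, sinWeight, Real.rpow_neg hsin.le]
        ring

lemma intervalIntegrable_sq_norm_phase_eval_sub (s : ℝ) :
    IntervalIntegrable (fun θ : ℝ => ‖phase (Q.eval (Complex.exp ((θ + s : ℝ) * Complex.I))) -
      phase (Q.eval (Complex.exp (θ * Complex.I)))‖ ^ 2) volume 0 (2 * Real.pi) := by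
  refine (intervalIntegrable_const (c := (4 : ℝ))).mono_fun' ?_ (.of_forall fun θ => ?_)
  · have hshift : Measurable fun θ : ℝ => Q.eval (Complex.exp ((θ + s : ℝ) * Complex.I)) :=
      (by fun_prop : Continuous _).measurable
    have hplain : Measurable fun θ : ℝ => Q.eval (Complex.exp (θ * Complex.I)) :=
      (by fun_prop : Continuous _).measurable
    exact (((measurable_phase.comp hshift).sub (measurable_phase.comp hplain)).norm.pow_const
      2).aestronglyMeasurable
  · beta_reduce
    rw [norm_pow, norm_norm]
    exact (pow_le_pow_left₀ (norm_nonneg _) (norm_phase_sub_phase_le_two _ _) 2).trans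
      (by norm_num)

lemma integral_sq_norm_phase_eval_sub_le {N : ℕ} (hQ : Q.natDegree ≤ N) {s : ℝ} (hs : 0 ≤ s) :
    ∫ θ : ℝ in (0 : ℝ)..2 * Real.pi, ‖phase (Q.eval (Complex.exp ((θ + s : ℝ) * Complex.I))) -
      phase (Q.eval (Complex.exp (θ * Complex.I)))‖ ^ 2 ≤
      4 * s ^ (3 / 4 : ℝ) * (N * sinWeightMass) := by
  calc _ ≤ ∫ θ in (0 : ℝ)..2 * Real.pi, 4 * s ^ (3 / 4 : ℝ) * rootWeight Q θ := by
        refine intervalIntegral.integral_mono_ae Real.two_pi_pos.le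
          (intervalIntegrable_sq_norm_phase_eval_sub s)
          ((intervalIntegrable_rootWeight Q).const_mul _) ?_
        filter_upwards [ae_forall_roots_sin_ne_zero Q] with θ hθ
        have hle := norm_phase_eval_sub_le hθ hs
        have htwo := norm_phase_sub_phase_le_two (Q.eval (Complex.exp (θ * Complex.I)))
          (Q.eval (Complex.exp ((θ + s : ℝ) * Complex.I)))
        nlinarith [norm_nonneg (phase (Q.eval (Complex.exp ((θ + s : ℝ) * Complex.I))) -
          phase (Q.eval (Complex.exp (θ * Complex.I))))]
    _ ≤ _ := by
        rw [intervalIntegral.integral_const_mul]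
        gcongr
        exact integral_rootWeight_le hQ

end PhaseOfPolynomial

/-! ### Forced rotations of the circle -/

section IntervalInequalities

lemma sq_intervalIntegral_le {g : ℝ → ℝ} (hg : Continuous g) {s : ℝ} (hs : 0 ≤ s) :
    (∫ t in (0 : ℝ)..s, g t) ^ 2 ≤ s * ∫ t in (0 : ℝ)..s, g t ^ 2 := by
  rcases hs.eq_or_lt with rfl | hs
  · simp
  set I := ∫ t in (0 : ℝ)..s, g t with hI
  have hvariance : ∫ t in (0 : ℝ)..s, (g t - I / s) ^ 2 =
      (∫ t in (0 : ℝ)..s, g t ^ 2) - I ^ 2 / s := by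
    have hexpand (t : ℝ) : (g t - I / s) ^ 2 = g t ^ 2 - 2 * (I / s) * g t + (I / s) ^ 2 := by ring
    simp_rw [hexpand]
    rw [intervalIntegral.integral_add, intervalIntegral.integral_sub,
      intervalIntegral.integral_const_mul, intervalIntegral.integral_const, ← hI, smul_eq_mul]
    · field_simp
      ring
    all_goals exact Continuous.intervalIntegrable (by fun_prop) _ _
  have hnonneg : 0 ≤ ∫ t in (0 : ℝ)..s, (g t - I / s) ^ 2 :=
    intervalIntegral.integral_nonneg hs.le fun t _ => sq_nonneg _
  rw [hvariance, sub_nonneg, div_le_iff₀ hs] at hnonneg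
  linarith

lemma le_average_add_integral_abs_deriv {f f' : ℝ → ℝ} (hf : ∀ t, HasDerivAt f (f' t) t)
    (hf' : Continuous f') {a b t : ℝ} (hab : a < b) (ht : t ∈ Set.Icc a b) :
    f t ≤ (b - a)⁻¹ * (∫ x in a..b, f x) + ∫ x in a..b, |f' x| := by
  have hcont : Continuous f := continuous_iff_continuousAt.2 fun x => (hf x).continuousAt
  obtain ⟨c, hc, hmean⟩ := exists_eq_interval_average hab.ne hcont.continuousOn
  rw [Set.uIoo_of_lt hab] at hc
  rw [interval_average_eq, smul_eq_mul] at hmean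
  have hftc : ∫ x in c..t, f' x = f t - f c :=
    intervalIntegral.integral_eq_sub_of_hasDerivAt (fun x _ => hf x) (hf'.intervalIntegrable _ _)
  have hvariation : f t - f c ≤ ∫ x in a..b, |f' x| := by
    rw [← hftc]
    refine (le_abs_self _).trans ?_
    refine (intervalIntegral.norm_integral_le_abs_integral_norm (f := f')).trans ?_
    refine (intervalIntegral.abs_integral_mono_interval (f := fun x => ‖f' x‖) (c := a) (d := b) ?_
      (.of_forall fun x => norm_nonneg _) (hf'.norm.intervalIntegrable _ _)).trans_eq
      (abs_of_nonneg (intervalIntegral.integral_nonneg hab.le fun x _ => norm_nonneg _))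
    rw [Set.uIoc_of_le hab.le]
    rintro x hx
    rw [Set.uIoc, Set.mem_Ioc] at hx
    exact ⟨(le_min hc.1.le ht.1).trans_lt hx.1, hx.2.trans (max_le hc.2.le ht.2)⟩
  linarith

end IntervalInequalities

/-- `H` rotates with angular velocity `r ^ 2` on the circle, up to the forcing `S`. -/
structure IsForcedRotation (r : ℝ) (H S : ℝ → ℂ) : Prop where
  hasDerivAt (θ : ℝ) : HasDerivAt H (Complex.I * (r ^ 2 * H θ + S θ)) θ
  periodic : Function.Periodic H (2 * Real.pi)
  continuous_forcing : Continuous S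
  periodic_forcing : Function.Periodic S (2 * Real.pi)

/-- The energy of a forced rotation, with the forcing measured relative to `r`. -/
noncomputable def circleEnergy (r : ℝ) (H S : ℝ → ℂ) : ℝ :=
  ∫ θ in (0 : ℝ)..2 * Real.pi, (‖H θ‖ ^ 2 + ‖S θ‖ ^ 2 / r ^ 2)

lemma circleEnergy_nonneg (r : ℝ) (H S : ℝ → ℂ) : 0 ≤ circleEnergy r H S :=
  intervalIntegral.integral_nonneg Real.two_pi_pos.le fun _ _ => by positivity

lemma abs_two_mul_inner_rotation_add_le {r : ℝ} (hr : 0 < r) (x y : ℂ) :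
    |2 * inner ℝ x (Complex.I * (r ^ 2 * x + y))| ≤ r * (‖x‖ ^ 2 + ‖y‖ ^ 2 / r ^ 2) := by
  have hrotation : inner ℝ x (Complex.I * (r ^ 2 * x + y)) = inner ℝ x (Complex.I * y) := by
    simp [Complex.inner, ← Complex.ofReal_pow]
    ring
  have hcauchy := abs_real_inner_le_norm x (Complex.I * y)
  rw [norm_mul, Complex.norm_I, one_mul] at hcauchy
  have hamgm : r * (‖x‖ ^ 2 + ‖y‖ ^ 2 / r ^ 2) - 2 * (‖x‖ * ‖y‖) = r * (‖x‖ - ‖y‖ / r) ^ 2 := by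
    field_simp
    ring
  have hsq : 0 ≤ r * (‖x‖ - ‖y‖ / r) ^ 2 := by positivity
  rw [hrotation, abs_mul, abs_two]
  linarith

namespace IsForcedRotation

variable {r : ℝ} {H S : ℝ → ℂ}

lemma continuous (h : IsForcedRotation r H S) : Continuous H :=
  continuous_iff_continuousAt.2 fun θ => (h.hasDerivAt θ).continuousAt

lemma continuous_energyDensity (h : IsForcedRotation r H S) :
    Continuous fun θ => ‖H θ‖ ^ 2 + ‖S θ‖ ^ 2 / r ^ 2 :=
  (h.continuous.norm.pow 2).add ((h.continuous_forcing.norm.pow 2).div_const _)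

lemma sub_exp_mul_eq_integral (h : IsForcedRotation r H S) (θ s : ℝ) :
    H (θ + s) - Complex.exp ((r ^ 2 * s : ℝ) * Complex.I) * H θ =
      Complex.exp ((r ^ 2 * s : ℝ) * Complex.I) * ∫ t in (0 : ℝ)..s,
        Complex.I * S (θ + t) * Complex.exp ((-(r ^ 2 * t) : ℝ) * Complex.I) := by
  have hderiv (t : ℝ) : HasDerivAt
      (fun t : ℝ => H (θ + t) * Complex.exp ((-(r ^ 2 * t) : ℝ) * Complex.I))
      (Complex.I * S (θ + t) * Complex.exp ((-(r ^ 2 * t) : ℝ) * Complex.I)) t := by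
    have hlinear : HasDerivAt (fun t : ℝ => ((-(r ^ 2 * t) : ℝ) : ℂ) * Complex.I)
        ((-(r ^ 2 * 1) : ℝ) * Complex.I) t :=
      ((hasDerivAt_id t).const_mul _).neg.ofReal_comp.mul_const _
    refine (((h.hasDerivAt (θ + t)).comp_const_add θ t).mul hlinear.cexp).congr_deriv ?_
    push_cast
    ring
  have hS := h.continuous_forcing
  rw [intervalIntegral.integral_eq_sub_of_hasDerivAt (fun t _ => hderiv t)
    (Continuous.intervalIntegrable (by fun_prop) _ _), mul_sub, mul_left_comm, ← Complex.exp_add]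
  simp

lemma sq_norm_sub_exp_mul_le (h : IsForcedRotation r H S) (θ : ℝ) {s : ℝ} (hs : 0 ≤ s) :
    ‖H (θ + s) - Complex.exp ((r ^ 2 * s : ℝ) * Complex.I) * H θ‖ ^ 2 ≤
      s * ∫ t in (0 : ℝ)..s, ‖S (θ + t)‖ ^ 2 := by
  have hS := h.continuous_forcing
  rw [h.sub_exp_mul_eq_integral, norm_mul, Complex.norm_exp_ofReal_mul_I, one_mul]
  refine le_trans ?_ (sq_intervalIntegral_le (g := fun t => ‖S (θ + t)‖) (by fun_prop) hs)
  gcongr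
  refine (intervalIntegral.norm_integral_le_integral_norm hs).trans_eq ?_
  simp only [norm_mul, Complex.norm_I, Complex.norm_exp_ofReal_mul_I, one_mul, mul_one]

lemma integral_sq_norm_sub_exp_mul_le (h : IsForcedRotation r H S) {s : ℝ} (hs : 0 ≤ s) :
    ∫ θ in (0 : ℝ)..2 * Real.pi,
      ‖H (θ + s) - Complex.exp ((r ^ 2 * s : ℝ) * Complex.I) * H θ‖ ^ 2 ≤
      s ^ 2 * ∫ θ in (0 : ℝ)..2 * Real.pi, ‖S θ‖ ^ 2 := by
  have hH := h.continuous
  have hS := h.continuous_forcing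
  have hjoint : Continuous (Function.uncurry fun θ t : ℝ => ‖S (θ + t)‖ ^ 2) := by
    unfold Function.uncurry
    fun_prop
  have hshift (t : ℝ) :
      ∫ θ in (0 : ℝ)..2 * Real.pi, ‖S (θ + t)‖ ^ 2 = ∫ θ in (0 : ℝ)..2 * Real.pi, ‖S θ‖ ^ 2 :=
    integral_comp_add_right_of_periodic (f := fun θ => ‖S θ‖ ^ 2)
      (fun θ => by simp only [h.periodic_forcing θ]) t
  calc _ ≤ ∫ θ in (0 : ℝ)..2 * Real.pi, s * ∫ t in (0 : ℝ)..s, ‖S (θ + t)‖ ^ 2 :=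
        intervalIntegral.integral_mono_on Real.two_pi_pos.le
          (Continuous.intervalIntegrable (by fun_prop) _ _)
          ((intervalIntegral.continuous_parametric_intervalIntegral_of_continuous' hjoint _ _
            ).const_mul s |>.intervalIntegrable _ _)
          fun θ _ => h.sq_norm_sub_exp_mul_le θ hs
    _ = s * ∫ t in (0 : ℝ)..s, ∫ θ in (0 : ℝ)..2 * Real.pi, ‖S (θ + t)‖ ^ 2 := by
        rw [intervalIntegral.integral_const_mul, intervalIntegral_intervalIntegral_swap]
        exact (hjoint.continuousOn.integrableOn_compact (isCompact_uIcc.prod isCompact_uIcc)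
          ).mono_set (Set.prod_mono Set.uIoc_subset_uIcc Set.uIoc_subset_uIcc)
    _ = _ := by
        simp_rw [hshift]
        rw [intervalIntegral.integral_const, smul_eq_mul, sub_zero]
        ring

lemma integral_sq_norm_forcing_le (h : IsForcedRotation r H S) (hr : 0 < r) :
    ∫ θ in (0 : ℝ)..2 * Real.pi, ‖S θ‖ ^ 2 ≤ r ^ 2 * circleEnergy r H S := by
  rw [circleEnergy, ← intervalIntegral.integral_const_mul]
  refine intervalIntegral.integral_mono_on Real.two_pi_pos.le
    ((h.continuous_forcing.norm.pow 2).intervalIntegrable _ _)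
    ((h.continuous_energyDensity.const_mul _).intervalIntegrable _ _) fun θ _ => ?_
  rw [mul_add, mul_div_cancel₀ _ (by positivity)]
  exact le_add_of_nonneg_left (by positivity)

lemma sq_norm_le (h : IsForcedRotation r H S) (hr : 1 ≤ r) {θ : ℝ}
    (hθ : θ ∈ Set.Icc 0 (2 * Real.pi)) : ‖H θ‖ ^ 2 ≤ 2 * r * circleEnergy r H S := by
  have hr0 : 0 < r := by linarith
  have hH := h.continuous
  have hS := h.continuous_forcing
  have hD : Continuous fun t => 2 * inner ℝ (H t) (Complex.I * (r ^ 2 * H t + S t)) := by fun_prop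
  have hsup := le_average_add_integral_abs_deriv (fun t => (h.hasDerivAt t).norm_sq) hD
    Real.two_pi_pos hθ
  have henergy : ∫ t in (0 : ℝ)..2 * Real.pi, ‖H t‖ ^ 2 ≤ circleEnergy r H S :=
    intervalIntegral.integral_mono_on Real.two_pi_pos.le
      ((hH.norm.pow 2).intervalIntegrable _ _) (h.continuous_energyDensity.intervalIntegrable _ _)
      fun t _ => le_add_of_nonneg_right (by positivity)
  have hderiv : ∫ t in (0 : ℝ)..2 * Real.pi,
      |2 * inner ℝ (H t) (Complex.I * (r ^ 2 * H t + S t))| ≤ r * circleEnergy r H S := by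
    rw [circleEnergy, ← intervalIntegral.integral_const_mul]
    exact intervalIntegral.integral_mono_on Real.two_pi_pos.le
      (hD.abs.intervalIntegrable _ _)
      ((h.continuous_energyDensity.const_mul _).intervalIntegrable _ _)
      fun t _ => abs_two_mul_inner_rotation_add_le hr0 _ _
  have hinv : (2 * Real.pi - 0)⁻¹ ≤ 1 := inv_le_one_of_one_le₀ (by linarith [Real.pi_gt_three])
  have hmean : (2 * Real.pi - 0)⁻¹ * ∫ t in (0 : ℝ)..2 * Real.pi, ‖H t‖ ^ 2 ≤
      r * circleEnergy r H S :=
    mul_le_mul (hinv.trans hr) henergy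
      (intervalIntegral.integral_nonneg Real.two_pi_pos.le fun _ _ => by positivity) hr0.le
  linarith

end IsForcedRotation

section QuarterTurns

/-- The time in which a rotation with angular velocity `r ^ 2` performs `j` quarter turns. -/
noncomputable def quarterTime (r : ℝ) (j : ℕ) : ℝ := j * Real.pi / (2 * r ^ 2)

variable {r : ℝ}

lemma quarterTime_nonneg (r : ℝ) (j : ℕ) : 0 ≤ quarterTime r j := by
  unfold quarterTime
  positivity

lemma exp_mul_quarterTime (hr : r ≠ 0) (j : ℕ) :
    Complex.exp ((r ^ 2 * quarterTime r j : ℝ) * Complex.I) = Complex.I ^ j := by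
  have hangle : r ^ 2 * quarterTime r j = j * (Real.pi / 2) := by
    rw [quarterTime]
    field_simp
  rw [hangle]
  push_cast
  rw [mul_assoc, Complex.exp_nat_mul, Complex.exp_pi_div_two_mul_I]

lemma quarterTime_le (hr : 0 < r) {j : ℕ} (hj : j < 4) : quarterTime r j ≤ 5 * (√r)⁻¹ ^ 4 := by
  have hj3 : (j : ℝ) ≤ 3 := by exact_mod_cast Nat.le_of_lt_succ hj
  have hsqrt : (√r)⁻¹ ^ 4 = (r ^ 2)⁻¹ := by
    rw [inv_pow, show 4 = 2 * 2 from rfl, pow_mul, Real.sq_sqrt hr.le]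
  rw [quarterTime, hsqrt, ← div_eq_mul_inv, div_le_div_iff₀ (by positivity) (by positivity)]
  have hpi : (j : ℝ) * Real.pi ≤ 10 := by nlinarith [Real.pi_lt_d2, Real.pi_pos]
  nlinarith [pow_pos hr 2]

lemma quarterTime_rpow_le (hr : 0 < r) {j : ℕ} (hj : j < 4) :
    quarterTime r j ^ (3 / 4 : ℝ) ≤ 5 * (√r)⁻¹ ^ 3 := by
  have hfive : (5 : ℝ) ^ (3 / 4 : ℝ) ≤ 5 := by
    simpa using Real.rpow_le_rpow_of_exponent_le (by norm_num : (1 : ℝ) ≤ 5)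
      (by norm_num : (3 / 4 : ℝ) ≤ 1)
  have hpow : ((√r)⁻¹ ^ 4) ^ (3 / 4 : ℝ) = (√r)⁻¹ ^ 3 := by
    rw [← Real.rpow_natCast, ← Real.rpow_mul (by positivity), ← Real.rpow_natCast]
    norm_num
  calc quarterTime r j ^ (3 / 4 : ℝ) ≤ (5 * (√r)⁻¹ ^ 4) ^ (3 / 4 : ℝ) :=
        Real.rpow_le_rpow (quarterTime_nonneg r j) (quarterTime_le hr hj) (by norm_num)
    _ = (5 : ℝ) ^ (3 / 4 : ℝ) * (√r)⁻¹ ^ 3 := by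
        rw [Real.mul_rpow (by norm_num) (by positivity), hpow]
    _ ≤ 5 * (√r)⁻¹ ^ 3 := by gcongr

lemma integral_sq_norm_phase_eval_sub_quarterTurn_le (hr : 0 < r) {Q : Polynomial ℂ} {N : ℕ}
    (hQ : Q.natDegree ≤ N) {j : ℕ} (hj : j < 4) :
    r * ∫ θ : ℝ in (0 : ℝ)..2 * Real.pi,
      ‖phase (Q.eval (Complex.exp ((θ + quarterTime r j : ℝ) * Complex.I))) -
        phase (Q.eval (Complex.exp (θ * Complex.I)))‖ ^ 2 ≤
      20 * (N * sinWeightMass) * (√r)⁻¹ := by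
  have hmass := sinWeightMass_nonneg
  calc _ ≤ r * (4 * (5 * (√r)⁻¹ ^ 3) * (N * sinWeightMass)) := by
        gcongr
        refine (integral_sq_norm_phase_eval_sub_le hQ (quarterTime_nonneg r j)).trans ?_
        gcongr
        exact quarterTime_rpow_le hr hj
    _ = _ := by
        nth_rw 1 [← Real.sq_sqrt hr.le]
        field_simp
        ring

end QuarterTurns

/-- The constant of the error term in the circle estimate for polynomials of degree at most `N`. -/
noncomputable def circleConst (N : ℕ) : ℝ := 400 + 640 * (N * sinWeightMass)

lemma circleConst_nonneg (N : ℕ) : 0 ≤ circleConst N :=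
  add_nonneg (by norm_num) (mul_nonneg (by norm_num)
    (mul_nonneg N.cast_nonneg sinWeightMass_nonneg))

namespace IsForcedRotation

variable {r : ℝ} {H S : ℝ → ℂ}

lemma integral_sq_norm_sub_quarterTurn_le (h : IsForcedRotation r H S) (hr : 1 ≤ r) {j : ℕ}
    (hj : j < 4) :
    ∫ θ in (0 : ℝ)..2 * Real.pi, ‖H (θ + quarterTime r j) - Complex.I ^ j * H θ‖ ^ 2 ≤
      25 * (√r)⁻¹ * circleEnergy r H S := by
  have hr0 : 0 < r := by linarith
  have hinv : (√r)⁻¹ ≤ 1 := inv_le_one_of_one_le₀ (Real.one_le_sqrt.2 hr)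
  have hsqrt : r ^ 2 = √r ^ 4 := by
    rw [show 4 = 2 * 2 from rfl, pow_mul, Real.sq_sqrt hr0.le]
  rw [← exp_mul_quarterTime hr0.ne' j]
  calc _ ≤ quarterTime r j ^ 2 * ∫ θ in (0 : ℝ)..2 * Real.pi, ‖S θ‖ ^ 2 :=
        h.integral_sq_norm_sub_exp_mul_le (quarterTime_nonneg r j)
    _ ≤ (5 * (√r)⁻¹ ^ 4) ^ 2 * (r ^ 2 * circleEnergy r H S) :=
        mul_le_mul (pow_le_pow_left₀ (quarterTime_nonneg r j) (quarterTime_le hr0 hj) 2)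
          (h.integral_sq_norm_forcing_le hr0) (intervalIntegral.integral_nonneg
          Real.two_pi_pos.le fun _ _ => by positivity) (by positivity)
    _ = 25 * ((√r)⁻¹ * (√r)⁻¹ ^ 3) * circleEnergy r H S := by
        rw [hsqrt]
        field_simp
        ring
    _ ≤ 25 * (√r)⁻¹ * circleEnergy r H S := by
        have := circleEnergy_nonneg r H S
        gcongr
        exact mul_le_of_le_one_right (by positivity) (pow_le_one₀ (by positivity) hinv)

end IsForcedRotation

/-- The contrast between `|Q + H|` and `|Q|` at the point `e^{iθ}` of the unit circle. -/
noncomputable def circleContrast (Q : Polynomial ℂ) (H : ℝ → ℂ) (θ : ℝ) : ℝ :=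
  (‖Q.eval (Complex.exp (θ * Complex.I)) + H θ‖ - ‖Q.eval (Complex.exp (θ * Complex.I))‖) ^ 2

namespace IsForcedRotation

variable {r : ℝ} {H S : ℝ → ℂ}

lemma continuous_circleContrast (h : IsForcedRotation r H S) (Q : Polynomial ℂ) :
    Continuous (circleContrast Q H) := by
  have hH := h.continuous
  unfold circleContrast
  fun_prop

lemma periodic_circleContrast (h : IsForcedRotation r H S) (Q : Polynomial ℂ) :
    Function.Periodic (circleContrast Q H) (2 * Real.pi) := fun θ => by
  have hexp : Complex.exp ((θ + 2 * Real.pi : ℝ) * Complex.I) = Complex.exp (θ * Complex.I) := by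
    push_cast
    rw [add_mul, Complex.exp_periodic]
  simp only [circleContrast, hexp, h.periodic θ]

/-- One quarter-turn term of the bound for `∫ ‖H‖²`: the contrast at the rotated point, the failure
of `H` to rotate exactly, and the variation of the phase of `Q`. -/
noncomputable def quarterTurnBound (r : ℝ) (H S : ℝ → ℂ) (Q : Polynomial ℂ) (j : ℕ) (θ : ℝ) : ℝ :=
  2 * circleContrast Q H (θ + quarterTime r j) +
    4 * ‖H (θ + quarterTime r j) - Complex.I ^ j * H θ‖ ^ 2 +
    4 * (2 * r * circleEnergy r H S *
      ‖phase (Q.eval (Complex.exp ((θ + quarterTime r j : ℝ) * Complex.I))) -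
        phase (Q.eval (Complex.exp (θ * Complex.I)))‖ ^ 2)

lemma sq_norm_le_sum_quarterTurnBound (h : IsForcedRotation r H S) (hr : 1 ≤ r)
    {Q : Polynomial ℂ} {θ : ℝ} (hθ : θ ∈ Set.Icc 0 (2 * Real.pi))
    (hQ : Q.eval (Complex.exp (θ * Complex.I)) ≠ 0) :
    ‖H θ‖ ^ 2 ≤ ∑ j ∈ Finset.range 4, quarterTurnBound r H S Q j θ := by
  refine (sq_norm_le_sum_quarter_turns hQ
    (fun j => Q.eval (Complex.exp ((θ + quarterTime r j : ℝ) * Complex.I)))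
    fun j => H (θ + quarterTime r j)).trans (Finset.sum_le_sum fun j _ => ?_)
  rw [mul_pow]
  unfold quarterTurnBound circleContrast
  gcongr
  exact h.sq_norm_le hr hθ

lemma intervalIntegrable_quarterTurnBound (h : IsForcedRotation r H S) (Q : Polynomial ℂ) (j : ℕ) :
    IntervalIntegrable (quarterTurnBound r H S Q j) volume 0 (2 * Real.pi) := by
  have hH := h.continuous
  have hcontrast := h.continuous_circleContrast Q
  exact (Continuous.intervalIntegrable (by fun_prop) _ _).add
    (((intervalIntegrable_sq_norm_phase_eval_sub _).const_mul _).const_mul _)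

lemma integral_quarterTurnBound_le (h : IsForcedRotation r H S) (hr : 1 ≤ r) {Q : Polynomial ℂ}
    {N : ℕ} (hQ : Q.natDegree ≤ N) {j : ℕ} (hj : j < 4) :
    ∫ θ in (0 : ℝ)..2 * Real.pi, quarterTurnBound r H S Q j θ ≤
      2 * (∫ θ in (0 : ℝ)..2 * Real.pi, circleContrast Q H θ) +
        (100 + 160 * (N * sinWeightMass)) * (√r)⁻¹ * circleEnergy r H S := by
  have hH := h.continuous
  have hcontrast := h.continuous_circleContrast Q
  unfold quarterTurnBound
  rw [intervalIntegral.integral_add (Continuous.intervalIntegrable (by fun_prop) _ _)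
      (((intervalIntegrable_sq_norm_phase_eval_sub _).const_mul _).const_mul _),
    intervalIntegral.integral_add (Continuous.intervalIntegrable (by fun_prop) _ _)
      (Continuous.intervalIntegrable (by fun_prop) _ _),
    intervalIntegral.integral_const_mul, intervalIntegral.integral_const_mul,
    intervalIntegral.integral_const_mul 4, intervalIntegral.integral_const_mul,
    integral_comp_add_right_of_periodic (h.periodic_circleContrast Q)]
  have hrotation := h.integral_sq_norm_sub_quarterTurn_le hr hj
  have hphase := mul_le_mul_of_nonneg_left
    (integral_sq_norm_phase_eval_sub_quarterTurn_le (by linarith : 0 < r) hQ hj)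
    (circleEnergy_nonneg r H S)
  linarith

theorem integral_sq_norm_le (h : IsForcedRotation r H S) (hr : 1 ≤ r) {Q : Polynomial ℂ} {N : ℕ}
    (hQ : Q.natDegree ≤ N) :
    ∫ θ in (0 : ℝ)..2 * Real.pi, ‖H θ‖ ^ 2 ≤
      8 * (∫ θ in (0 : ℝ)..2 * Real.pi, circleContrast Q H θ) +
        circleConst N * (√r)⁻¹ * circleEnergy r H S := by
  have herror : 0 ≤ circleConst N * (√r)⁻¹ * circleEnergy r H S :=
    mul_nonneg (mul_nonneg (circleConst_nonneg N) (by positivity)) (circleEnergy_nonneg r H S)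
  rcases eq_or_ne Q 0 with rfl | hQ0
  · have hnonneg : 0 ≤ ∫ θ in (0 : ℝ)..2 * Real.pi, ‖H θ‖ ^ 2 :=
      intervalIntegral.integral_nonneg Real.two_pi_pos.le fun _ _ => by positivity
    simp only [circleContrast, Polynomial.eval_zero, zero_add, norm_zero, sub_zero]
    linarith
  have hint (j : ℕ) := h.intervalIntegrable_quarterTurnBound Q j
  calc _ ≤ ∫ θ in (0 : ℝ)..2 * Real.pi, ∑ j ∈ Finset.range 4, quarterTurnBound r H S Q j θ := by
        refine intervalIntegral.integral_mono_ae_restrict Real.two_pi_pos.le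
          ((h.continuous.norm.pow 2).intervalIntegrable _ _)
          (by simpa only [Finset.sum_fn] using IntervalIntegrable.sum _ fun j _ => hint j) ?_
        filter_upwards [ae_restrict_of_ae (ae_forall_roots_sin_ne_zero Q),
          ae_restrict_mem measurableSet_Icc] with θ hroots hθ
        exact h.sq_norm_le_sum_quarterTurnBound hr hθ (eval_exp_ne_zero hQ0 hroots)
    _ = ∑ j ∈ Finset.range 4, ∫ θ in (0 : ℝ)..2 * Real.pi, quarterTurnBound r H S Q j θ :=
        intervalIntegral.integral_finsetSum fun j _ => hint j
    _ ≤ ∑ j ∈ Finset.range 4, _ := Finset.sum_le_sum fun j hj =>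
        h.integral_quarterTurnBound_le hr hQ (Finset.mem_range.1 hj)
    _ = _ := by
        simp only [Finset.sum_const, Finset.card_range, nsmul_eq_mul, circleConst]
        push_cast
        ring

end IsForcedRotation

/-! ### The far region -/

section Rotation

variable {d : ℕ}

/-- The rotated point `e^{iθ} z`. -/
noncomputable def rotate (θ : ℝ) (z : Fin d → ℂ) : Fin d → ℂ := Complex.exp (θ * Complex.I) • z

lemma euclideanSq_rotate (θ : ℝ) (z : Fin d → ℂ) : euclideanSq (rotate θ z) = euclideanSq z := by
  simp [euclideanSq, rotate, Complex.norm_exp_ofReal_mul_I]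

lemma continuous_uncurry_rotate : Continuous (Function.uncurry (rotate (d := d))) := by
  unfold rotate Function.uncurry
  fun_prop

lemma measurePreserving_rotate (θ : ℝ) : MeasurePreserving (rotate (d := d) θ) volume volume :=
  volume_preserving_pi fun _ : Fin d => (rotation (Circle.exp θ)).measurePreserving

lemma measurableEmbedding_rotate (θ : ℝ) : MeasurableEmbedding (rotate (d := d) θ) :=
  (Homeomorph.smulOfNeZero _ (Complex.exp_ne_zero (θ * Complex.I))).measurableEmbedding

lemma gaussianDensity_rotate (θ : ℝ) (z : Fin d → ℂ) :
    gaussianDensity d (rotate θ z) = gaussianDensity d z := by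
  rw [gaussianDensity, euclideanSq_rotate, gaussianDensity]

variable {f g : (Fin d → ℂ) → ℝ}

lemma integral_comp_rotate (f : (Fin d → ℂ) → ℝ) (θ : ℝ) :
    ∫ z, f (rotate θ z) ∂gaussian d = ∫ z, f z ∂gaussian d := by
  rw [integral_gaussian, integral_gaussian, ← (measurePreserving_rotate θ).integral_comp
    (measurableEmbedding_rotate θ) fun z => gaussianDensity d z • f z]
  simp only [gaussianDensity_rotate]

lemma integrable_comp_rotate (hf : Integrable f (gaussian d)) (θ : ℝ) :
    Integrable (fun z => f (rotate θ z)) (gaussian d) := by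
  rw [integrable_gaussian_iff] at hf ⊢
  refine (((measurePreserving_rotate θ).integrable_comp_emb
    (measurableEmbedding_rotate θ)).2 hf).congr (.of_forall fun z => ?_)
  simp only [Function.comp_apply, gaussianDensity_rotate]

lemma integral_intervalIntegral_rotate (hf : Integrable f (gaussian d)) (hmeas : Measurable f) :
    ∫ z, (∫ θ in (0 : ℝ)..2 * Real.pi, f (rotate θ z)) ∂gaussian d =
      2 * Real.pi * ∫ z, f z ∂gaussian d := by
  rw [← intervalIntegral_integral_swap]
  · simp_rw [integral_comp_rotate]
    rw [intervalIntegral.integral_const, smul_eq_mul, sub_zero]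
  · have hjoint : Measurable (Function.uncurry fun (θ : ℝ) (z : Fin d → ℂ) => f (rotate θ z)) :=
      hmeas.comp continuous_uncurry_rotate.measurable
    rw [integrable_prod_iff hjoint.aestronglyMeasurable]
    refine ⟨.of_forall fun θ => integrable_comp_rotate hf θ, ?_⟩
    simp only [Function.uncurry]
    simp_rw [integral_comp_rotate fun z => ‖f z‖]
    rw [Set.uIoc_of_le Real.two_pi_pos.le]
    exact integrable_const _

lemma integral_nonneg_of_rotate (hf : Integrable f (gaussian d)) (hmeas : Measurable f)
    (hmean : ∀ z, 0 ≤ ∫ θ in (0 : ℝ)..2 * Real.pi, f (rotate θ z)) :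
    0 ≤ ∫ z, f z ∂gaussian d := by
  refine nonneg_of_mul_nonneg_right (a := 2 * Real.pi) ?_ Real.two_pi_pos
  exact (integral_nonneg hmean).trans_eq (integral_intervalIntegral_rotate hf hmeas)

/-- The complement of the open ball of radius `R ≥ 0` in `ℂ^d`. -/
def farRegion (d : ℕ) (R : ℝ) : Set (Fin d → ℂ) := {z | R ^ 2 ≤ euclideanSq z}

lemma measurableSet_farRegion (d : ℕ) (R : ℝ) : MeasurableSet (farRegion d R) :=
  (isClosed_le continuous_const continuous_euclideanSq).measurableSet

lemma rotate_mem_farRegion {R θ : ℝ} {z : Fin d → ℂ} :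
    rotate θ z ∈ farRegion d R ↔ z ∈ farRegion d R := by
  rw [farRegion, Set.mem_ofPred_eq, Set.mem_ofPred_eq, euclideanSq_rotate]

lemma continuous_comp_rotate (hf : Continuous f) (z : Fin d → ℂ) :
    Continuous fun θ => f (rotate θ z) :=
  hf.comp (continuous_uncurry_rotate.comp (by fun_prop : Continuous fun θ : ℝ => (θ, z)))

lemma setIntegral_farRegion_le_of_rotate (hf : Integrable f (gaussian d)) (hfc : Continuous f)
    (hg : Integrable g (gaussian d)) (hgc : Continuous g) {R : ℝ}
    (hle : ∀ z ∈ farRegion d R, ∫ θ in (0 : ℝ)..2 * Real.pi, f (rotate θ z) ≤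
      ∫ θ in (0 : ℝ)..2 * Real.pi, g (rotate θ z)) :
    ∫ z in farRegion d R, f z ∂gaussian d ≤ ∫ z in farRegion d R, g z ∂gaussian d := by
  have hR := measurableSet_farRegion d R
  rw [← sub_nonneg, ← integral_sub hg.integrableOn hf.integrableOn, ← integral_indicator hR]
  refine integral_nonneg_of_rotate ((hg.sub hf).indicator hR)
    ((hgc.sub hfc).measurable.indicator hR) fun z => ?_
  by_cases hz : z ∈ farRegion d R
  · simp only [Set.indicator_of_mem (rotate_mem_farRegion.2 hz)]
    rw [intervalIntegral.integral_sub ((continuous_comp_rotate hgc z).intervalIntegrable _ _)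
      ((continuous_comp_rotate hfc z).intervalIntegrable _ _)]
    exact sub_nonneg.2 (hle z hz)
  · simp only [Set.indicator_of_notMem (mt rotate_mem_farRegion.1 hz)]
    simp

end Rotation

section CircleOrbit

variable {d : ℕ} (κ : Fin d → ℕ) (p h : (Fin d → ℕ) →₀ ℂ) (z : Fin d → ℂ)

/-- `z ↦ ∑ c α Φ_{κ,α}` restricted to the circle through `z`, up to a unimodular factor: it is the
trigonometric polynomial `∑ c α Φ_{κ,α}(z) e^{i|α|θ}`. -/
noncomputable def orbitValue (c : (Fin d → ℕ) →₀ ℂ) (θ : ℝ) : ℂ :=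
  Complex.exp (θ * Complex.I) ^ degree κ * trueHermitePoly κ c (rotate θ z)

/-- The rotation defect along the circle through `z`, up to the same unimodular factor. -/
noncomputable def orbitDefect (c : (Fin d → ℕ) →₀ ℂ) (θ : ℝ) : ℂ :=
  Complex.exp (θ * Complex.I) ^ degree κ * rotationDefect κ c (rotate θ z)

lemma norm_orbitValue (θ : ℝ) : ‖orbitValue κ z h θ‖ = ‖trueHermitePoly κ h (rotate θ z)‖ := by
  simp [orbitValue, Complex.norm_exp_ofReal_mul_I]

lemma norm_orbitDefect (θ : ℝ) : ‖orbitDefect κ z h θ‖ = ‖rotationDefect κ h (rotate θ z)‖ := by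
  simp [orbitDefect, Complex.norm_exp_ofReal_mul_I]

lemma orbitValue_eq_sum (θ : ℝ) : orbitValue κ z h θ =
    ∑ α ∈ h.support, h α * (Complex.exp (θ * Complex.I) ^ degree α * PhiBasis κ α z) := by
  rw [orbitValue, trueHermitePoly_eq_sum, Finset.mul_sum]
  refine Finset.sum_congr rfl fun α _ => ?_
  rw [← pow_degree_mul_PhiBasis_smul κ α z (Complex.norm_exp_ofReal_mul_I θ), rotate]
  ring

lemma orbitDefect_eq_sum (θ : ℝ) : orbitDefect κ z h θ =
    ∑ α ∈ h.support, h α * (((degree α : ℂ) - euclideanSq z) *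
      (Complex.exp (θ * Complex.I) ^ degree α * PhiBasis κ α z)) := by
  rw [orbitDefect, rotationDefect, euclideanSq_rotate, Finset.mul_sum]
  refine Finset.sum_congr rfl fun α _ => ?_
  rw [← pow_degree_mul_PhiBasis_smul κ α z (Complex.norm_exp_ofReal_mul_I θ), rotate]
  ring

lemma periodic_exp_mul_I : Function.Periodic (fun θ : ℝ => Complex.exp (θ * Complex.I))
    (2 * Real.pi) := fun θ => by
  push_cast
  rw [add_mul, Complex.exp_periodic]

lemma hasDerivAt_exp_mul_I_pow (n : ℕ) (θ : ℝ) :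
    HasDerivAt (fun θ : ℝ => Complex.exp (θ * Complex.I) ^ n)
      (Complex.I * n * Complex.exp (θ * Complex.I) ^ n) θ := by
  have hlinear : HasDerivAt (fun θ : ℝ => (θ : ℂ) * Complex.I) (1 * Complex.I) θ :=
    (hasDerivAt_id θ).ofReal_comp.mul_const _
  refine (hlinear.cexp.pow n).congr_deriv ?_
  rcases n with _ | n
  · simp
  · rw [Nat.add_sub_cancel]
    ring

lemma isForcedRotation_orbitValue :
    IsForcedRotation √(euclideanSq z) (orbitValue κ z h) (orbitDefect κ z h) where
  hasDerivAt θ := by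
    have hsq : ((√(euclideanSq z) : ℝ) : ℂ) ^ 2 = euclideanSq z := by
      exact_mod_cast Real.sq_sqrt (euclideanSq_nonneg z)
    rw [hsq, orbitValue_eq_sum, orbitDefect_eq_sum, funext (orbitValue_eq_sum κ h z)]
    refine (HasDerivAt.fun_sum fun α _ => ((hasDerivAt_exp_mul_I_pow (degree α) θ).mul_const
      (PhiBasis κ α z)).const_mul (h α)).congr_deriv ?_
    rw [Finset.mul_sum, ← Finset.sum_add_distrib, Finset.mul_sum]
    exact Finset.sum_congr rfl fun α _ => by ring
  periodic θ := by simp only [orbitValue_eq_sum, periodic_exp_mul_I θ]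
  continuous_forcing := by
    rw [funext (orbitDefect_eq_sum κ h z)]
    fun_prop
  periodic_forcing θ := by simp only [orbitDefect_eq_sum, periodic_exp_mul_I θ]

/-- The polynomial whose value at `e^{iθ}` is `orbitValue κ z p θ`. -/
noncomputable def orbitPolynomial : Polynomial ℂ :=
  ∑ α ∈ p.support, Polynomial.C (p α * PhiBasis κ α z) * Polynomial.X ^ degree α

lemma natDegree_orbitPolynomial_le : (orbitPolynomial κ p z).natDegree ≤ p.support.sup degree :=
  Polynomial.natDegree_sum_le_of_forall_le _ _ fun _ hα =>
    (Polynomial.natDegree_C_mul_X_pow_le _ _).trans (Finset.le_sup (f := degree) hα)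

lemma eval_orbitPolynomial (θ : ℝ) :
    (orbitPolynomial κ p z).eval (Complex.exp (θ * Complex.I)) = orbitValue κ z p θ := by
  rw [orbitValue_eq_sum, orbitPolynomial, Polynomial.eval_finsetSum]
  refine Finset.sum_congr rfl fun α _ => ?_
  simp only [Polynomial.eval_mul, Polynomial.eval_C, Polynomial.eval_pow, Polynomial.eval_X]
  ring

/-- The squared difference of the moduli of the polynomials with coefficients `p + h` and `p`. -/
noncomputable def modulusGap : ℝ :=
  (‖trueHermitePoly κ p z + trueHermitePoly κ h z‖ - ‖trueHermitePoly κ p z‖) ^ 2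

lemma modulusGap_nonneg : 0 ≤ modulusGap κ p h z := sq_nonneg _

lemma continuous_modulusGap : Continuous (modulusGap κ p h) := by
  unfold modulusGap
  fun_prop

lemma integrable_modulusGap : Integrable (modulusGap κ p h) (gaussian d) := by
  refine (integrable_sq_norm_trueHermitePoly κ h).mono'
    (continuous_modulusGap κ p h).aestronglyMeasurable (.of_forall fun z => ?_)
  rw [Real.norm_of_nonneg (modulusGap_nonneg κ p h z), modulusGap, ← sq_abs]
  gcongr
  simpa using abs_norm_sub_norm_le (trueHermitePoly κ p z + trueHermitePoly κ h z)
    (trueHermitePoly κ p z)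

lemma circleContrast_orbitPolynomial (θ : ℝ) :
    circleContrast (orbitPolynomial κ p z) (orbitValue κ z h) θ =
      modulusGap κ p h (rotate θ z) := by
  rw [circleContrast, eval_orbitPolynomial, norm_orbitValue, orbitValue, orbitValue, ← mul_add,
    norm_mul, norm_pow, Complex.norm_exp_ofReal_mul_I, one_pow, one_mul, modulusGap]

lemma continuous_defectMajorant : Continuous (defectMajorant κ h) := by
  unfold defectMajorant
  fun_prop

lemma circleEnergy_orbit_le (hz : 1 ≤ euclideanSq z) :
    circleEnergy √(euclideanSq z) (orbitValue κ z h) (orbitDefect κ z h) ≤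
      ∫ θ in (0 : ℝ)..2 * Real.pi,
        (‖trueHermitePoly κ h (rotate θ z)‖ ^ 2 + defectMajorant κ h (rotate θ z)) := by
  refine intervalIntegral.integral_mono_on Real.two_pi_pos.le
    ((isForcedRotation_orbitValue κ h z).continuous_energyDensity.intervalIntegrable _ _)
    ((continuous_comp_rotate (((continuous_trueHermitePoly κ h).norm.pow 2).add
      (continuous_defectMajorant κ h)) z).intervalIntegrable _ _) fun θ _ => ?_
  rw [norm_orbitValue, norm_orbitDefect, Real.sq_sqrt (euclideanSq_nonneg z)]
  gcongr
  rw [div_le_iff₀' (by linarith)]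
  simpa only [euclideanSq_rotate] using
    sq_norm_rotationDefect_le κ h (rotate θ z) (by rwa [euclideanSq_rotate])

lemma integral_rotate_sq_norm_le {R : ℝ} (hR : 1 ≤ R) (hz : z ∈ farRegion d R) :
    ∫ θ in (0 : ℝ)..2 * Real.pi, ‖trueHermitePoly κ h (rotate θ z)‖ ^ 2 ≤
      8 * (∫ θ in (0 : ℝ)..2 * Real.pi, modulusGap κ p h (rotate θ z)) +
        circleConst (p.support.sup degree) * (√R)⁻¹ * ∫ θ in (0 : ℝ)..2 * Real.pi,
          (‖trueHermitePoly κ h (rotate θ z)‖ ^ 2 + defectMajorant κ h (rotate θ z)) := by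
  have hradius : R ≤ √(euclideanSq z) := Real.le_sqrt_of_sq_le hz
  have hcircle := (isForcedRotation_orbitValue κ h z).integral_sq_norm_le (hR.trans hradius)
    (natDegree_orbitPolynomial_le κ p z)
  simp only [norm_orbitValue, circleContrast_orbitPolynomial] at hcircle
  refine hcircle.trans ?_
  have hconst := circleConst_nonneg (p.support.sup degree)
  gcongr
  · exact circleEnergy_nonneg _ _ _
  · exact circleEnergy_orbit_le κ h z (by nlinarith [show R ^ 2 ≤ euclideanSq z from hz])

theorem setIntegral_farRegion_sq_norm_le {R : ℝ} (hR : 1 ≤ R) :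
    ∫ z in farRegion d R, ‖trueHermitePoly κ h z‖ ^ 2 ∂gaussian d ≤
      8 * (∫ z, modulusGap κ p h z ∂gaussian d) +
        circleConst (p.support.sup degree) * (1 + defectConst κ) * (√R)⁻¹ * coeffSq h := by
  set C := circleConst (p.support.sup degree) * (√R)⁻¹
  have hC : 0 ≤ C := mul_nonneg (circleConst_nonneg _) (by positivity)
  have hV := continuous_defectMajorant κ h
  have hG := continuous_modulusGap κ p h
  have henergy : Integrable (fun z => ‖trueHermitePoly κ h z‖ ^ 2 + defectMajorant κ h z)
      (gaussian d) := (integrable_sq_norm_trueHermitePoly κ h).add (integrable_defectMajorant κ h)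
  have hbound : Integrable (fun z => 8 * modulusGap κ p h z +
      C * (‖trueHermitePoly κ h z‖ ^ 2 + defectMajorant κ h z)) (gaussian d) :=
    ((integrable_modulusGap κ p h).const_mul 8).add (henergy.const_mul C)
  calc _ ≤ ∫ z in farRegion d R, (8 * modulusGap κ p h z +
          C * (‖trueHermitePoly κ h z‖ ^ 2 + defectMajorant κ h z)) ∂gaussian d := by
        refine setIntegral_farRegion_le_of_rotate (integrable_sq_norm_trueHermitePoly κ h)
          (by fun_prop) hbound (by fun_prop) fun z hz => ?_
        refine (integral_rotate_sq_norm_le κ p h z hR hz).trans_eq ?_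
        rw [← intervalIntegral.integral_const_mul, ← intervalIntegral.integral_const_mul,
          ← intervalIntegral.integral_add]
        · exact (continuous_comp_rotate (f := fun z => 8 * modulusGap κ p h z) (by fun_prop)
            z).intervalIntegrable _ _
        · exact (continuous_comp_rotate (f := fun z => C * (‖trueHermitePoly κ h z‖ ^ 2 +
            defectMajorant κ h z)) (by fun_prop) z).intervalIntegrable _ _
    _ ≤ ∫ z, (8 * modulusGap κ p h z +
          C * (‖trueHermitePoly κ h z‖ ^ 2 + defectMajorant κ h z)) ∂gaussian d := by
        refine setIntegral_le_integral hbound (.of_forall fun z => ?_)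
        have := modulusGap_nonneg κ p h z
        have := defectMajorant_nonneg κ h z
        simp only [Pi.zero_apply]
        positivity
    _ = _ := by
        rw [integral_add ((integrable_modulusGap κ p h).const_mul 8) (henergy.const_mul C),
          integral_const_mul, integral_const_mul, integral_add
          (integrable_sq_norm_trueHermitePoly κ h) (integrable_defectMajorant κ h),
          integral_sq_norm_trueHermitePoly, integral_defectMajorant]
        ring

end CircleOrbit

/-! ### The near region -/

lemma summable_prod_apply {ι : Type*} [Fintype ι] {b : ι → ℕ → ℝ}
    (hnonneg : ∀ q n, 0 ≤ b q n) (hsum : ∀ q, Summable (b q)) :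
    Summable fun α : ι → ℕ => ∏ q, b q (α q) := by
  classical
  refine summable_of_sum_le (c := ∏ q, ∑' n, b q n)
    (fun α => Finset.prod_nonneg fun q _ => hnonneg q _) fun s => ?_
  calc ∑ α ∈ s, ∏ q, b q (α q)
      ≤ ∑ α ∈ Fintype.piFinset fun q => s.image fun α => α q, ∏ q, b q (α q) :=
        Finset.sum_le_sum_of_subset_of_nonneg
          (fun α hα => Fintype.mem_piFinset.2 fun q => Finset.mem_image_of_mem _ hα)
          fun α _ _ => Finset.prod_nonneg fun q _ => hnonneg q _
    _ = ∏ q, ∑ n ∈ s.image fun α => α q, b q n := (Finset.prod_univ_sum _ _).symm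
    _ ≤ ∏ q, ∑' n, b q n := Finset.prod_le_prod
        (fun q _ => Finset.sum_nonneg fun n _ => hnonneg q n)
        fun q _ => (hsum q).sum_le_tsum _ fun n _ => hnonneg q n

lemma summable_pow_mul_inv_sqrt_factorial {x : ℝ} (hx : 0 ≤ x) :
    Summable fun n : ℕ => x ^ n * (√(n.factorial : ℝ))⁻¹ := by
  have hgeom : Summable fun n : ℕ => √(Real.exp ((2 * x) ^ 2)) * (1 / 2 : ℝ) ^ n :=
    (summable_geometric_of_lt_one (by norm_num) (by norm_num)).mul_left _
  refine hgeom.of_nonneg_of_le (fun n => by positivity) fun n => ?_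
  calc x ^ n * (√(n.factorial : ℝ))⁻¹
      = (2 * x) ^ n * (√(n.factorial : ℝ))⁻¹ * (1 / 2) ^ n := by
        rw [mul_right_comm, ← mul_pow]
        ring_nf
    _ ≤ √(Real.exp ((2 * x) ^ 2)) * (1 / 2) ^ n := by
        gcongr
        refine Real.le_sqrt_of_sq_le ?_
        rw [mul_pow, inv_pow, Real.sq_sqrt (by positivity), ← pow_mul, mul_comm n, pow_mul,
          ← div_eq_mul_inv]
        exact Real.pow_div_factorial_le_exp _ (by positivity) n

section PolarBasis

variable {d : ℕ} (κ : Fin d → ℕ)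

/-- The basis function `Φ_{κ,α}` polarised (`w` in place of `conj z`) and homogenised by `s`;
at `s = 0` it is a constant times the leading monomial `z^α w^κ`. -/
noncomputable def polarPhi (κ α : Fin d → ℕ) (s : ℂ) (z w : Fin d → ℂ) : ℂ :=
  ∏ q, hermiteConst (κ q) (α q) * polarHermite (κ q) (α q) s (z q) (w q)

lemma PhiBasis_eq_polarPhi (α : Fin d → ℕ) (z : Fin d → ℂ) :
    PhiBasis κ α z = polarPhi κ α 1 z (conj z) := by
  simp only [PhiBasis, polarPhi, HermitePoly_eq_polarHermite, Pi.conj_apply]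

/-- A bound for `Φ_{κ,α}` on the polydisc of radius `ρ ≥ 1`. -/
noncomputable def phiBound (κ : Fin d → ℕ) (ρ : ℝ) (α : Fin d → ℕ) : ℝ :=
  ∏ q, ρ ^ κ q * ((ρ * 2 ^ κ q) ^ α q * (√((α q).factorial : ℝ))⁻¹)

variable {ρ : ℝ} {z w : Fin d → ℂ}

lemma phiBound_nonneg (hρ : 1 ≤ ρ) (α : Fin d → ℕ) : 0 ≤ phiBound κ ρ α := by
  unfold phiBound
  positivity

lemma norm_polarPhi_le (hρ : 1 ≤ ρ) (hz : ∀ q, ‖z q‖ ≤ ρ) (hw : ∀ q, ‖w q‖ ≤ ρ)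
    (α : Fin d → ℕ) : ‖polarPhi κ α 1 z w‖ ≤ phiBound κ ρ α := by
  rw [polarPhi, norm_prod]
  refine Finset.prod_le_prod (fun _ _ => norm_nonneg _) fun q _ => ?_
  rw [norm_mul, Complex.norm_of_nonneg (hermiteConst_pos _ _).le]
  calc _ ≤ (√((α q).factorial : ℝ))⁻¹ * (ρ ^ κ q * (ρ * 2 ^ κ q) ^ α q) :=
        mul_le_mul (hermiteConst_le _ _) (norm_polarHermite_le _ _ hρ (hz q) (hw q))
          (norm_nonneg _) (by positivity)
    _ = _ := by ring

lemma norm_PhiBasis_le (hρ : 1 ≤ ρ) (hz : ∀ q, ‖z q‖ ≤ ρ) (α : Fin d → ℕ) :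
    ‖PhiBasis κ α z‖ ≤ phiBound κ ρ α := by
  rw [PhiBasis_eq_polarPhi]
  exact norm_polarPhi_le κ hρ hz (fun q => by simpa using hz q) α

lemma summable_phiBound_mul_pow_degree (hρ : 1 ≤ ρ) {t : ℝ} (ht : 0 ≤ t) :
    Summable fun α => phiBound κ ρ α * t ^ degree α := by
  refine (summable_prod_apply
    (b := fun q n => ρ ^ κ q * ((ρ * 2 ^ κ q * t) ^ n * (√(n.factorial : ℝ))⁻¹))
    (fun q n => by positivity)
    fun q => (summable_pow_mul_inv_sqrt_factorial (by positivity)).mul_left _).congr fun α => ?_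
  rw [phiBound, degree, ← Finset.prod_pow_eq_pow_sum, ← Finset.prod_mul_distrib]
  exact Finset.prod_congr rfl fun q _ => by ring

lemma summable_phiBound (hρ : 1 ≤ ρ) : Summable (phiBound κ ρ) := by
  simpa using summable_phiBound_mul_pow_degree κ hρ zero_le_one

end PolarBasis

section NearRegion

variable {d : ℕ} (κ : Fin d → ℕ) {R : ℝ} {z : Fin d → ℂ} (h : (Fin d → ℕ) →₀ ℂ)
  (A : Finset (Fin d → ℕ))

lemma trueHermitePoly_eq_sum_of_subset {c : (Fin d → ℕ) →₀ ℂ} {s : Finset (Fin d → ℕ)}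
    (hs : c.support ⊆ s) (z : Fin d → ℂ) :
    trueHermitePoly κ c z = ∑ α ∈ s, c α * PhiBasis κ α z :=
  Finsupp.sum_of_support_subset c hs _ fun _ _ => zero_mul _

lemma norm_trueHermitePoly_le (hR : 1 ≤ R) (hz : ∀ q, ‖z q‖ ≤ R) :
    ‖trueHermitePoly κ h z‖ ≤ ∑ α ∈ A, ‖h α‖ * phiBound κ R α +
      √(coeffSq h) * ∑' α : {α // α ∉ A}, phiBound κ R α := by
  have hterm (α : Fin d → ℕ) : ‖h α * PhiBasis κ α z‖ ≤ ‖h α‖ * phiBound κ R α := by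
    rw [norm_mul]
    gcongr
    exact norm_PhiBasis_le κ hR hz α
  calc ‖trueHermitePoly κ h z‖ ≤ ∑ α ∈ A ∪ h.support \ A, ‖h α‖ * phiBound κ R α := by
        rw [trueHermitePoly_eq_sum_of_subset κ (by grind : h.support ⊆ A ∪ h.support \ A)]
        exact norm_sum_le_of_le _ fun α _ => hterm α
    _ = ∑ α ∈ A, ‖h α‖ * phiBound κ R α + ∑ α ∈ h.support \ A, ‖h α‖ * phiBound κ R α :=
        Finset.sum_union Finset.disjoint_sdiff
    _ ≤ ∑ α ∈ A, ‖h α‖ * phiBound κ R α +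
          ∑ α ∈ h.support \ A, √(coeffSq h) * phiBound κ R α := by
        gcongr with α
        · exact phiBound_nonneg κ hR α
        · exact Real.le_sqrt_of_sq_le (sq_norm_apply_le_coeffSq h α)
    _ ≤ _ := by
        rw [← Finset.mul_sum, ← Finset.sum_subtype_of_mem (p := (· ∉ A)) _
          fun α hα => (Finset.mem_sdiff.1 hα).2]
        gcongr
        exact ((summable_phiBound κ hR).subtype _).sum_le_tsum _
          fun α _ => phiBound_nonneg κ hR _

lemma sq_norm_trueHermitePoly_le (hR : 1 ≤ R) (hz : ∀ q, ‖z q‖ ≤ R) :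
    ‖trueHermitePoly κ h z‖ ^ 2 ≤ 2 * (∑ α ∈ A, phiBound κ R α ^ 2) * ∑ α ∈ A, ‖h α‖ ^ 2 +
      2 * (∑' α : {α // α ∉ A}, phiBound κ R α) ^ 2 * coeffSq h := by
  have hhead : (∑ α ∈ A, ‖h α‖ * phiBound κ R α) ^ 2 ≤
      (∑ α ∈ A, ‖h α‖ ^ 2) * ∑ α ∈ A, phiBound κ R α ^ 2 :=
    Finset.sum_mul_sq_le_sq_mul_sq _ _ _
  have hsqrt := Real.sq_sqrt (coeffSq_nonneg h)
  calc _ ≤ _ := pow_le_pow_left₀ (norm_nonneg _) (norm_trueHermitePoly_le κ h A hR hz) 2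
    _ ≤ _ := add_sq_le
    _ = 2 * (∑ α ∈ A, ‖h α‖ * phiBound κ R α) ^ 2 +
          2 * (∑' α : {α // α ∉ A}, phiBound κ R α) ^ 2 * coeffSq h := by
        rw [mul_pow, hsqrt]
        ring
    _ ≤ _ := by linarith

lemma norm_apply_le_of_notMem_farRegion (hR : 0 ≤ R) (hz : z ∉ farRegion d R) (q : Fin d) :
    ‖z q‖ ≤ R := by
  have hlt : euclideanSq z < R ^ 2 := not_le.1 hz
  exact le_of_sq_le_sq ((sq_norm_apply_le_euclideanSq z q).trans hlt.le) hR

theorem exists_setIntegral_compl_farRegion_sq_norm_le (hR : 1 ≤ R) :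
    ∃ (C : ℝ) (A : Finset (Fin d → ℕ)), 0 ≤ C ∧ ∀ h : (Fin d → ℕ) →₀ ℂ,
      ∫ z in (farRegion d R)ᶜ, ‖trueHermitePoly κ h z‖ ^ 2 ∂gaussian d ≤
        C * ∑ α ∈ A, ‖h α‖ ^ 2 + 1 / 4 * coeffSq h := by
  obtain ⟨A, hA⟩ := ((tendsto_tsum_compl_atTop_zero (phiBound κ R)).eventually_lt_const
    (by norm_num : (0 : ℝ) < 1 / 4)).exists
  refine ⟨2 * ∑ α ∈ A, phiBound κ R α ^ 2, A, by positivity, fun h => ?_⟩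
  set M := 2 * (∑ α ∈ A, phiBound κ R α ^ 2) * ∑ α ∈ A, ‖h α‖ ^ 2 + 1 / 4 * coeffSq h
  have hM : 0 ≤ M := by
    have := coeffSq_nonneg h
    positivity
  have htail : 0 ≤ ∑' α : {α // α ∉ A}, phiBound κ R α :=
    tsum_nonneg fun α => phiBound_nonneg κ hR _
  have hpoint : ∀ z ∈ (farRegion d R)ᶜ, ‖trueHermitePoly κ h z‖ ^ 2 ≤ M := fun z hz => by
    refine (sq_norm_trueHermitePoly_le κ h A hR
      (norm_apply_le_of_notMem_farRegion (by linarith) hz)).trans ?_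
    exact add_le_add_right
      (mul_le_mul_of_nonneg_right (by nlinarith) (coeffSq_nonneg h)) _
  calc _ ≤ ∫ _ in (farRegion d R)ᶜ, M ∂gaussian d :=
        setIntegral_mono_on (integrable_sq_norm_trueHermitePoly κ h).integrableOn
          (integrable_const M).integrableOn (measurableSet_farRegion d R).compl hpoint
    _ ≤ M := by
        rw [setIntegral_const, smul_eq_mul]
        exact mul_le_of_le_one_left hM measureReal_le_one

theorem exists_coeffSq_le (p : (Fin d → ℕ) →₀ ℂ) :
    ∃ (C : ℝ) (A : Finset (Fin d → ℕ)), 0 ≤ C ∧ ∀ h : (Fin d → ℕ) →₀ ℂ,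
      coeffSq h ≤ C * (∫ z, modulusGap κ p h z ∂gaussian d) + C * ∑ α ∈ A, ‖h α‖ ^ 2 := by
  set C := circleConst (p.support.sup degree) * (1 + defectConst κ)
  have hC : 0 ≤ C := mul_nonneg (circleConst_nonneg _) (by unfold defectConst; positivity)
  have hR : 1 ≤ (4 * C + 1) ^ 2 := one_le_pow₀ (by linarith)
  obtain ⟨C', A, hC', hnear⟩ := exists_setIntegral_compl_farRegion_sq_norm_le κ hR
  refine ⟨16 + 2 * C', A, by positivity, fun h => ?_⟩
  have hfar := setIntegral_farRegion_sq_norm_le κ p h hR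
  have hsplit := integral_add_compl (measurableSet_farRegion d ((4 * C + 1) ^ 2))
    (integrable_sq_norm_trueHermitePoly κ h)
  rw [integral_sq_norm_trueHermitePoly] at hsplit
  have hquarter : C * (√((4 * C + 1) ^ 2))⁻¹ * coeffSq h ≤ 1 / 4 * coeffSq h := by
    have := coeffSq_nonneg h
    gcongr
    rw [Real.sqrt_sq (by positivity), ← div_eq_mul_inv, div_le_iff₀ (by positivity)]
    linarith
  have hgap : 0 ≤ ∫ z, modulusGap κ p h z ∂gaussian d := integral_nonneg (modulusGap_nonneg κ p h)
  have hhead : 0 ≤ ∑ α ∈ A, ‖h α‖ ^ 2 := by positivity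
  nlinarith [hnear h, mul_nonneg hC' hgap]

end NearRegion

section AlmostEverywhere

lemma ae_ne_zero_of_analyticOnNhd {E : Type*} [NormedAddCommGroup E] [NormedSpace ℝ E]
    [FiniteDimensional ℝ E] [MeasurableSpace E] [BorelSpace E] (μ : Measure E)
    [μ.IsAddHaarMeasure] {f : E → ℂ} (hf : AnalyticOnNhd ℝ f Set.univ) {v : E} (hv : f v ≠ 0) :
    ∀ᵐ z ∂μ, f z ≠ 0 := by
  have hcont : Continuous f := continuousOn_univ.1 hf.continuousOn
  have hline (z : E) : ∀ᵐ s : ℝ, f (v + s • (z - v)) ≠ 0 := by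
    have hanalytic : AnalyticOnNhd ℝ (fun s : ℝ => f (v + s • (z - v))) Set.univ :=
      hf.comp (fun s _ => by fun_prop) fun _ _ => Set.mem_univ _
    have hzeros := ae_restrict_le_codiscreteWithin (μ := volume) MeasurableSet.univ
      (hanalytic.preimage_zero_mem_codiscrete (x := 0) (by simpa using hv))
    rwa [Measure.restrict_univ] at hzeros
  have hswap : ∀ᵐ s : ℝ, ∀ᵐ z ∂μ, f (v + s • (z - v)) ≠ 0 := by
    rw [Measure.ae_ae_comm ((isOpen_ne_fun (by fun_prop) continuous_const).measurableSet)]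
    exact .of_forall hline
  obtain ⟨s, hs, hs0⟩ := (hswap.and (Measure.ae_ne volume (0 : ℝ))).exists
  have hpreimage : {z | ¬f (v + s • (z - v)) ≠ 0} =
      (s • ·) ⁻¹' ((· + (v - s • v)) ⁻¹' {z | ¬f z ≠ 0}) := by
    ext z
    rw [Set.mem_preimage, Set.mem_preimage, Set.mem_ofPred_eq, Set.mem_ofPred_eq,
      show v + s • (z - v) = s • z + (v - s • v) by rw [smul_sub]; abel]
  rw [ae_iff] at hs ⊢
  rw [hpreimage, Measure.addHaar_preimage_smul _ hs0, measure_preimage_add_right] at hs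
  simpa [hs0] using hs

variable {d : ℕ} (κ : Fin d → ℕ) (c : (Fin d → ℕ) →₀ ℂ)

lemma analyticOnNhd_trueHermitePoly : AnalyticOnNhd ℝ (trueHermitePoly κ c) Set.univ := by
  intro z _
  have hcoord (q : Fin d) : AnalyticAt ℝ (fun z : Fin d → ℂ => z q) z :=
    (ContinuousLinearMap.proj (R := ℝ) (φ := fun _ : Fin d => ℂ) q).analyticAt z
  have hconj (q : Fin d) : AnalyticAt ℝ (fun z : Fin d → ℂ => conj (z q)) z :=
    (Complex.conjCLE.toContinuousLinearMap.comp
      (ContinuousLinearMap.proj (R := ℝ) (φ := fun _ : Fin d => ℂ) q)).analyticAt z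
  refine Finset.analyticAt_fun_sum _ fun α _ => analyticAt_const.mul <|
    Finset.analyticAt_fun_prod _ fun q _ => ?_
  unfold HermitePoly
  refine analyticAt_const.mul <| Finset.analyticAt_fun_sum _ fun j _ => ?_
  exact (analyticAt_const.mul ((hcoord q).pow _)).mul ((hconj q).pow _)

variable {c}

lemma eq_zero_of_ae_trueHermitePoly_eq_zero (hc : ∀ᵐ z, trueHermitePoly κ c z = 0) : c = 0 := by
  have hnorm : coeffSq c = 0 := by
    rw [← integral_sq_norm_trueHermitePoly κ c]
    refine integral_eq_zero_of_ae ?_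
    filter_upwards [gaussian_absolutelyContinuous.ae_le hc] with z hz
    simp [hz]
  by_contra h
  exact (coeffSq_pos h).ne' hnorm

lemma ae_trueHermitePoly_ne_zero (hc : c ≠ 0) : ∀ᵐ z, trueHermitePoly κ c z ≠ 0 := by
  obtain ⟨v, hv⟩ : ∃ v, trueHermitePoly κ c v ≠ 0 := by
    by_contra! hzero
    exact hc (eq_zero_of_ae_trueHermitePoly_eq_zero κ (.of_forall hzero))
  exact ae_ne_zero_of_analyticOnNhd volume (analyticOnNhd_trueHermitePoly κ c) hv

end AlmostEverywhere

/-! ### Entire functions with a circle identity -/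

section EntireFunctions

open Filter Asymptotics Bornology
open scoped Topology

variable {f g w : ℂ → ℂ} {l n N m : ℕ}

lemma iteratedDeriv_eq_zero_of_isBigO_cobounded (hf : Differentiable ℂ f)
    (hgrowth : f =O[cobounded ℂ] fun t => t ^ N) (hm : N < m) : iteratedDeriv m f 0 = 0 := by
  obtain ⟨C, hC⟩ := hgrowth.bound
  obtain ⟨R₀, -, hR₀⟩ := (hasBasis_cobounded_norm (E := ℂ)).eventually_iff.1 hC
  have hbound : ∀ᶠ R : ℝ in atTop, ‖iteratedDeriv m f 0‖ ≤ (m.factorial * C) * R⁻¹ ^ (m - N) := by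
    filter_upwards [eventually_ge_atTop R₀, eventually_gt_atTop 0] with R hR hpos
    refine (Complex.norm_iteratedDeriv_le_of_forall_mem_sphere_norm_le (C := C * R ^ N) m hpos
      hf.diffContOnCl fun t ht => ?_).trans_eq ?_
    · have hnorm : ‖t‖ = R := by simpa using ht
      simpa [hnorm] using hR₀ (show R₀ ≤ ‖t‖ by rwa [hnorm])
    · rw [inv_pow, ← div_eq_mul_inv, div_eq_div_iff (by positivity) (by positivity)]
      calc m.factorial * (C * R ^ N) * R ^ (m - N)
          = m.factorial * C * (R ^ N * R ^ (m - N)) := by ring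
        _ = m.factorial * C * R ^ m := by rw [← pow_add, Nat.add_sub_cancel' hm.le]
  have hlim : Tendsto (fun R : ℝ => (m.factorial * C) * R⁻¹ ^ (m - N)) atTop (𝓝 0) := by
    simpa [zero_pow (Nat.sub_ne_zero_of_lt hm)] using
      (tendsto_inv_atTop_zero.pow (m - N)).const_mul (m.factorial * C)
  exact norm_le_zero_iff.1 (ge_of_tendsto hlim hbound)

lemma pow_isBigO_of_iteratedDeriv_ne_zero (hw : AnalyticAt ℂ w 0)
    (hl : iteratedDeriv l w 0 ≠ 0) : (fun u => u ^ l) =O[𝓝 0] w := by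
  have hlt : analyticOrderAt w 0 < (l + 1 : ℕ) := by
    refine not_le.1 fun hle => hl ?_
    exact (natCast_le_analyticOrderAt_iff_iteratedDeriv_eq_zero hw).1 hle l l.lt_succ_self
  obtain ⟨k, hk⟩ := ENat.ne_top_iff_exists.1 hlt.ne_top
  have hkl : k ≤ l := by rw [← hk] at hlt; exact Nat.lt_succ_iff.1 (by exact_mod_cast hlt)
  obtain ⟨v, hv, hv0, heq⟩ := hw.analyticOrderAt_eq_natCast.1 hk.symm
  have hone : (fun _ => (1 : ℂ)) =O[𝓝 0] v :=
    (isBigO_const_left_iff_pos_le_norm one_ne_zero).2 ⟨‖v 0‖ / 2, by positivity,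
      (hv.continuousAt.norm.eventually (lt_mem_nhds (half_lt_self (norm_pos_iff.2 hv0)))).mono
        fun _ => le_of_lt⟩
  have hpow : (fun u : ℂ => u ^ l) =O[𝓝 0] fun u => u ^ k := by
    simpa [← pow_add, Nat.sub_add_cancel hkl] using
      (((continuous_pow (l - k)).tendsto (0 : ℂ)).isBigO_one ℂ).mul
        (isBigO_refl (fun u : ℂ => u ^ k) _)
  refine ((hpow.mul hone).congr_left fun u => mul_one _).trans ?_
  exact EventuallyEq.isBigO (heq.mono fun u hu => by simp [hu])

/-- The reflection `t ↦ conj (h (1 / conj t))` of a function in the unit circle; it agrees with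
`conj ∘ h` on that circle and is holomorphic off the origin when `h` is entire. -/
noncomputable def circleReflection (h : ℂ → ℂ) (t : ℂ) : ℂ :=
  conj (h (conj t)⁻¹)

lemma circleReflection_of_norm_eq_one (h : ℂ → ℂ) {u : ℂ} (hu : ‖u‖ = 1) :
    circleReflection h u = conj (h u) := by
  rw [circleReflection, ← map_inv₀, Complex.inv_eq_conj hu, Complex.conj_conj]

lemma differentiableOn_circleReflection (hf : Differentiable ℂ f) :
    DifferentiableOn ℂ (circleReflection f) {0}ᶜ := by
  have hreflect : Differentiable ℂ (conj ∘ f ∘ conj) := fun t => by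
    simpa using (hf (conj t)).conj_conj
  have heq : circleReflection f = (conj ∘ f ∘ conj) ∘ fun t => t⁻¹ := by
    ext t; simp [circleReflection]
  rw [heq]
  exact hreflect.comp_differentiableOn (differentiableOn_inv.mono fun t ht => ht)

lemma tendsto_inv_conj_cobounded : Tendsto (fun t : ℂ => (conj t)⁻¹) (cobounded ℂ) (𝓝 0) := by
  simpa only [map_inv₀, map_zero, Function.comp_def] using
    (Complex.continuous_conj.tendsto 0).comp (tendsto_inv₀_cobounded (α := ℂ))

lemma eqOn_zero_of_eq_zero_on_circle (hf : DifferentiableOn ℂ f {0}ᶜ)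
    (hzero : ∀ u, ‖u‖ = 1 → f u = 0) : Set.EqOn f 0 {0}ᶜ := by
  have hrank : 1 < Module.rank ℝ ℂ := Complex.rank_real_complex.symm ▸ Nat.one_lt_ofNat
  have hacc : AccPt (1 : ℂ) (𝓟 (Metric.sphere 0 1)) :=
    (isPreconnected_sphere hrank 0 1).preperfect_of_nontrivial
      ⟨1, by simp, -1, by simp, by norm_num⟩ 1 (by simp)
  refine (hf.analyticOnNhd isOpen_compl_singleton).eqOn_zero_of_preconnected_of_frequently_eq_zero
    ((isConnected_compl_singleton_of_one_lt_rank hrank 0).isPreconnected) (z₀ := 1) (by simp) ?_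
  exact (accPt_iff_frequently_nhdsNE.1 hacc).mono fun u hu => hzero u (by simpa using hu)

/- By the identity theorem the circle identity persists off the origin after replacing `conj ∘ h` by
`circleReflection h`; there `f = - f^♯ g / w^♯`, with `f^♯` bounded and `w^♯` at least of order
`t⁻ˡ` as `t → ∞`. -/
theorem iteratedDeriv_eq_zero_of_circle_identity (hf : Differentiable ℂ f)
    (hg : Differentiable ℂ g) (hw : Differentiable ℂ w)
    (hgrowth : g =O[cobounded ℂ] fun t => t ^ n) (hl : iteratedDeriv l w 0 ≠ 0)
    (hcircle : ∀ u, ‖u‖ = 1 → f u * conj (g u) + conj (f u) * w u = 0) (hm : n + l < m) :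
    iteratedDeriv m f 0 = 0 := by
  have hoff : Set.EqOn (fun t => circleReflection f t * g t + f t * circleReflection w t) 0
      {0}ᶜ := by
    refine eqOn_zero_of_eq_zero_on_circle
      (((differentiableOn_circleReflection hf).mul hg.differentiableOn).add
        (hf.differentiableOn.mul (differentiableOn_circleReflection hw))) fun u hu => ?_
    have hconj := congrArg conj (hcircle u hu)
    simpa [circleReflection_of_norm_eq_one _ hu] using hconj
  have hbounded : circleReflection f =O[cobounded ℂ] fun _ => (1 : ℂ) := by
    have hlim := (hf.continuous.tendsto 0).comp tendsto_inv_conj_cobounded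
    exact ((Complex.continuous_conj.tendsto _).comp hlim).isBigO_one ℂ
  have hlower : (fun t : ℂ => t⁻¹ ^ l) =O[cobounded ℂ] circleReflection w := by
    refine IsBigO.of_norm_norm ?_
    simpa [Function.comp_def, circleReflection] using
      ((pow_isBigO_of_iteratedDeriv_ne_zero (hw.analyticAt 0) hl).comp_tendsto
        tendsto_inv_conj_cobounded).norm_norm
  have hne : ∀ᶠ t : ℂ in cobounded ℂ, t ≠ 0 := eventually_ne_cobounded 0
  have hproduct : (fun t => f t * t⁻¹ ^ l) =O[cobounded ℂ] fun t => t ^ n := by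
    refine ((isBigO_refl f _).mul hlower).trans ?_
    refine ((hbounded.mul hgrowth).congr' ?_ (.of_forall fun t => one_mul _)).neg_left.congr_left
      fun t => neg_neg (f t * circleReflection w t)
    filter_upwards [hne] with t ht
    exact eq_neg_of_add_eq_zero_left (hoff ht)
  refine iteratedDeriv_eq_zero_of_isBigO_cobounded hf ?_ hm
  refine (hproduct.mul (isBigO_refl (fun t : ℂ => t ^ l) _)).congr' ?_
    (.of_forall fun t => (pow_add t n l).symm)
  filter_upwards [hne] with t ht
  rw [mul_assoc, ← mul_pow, inv_mul_cancel₀ ht, one_pow, mul_one]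

end EntireFunctions

/-! ### Finite support of the limit -/

section WeightedPowerSeries

variable {ι : Type*} {δ : ι → ℕ} {x : ι → ℂ}

lemma differentiable_tsum_mul_pow (hx : ∀ t : ℝ, 0 ≤ t → Summable fun i => ‖x i‖ * t ^ δ i) :
    Differentiable ℂ fun u => ∑' i, x i * u ^ δ i := by
  intro u
  have hball : DifferentiableOn ℂ (fun u => ∑' i, x i * u ^ δ i) (Metric.ball 0 (‖u‖ + 1)) := by
    refine Complex.differentiableOn_tsum_of_summable_norm (hx (‖u‖ + 1) (by positivity))
      (fun i => by fun_prop) Metric.isOpen_ball fun i v hv => ?_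
    rw [norm_mul, norm_pow]
    gcongr
    exact (mem_ball_zero_iff.1 hv).le
  exact hball.differentiableAt (Metric.isOpen_ball.mem_nhds (by simp))

lemma iteratedDeriv_tsum_mul_pow (hx : ∀ t : ℝ, 0 ≤ t → Summable fun i => ‖x i‖ * t ^ δ i)
    (m : ℕ) {s : Finset ι} (hs : ∀ i, i ∈ s ↔ δ i = m) :
    iteratedDeriv m (fun u => ∑' i, x i * u ^ δ i) 0 = m.factorial * ∑ i ∈ s, x i := by
  set a : ℕ → ℂ := fun n => ∑' i : δ ⁻¹' {n}, x i
  have hsum (u : ℂ) : HasSum (fun n => u ^ n • a n) (∑' i, x i * u ^ δ i) := by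
    have htotal : Summable fun i => x i * u ^ δ i :=
      .of_norm (by simpa using hx ‖u‖ (norm_nonneg u))
    refine (htotal.hasSum.tsum_fiberwise δ).congr_fun fun n => ?_
    rw [smul_eq_mul, ← tsum_mul_left]
    exact tsum_congr fun i => by rw [show δ i = n from i.2, mul_comm]
  have hseries : HasFPowerSeriesAt (fun u => ∑' i, x i * u ^ δ i)
      (FormalMultilinearSeries.ofScalars ℂ a) 0 :=
    hasFPowerSeriesAt_iff.2 (.of_forall fun u => by simpa using hsum u)
  have hcoeff := congrArg (FormalMultilinearSeries.coeff · m)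
    (hseries.eq_formalMultilinearSeries hseries.analyticAt.hasFPowerSeriesAt)
  have hset : δ ⁻¹' {m} = (s : Set ι) := by ext i; simp [hs]
  have ham : a m = ∑ i ∈ s, x i := by
    simp only [a]
    rw [hset]
    exact s.tsum_subtype x
  simp only [FormalMultilinearSeries.coeff_ofScalars] at hcoeff
  rw [← ham, hcoeff, mul_div_cancel₀ _ (Nat.cast_ne_zero.2 m.factorial_ne_zero)]

end WeightedPowerSeries

section HermiteSeries

variable {d : ℕ} (κ : Fin d → ℕ) {b c : (Fin d → ℕ) → ℂ} {B C : ℝ} (z : Fin d → ℂ)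

/-- The Hermite series `∑ α, c α Φ_{κ,α}`, used for bounded coefficient families. -/
noncomputable def hermiteSeries (c : (Fin d → ℕ) → ℂ) (z : Fin d → ℂ) : ℂ :=
  ∑' α, c α * PhiBasis κ α z

/-- The power series in `u` which represents `u ^ |κ| * hermiteSeries κ c (u • z)` on the unit
circle. -/
noncomputable def orbitSeries (c : (Fin d → ℕ) → ℂ) (z : Fin d → ℂ) (u : ℂ) : ℂ :=
  ∑' α, c α * PhiBasis κ α z * u ^ degree α

/-- The part of degree `m` of a coefficient family. -/
noncomputable def homogeneousPart (c : (Fin d → ℕ) → ℂ) (m : ℕ) : (Fin d → ℕ) →₀ ℂ :=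
  Finsupp.indicator (Finset.univ.piAntidiag m) fun α _ => c α

lemma mem_piAntidiag_univ_iff {m : ℕ} {α : Fin d → ℕ} :
    α ∈ Finset.univ.piAntidiag m ↔ degree α = m := by
  simp [degree]

lemma homogeneousPart_apply_of_degree_eq {m : ℕ} {α : Fin d → ℕ} (hα : degree α = m) :
    homogeneousPart c m α = c α :=
  Finsupp.indicator_of_mem (mem_piAntidiag_univ_iff.2 hα) _

lemma homogeneousPart_apply_of_degree_ne {m : ℕ} {α : Fin d → ℕ} (hα : degree α ≠ m) :
    homogeneousPart c m α = 0 :=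
  Finsupp.indicator_of_notMem (mem_piAntidiag_univ_iff.not.2 hα) _

lemma homogeneousPart_ne_zero {m : ℕ} {α : Fin d → ℕ} (hcα : c α ≠ 0) (hα : degree α = m) :
    homogeneousPart c m ≠ 0 := fun h0 =>
  hcα <| by
    rw [← homogeneousPart_apply_of_degree_eq (c := c) hα, h0, Finsupp.coe_zero, Pi.zero_apply]

lemma trueHermitePoly_homogeneousPart (m : ℕ) :
    trueHermitePoly κ (homogeneousPart c m) z =
      ∑ α ∈ Finset.univ.piAntidiag m, c α * PhiBasis κ α z := by
  refine (trueHermitePoly_eq_sum_of_subset κ (c := homogeneousPart c m)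
    (Finsupp.support_indicator_subset _ _) z).trans (Finset.sum_congr rfl fun α hα => ?_)
  rw [homogeneousPart_apply_of_degree_eq (mem_piAntidiag_univ_iff.1 hα)]

lemma hermiteSeries_coe (p : (Fin d → ℕ) →₀ ℂ) :
    hermiteSeries κ p z = trueHermitePoly κ p z :=
  tsum_eq_sum fun α hα => by rw [Finsupp.notMem_support_iff.1 hα, zero_mul]

lemma orbitSeries_eq_of_norm_eq_one {u : ℂ} (hu : ‖u‖ = 1) :
    orbitSeries κ c z u = u ^ degree κ * hermiteSeries κ c (u • z) := by
  rw [hermiteSeries, ← tsum_mul_left]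
  refine tsum_congr fun α => ?_
  linear_combination -c α * pow_degree_mul_PhiBasis_smul κ α z hu

lemma summable_norm_mul_PhiBasis_mul_pow (hc : ∀ α, ‖c α‖ ≤ C) {t : ℝ} (ht : 0 ≤ t) :
    Summable fun α => ‖c α * PhiBasis κ α z‖ * t ^ degree α := by
  have hρ : 1 ≤ 1 + ‖z‖ := le_add_of_nonneg_right (norm_nonneg z)
  refine ((summable_phiBound_mul_pow_degree κ hρ ht).mul_left C).of_nonneg_of_le
    (fun α => by positivity) fun α => ?_
  have hΦ := norm_PhiBasis_le κ hρ
    (fun q => (norm_le_pi_norm z q).trans (le_add_of_nonneg_left zero_le_one)) α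
  have hC := (norm_nonneg _).trans (hc α)
  rw [norm_mul, ← mul_assoc]
  gcongr
  exact hc α

lemma summable_mul_PhiBasis (hc : ∀ α, ‖c α‖ ≤ C) : Summable fun α => c α * PhiBasis κ α z :=
  .of_norm (by simpa using summable_norm_mul_PhiBasis_mul_pow κ z hc zero_le_one)

lemma hermiteSeries_add_mul (hb : ∀ α, ‖b α‖ ≤ B) (hc : ∀ α, ‖c α‖ ≤ C) (ε : ℂ) :
    hermiteSeries κ (fun α => b α + ε * c α) z = hermiteSeries κ b z + ε * hermiteSeries κ c z := by
  rw [hermiteSeries, hermiteSeries, hermiteSeries, ← tsum_mul_left,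
    ← (summable_mul_PhiBasis κ z hb).tsum_add ((summable_mul_PhiBasis κ z hc).mul_left ε)]
  exact tsum_congr fun α => by ring

lemma differentiable_orbitSeries (hc : ∀ α, ‖c α‖ ≤ C) : Differentiable ℂ (orbitSeries κ c z) :=
  differentiable_tsum_mul_pow fun _ => summable_norm_mul_PhiBasis_mul_pow κ z hc

lemma iteratedDeriv_orbitSeries (hc : ∀ α, ‖c α‖ ≤ C) (m : ℕ) :
    iteratedDeriv m (orbitSeries κ c z) 0 =
      m.factorial * trueHermitePoly κ (homogeneousPart c m) z := by
  rw [trueHermitePoly_homogeneousPart]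
  exact iteratedDeriv_tsum_mul_pow (fun _ => summable_norm_mul_PhiBasis_mul_pow κ z hc) m
    fun _ => mem_piAntidiag_univ_iff

lemma orbitSeries_isBigO_cobounded (p : (Fin d → ℕ) →₀ ℂ) :
    orbitSeries κ p z =O[Bornology.cobounded ℂ] fun t => t ^ p.support.sup degree := by
  have heq : orbitSeries κ p z =
      fun u => ∑ α ∈ p.support, p α * PhiBasis κ α z * u ^ degree α := funext fun u =>
    tsum_eq_sum fun α hα => by simp [Finsupp.notMem_support_iff.1 hα]
  have hterm (α) (hα : α ∈ p.support) :
      (fun u : ℂ => u ^ degree α) =O[Bornology.cobounded ℂ] fun t => t ^ p.support.sup degree := by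
    refine .of_bound 1 ?_
    filter_upwards [tendsto_norm_cobounded_atTop.eventually_ge_atTop 1] with t ht
    rw [one_mul, norm_pow, norm_pow]
    exact pow_le_pow_right₀ ht (Finset.le_sup hα)
  rw [heq]
  exact .fun_sum fun α hα => (hterm α hα).const_mul_left (p α * PhiBasis κ α z)

end HermiteSeries

section FiniteSupport

variable {d : ℕ} (κ : Fin d → ℕ) {p : (Fin d → ℕ) →₀ ℂ} {c : (Fin d → ℕ) → ℂ} {C : ℝ} {ε : ℂ}

lemma norm_apply_le_sqrt_coeffSq (p : (Fin d → ℕ) →₀ ℂ) (α : Fin d → ℕ) :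
    ‖p α‖ ≤ √(coeffSq p) :=
  Real.le_sqrt_of_sq_le (sq_norm_apply_le_coeffSq p α)

lemma homogeneousPart_eq_zero_of_identity (hc : ∀ α, ‖c α‖ ≤ C)
    (hid : ∀ z, hermiteSeries κ c z * conj (trueHermitePoly κ p z) +
      conj (hermiteSeries κ c z) * (trueHermitePoly κ p z + ε * hermiteSeries κ c z) = 0)
    {l m : ℕ} (hl : homogeneousPart (fun α => p α + ε * c α) l ≠ 0)
    (hm : p.support.sup degree + l < m) : homogeneousPart c m = 0 := by
  have hp := norm_apply_le_sqrt_coeffSq p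
  have hsum : ∀ α, ‖p α + ε * c α‖ ≤ √(coeffSq p) + ‖ε‖ * C := fun α =>
    (norm_add_le _ _).trans <| by rw [norm_mul]; gcongr; exacts [hp α, hc α]
  refine eq_zero_of_ae_trueHermitePoly_eq_zero κ ?_
  filter_upwards [ae_trueHermitePoly_ne_zero κ hl] with z hz
  have hfact (n : ℕ) : (n.factorial : ℂ) ≠ 0 := Nat.cast_ne_zero.2 n.factorial_ne_zero
  refine (mul_eq_zero.1 ?_).resolve_left (hfact m)
  rw [← iteratedDeriv_orbitSeries κ z hc m]
  refine iteratedDeriv_eq_zero_of_circle_identity (differentiable_orbitSeries κ z hc)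
    (differentiable_orbitSeries κ z hp) (differentiable_orbitSeries κ z hsum)
    (orbitSeries_isBigO_cobounded κ z p) ?_ (fun u hu => ?_) hm
  · rw [iteratedDeriv_orbitSeries κ z hsum]
    exact mul_ne_zero (hfact l) hz
  · simp only [orbitSeries_eq_of_norm_eq_one κ z hu, hermiteSeries_add_mul κ (u • z) hp hc,
      hermiteSeries_coe, map_mul]
    linear_combination u ^ degree κ * conj (u ^ degree κ) * hid (u • z)

theorem finite_support_of_identity (hp : p ≠ 0) (hc : ∀ α, ‖c α‖ ≤ C)
    (hid : ∀ z, hermiteSeries κ c z * conj (trueHermitePoly κ p z) +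
      conj (hermiteSeries κ c z) * (trueHermitePoly κ p z + ε * hermiteSeries κ c z) = 0) :
    c.support.Finite := by
  by_cases hall : ∀ α, p α + ε * c α = 0
  · have hε : ε ≠ 0 := fun h0 => hp (Finsupp.ext fun α => by simpa [h0] using hall α)
    refine p.support.finite_toSet.subset fun α hα => ?_
    have hne : p α ≠ 0 := by
      rw [eq_neg_of_add_eq_zero_left (hall α)]
      exact neg_ne_zero.2 (mul_ne_zero hε hα)
    exact Finsupp.mem_support_iff.2 hne
  · push Not at hall
    obtain ⟨β, hβ⟩ := hall
    have hl : homogeneousPart (fun α => p α + ε * c α) (degree β) ≠ 0 :=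
      homogeneousPart_ne_zero hβ rfl
    refine Set.Finite.subset (Finset.finite_toSet <|
      (Finset.range (p.support.sup degree + degree β + 1)).biUnion Finset.univ.piAntidiag)
      fun α hα => ?_
    rw [Finset.mem_coe, Finset.mem_biUnion]
    refine ⟨degree α, Finset.mem_range_succ_iff.2 (not_lt.1 fun hlt => ?_),
      mem_piAntidiag_univ_iff.2 rfl⟩
    exact homogeneousPart_ne_zero hα rfl (homogeneousPart_eq_zero_of_identity κ hc hid hl hlt)

end FiniteSupport

/-! ### Rigidity of the limit identity -/

section Polarization

open Filter
open scoped Topology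

lemma eq_zero_of_forall_real_eq_zero {f : ℂ → ℂ} (hf : Differentiable ℂ f)
    (hzero : ∀ s : ℝ, f s = 0) : f = 0 := by
  have hmap : Tendsto ((↑) : ℝ → ℂ) (𝓝[≠] 0) (𝓝[≠] 0) :=
    (Complex.continuous_ofReal.tendsto' 0 0 Complex.ofReal_zero).inf
      (tendsto_principal_principal.2 fun s hs => Complex.ofReal_ne_zero.2 hs)
  exact AnalyticOnNhd.eq_of_frequently_eq (fun t _ => hf.analyticAt t) (fun _ _ => analyticAt_const)
    (hmap.frequently (Frequently.of_forall hzero))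

variable {d : ℕ} (κ : Fin d → ℕ) (b : (Fin d → ℕ) →₀ ℂ) {p c : (Fin d → ℕ) →₀ ℂ} {ε : ℂ}
  (z u : Fin d → ℂ)

/-- The polarisation of `trueHermitePoly κ b`: its extension off the diagonal `u = z` which is
holomorphic in `z` and antiholomorphic in `u`. -/
noncomputable def polarization (b : (Fin d → ℕ) →₀ ℂ) (z u : Fin d → ℂ) : ℂ :=
  b.sum fun α x => x * polarPhi κ α 1 z (conj u)

lemma polarization_self : polarization κ b z z = trueHermitePoly κ b z := by
  simp only [polarization, trueHermitePoly, PhiBasis_eq_polarPhi]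

lemma differentiable_polarization (v w : Fin d → ℂ) :
    Differentiable ℂ fun t : ℂ => polarization κ b (v + t • w) (v + conj t • w) := by
  simp only [polarization, Finsupp.sum, polarPhi, polarHermite, map_add, Pi.add_apply,
    Pi.smul_apply, Pi.conj_apply, smul_eq_mul, map_mul, Complex.conj_conj]
  fun_prop

theorem polarization_identity
    (hid : ∀ z, trueHermitePoly κ c z * conj (trueHermitePoly κ p z) +
      conj (trueHermitePoly κ c z) * (trueHermitePoly κ p z + ε * trueHermitePoly κ c z) = 0) :
    polarization κ c z u * conj (polarization κ p u z) +
      conj (polarization κ c u z) * (polarization κ p z u + ε * polarization κ c z u) = 0 := by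
  set v : Fin d → ℂ := (2⁻¹ : ℂ) • (z + u)
  set w : Fin d → ℂ := (-Complex.I / 2) • (z - u)
  set G : ((Fin d → ℕ) →₀ ℂ) → ℂ → ℂ := fun b t => polarization κ b (v + t • w) (v + conj t • w)
  have hG (b) : Differentiable ℂ (G b) := differentiable_polarization κ b v w
  have hG_conj (b) : Differentiable ℂ (conj ∘ G b ∘ conj) := fun t => by
    simpa using (hG b (conj t)).conj_conj
  have hvanish := eq_zero_of_forall_real_eq_zero
    (((hG c).mul (hG_conj p)).add ((hG_conj c).mul ((hG p).add ((hG c).const_mul ε)))) fun s => by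
      simpa [G, polarization_self] using hid (v + (s : ℂ) • w)
  have hz : v + Complex.I • w = z := by
    ext q
    simp only [v, w, Pi.add_apply, Pi.sub_apply, Pi.smul_apply, smul_eq_mul]
    linear_combination -((z q - u q) / 2) * Complex.I_mul_I
  have hu : v + -Complex.I • w = u := by
    ext q
    simp only [v, w, Pi.add_apply, Pi.sub_apply, Pi.smul_apply, smul_eq_mul]
    linear_combination ((z q - u q) / 2) * Complex.I_mul_I
  simpa [G, -neg_smul, hz, hu] using congrFun hvanish Complex.I

lemma polarPhi_eq_mul_inv_smul_right (α : Fin d → ℕ) {s : ℂ} (hs : s ≠ 0) :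
    polarPhi κ α s z u = s ^ degree κ * polarPhi κ α 1 z (s⁻¹ • u) := by
  simp only [polarPhi, degree, ← Finset.prod_pow_eq_pow_sum, ← Finset.prod_mul_distrib]
  refine Finset.prod_congr rfl fun q _ => ?_
  have hscale := polarHermite_homogeneous (κ q) (α q) 1 s 1 (z q) (s⁻¹ * u q)
  rw [mul_inv_cancel_left₀ hs, one_pow, one_mul, one_mul, mul_one, one_mul] at hscale
  rw [hscale, Pi.smul_apply, smul_eq_mul]
  ring

lemma polarPhi_eq_mul_inv_smul_left (α : Fin d → ℕ) {s : ℂ} (hs : s ≠ 0) :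
    polarPhi κ α s z u = s ^ degree α * polarPhi κ α 1 (s⁻¹ • z) u := by
  simp only [polarPhi, degree, ← Finset.prod_pow_eq_pow_sum, ← Finset.prod_mul_distrib]
  refine Finset.prod_congr rfl fun q _ => ?_
  have hscale := polarHermite_homogeneous (κ q) (α q) s 1 1 (s⁻¹ * z q) (u q)
  rw [mul_inv_cancel_left₀ hs, one_pow, mul_one, mul_one, mul_one, one_mul] at hscale
  rw [hscale, Pi.smul_apply, smul_eq_mul]
  ring

lemma tendsto_polarPhi_zero (α : Fin d → ℕ) :
    Tendsto (fun s : ℝ => polarPhi κ α s z u) (𝓝[≠] 0) (𝓝 (polarPhi κ α 0 z u)) := by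
  have hcont : Continuous fun s : ℝ => polarPhi κ α s z u := by
    simp only [polarPhi, polarHermite]
    fun_prop
  simpa using (hcont.tendsto 0).mono_left nhdsWithin_le_nhds

end Polarization

section LeadingPolynomial

open Filter
open scoped Topology

variable {d : ℕ} (κ : Fin d → ℕ) (b : (Fin d → ℕ) →₀ ℂ) {p c : (Fin d → ℕ) →₀ ℂ} {ε : ℂ}
  (z u : Fin d → ℂ)

/-- The holomorphic factor `∑ α, b α C_α z ^ α` of the terms of `trueHermitePoly κ b` with the full
power `conj z ^ κ`; here `C_α` is the product of the one-dimensional normalising constants. -/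
noncomputable def leadingPoly : ((Fin d → ℕ) →₀ ℂ) →ₗ[ℂ] MvPolynomial (Fin d) ℂ :=
  Finsupp.linearCombination ℂ fun α =>
    MvPolynomial.monomial (Finsupp.equivFunOnFinite.symm α) (∏ q, (hermiteConst (κ q) (α q) : ℂ))

lemma coeff_leadingPoly (α : Fin d → ℕ) :
    (leadingPoly κ b).coeff (Finsupp.equivFunOnFinite.symm α) =
      b α * ∏ q, (hermiteConst (κ q) (α q) : ℂ) := by
  simp only [leadingPoly, Finsupp.linearCombination_apply, Finsupp.sum, MvPolynomial.coeff_sum,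
    MvPolynomial.coeff_smul, MvPolynomial.coeff_monomial, EmbeddingLike.apply_eq_iff_eq]
  simp +contextual

lemma leadingPoly_injective : Function.Injective (leadingPoly κ) := by
  refine (injective_iff_map_eq_zero _).2 fun b hb => Finsupp.ext fun α => ?_
  have hcoeff := coeff_leadingPoly κ b α
  rw [hb, MvPolynomial.coeff_zero, eq_comm, mul_eq_zero] at hcoeff
  refine hcoeff.resolve_right (Finset.prod_ne_zero_iff.2 fun q _ => ?_)
  exact_mod_cast (hermiteConst_pos _ _).ne'

lemma eval_leadingPoly_mul :
    MvPolynomial.eval z (leadingPoly κ b) * ∏ q, u q ^ κ q =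
      b.sum fun α x => x * polarPhi κ α 0 z u := by
  simp only [leadingPoly, Finsupp.linearCombination_apply, Finsupp.sum, map_sum,
    MvPolynomial.smul_eval, MvPolynomial.eval_monomial, Finset.sum_mul, polarPhi,
    polarHermite_zero_homogenizer, Finset.prod_mul_distrib]
  refine Finset.sum_congr rfl fun α _ => ?_
  simp [Finsupp.prod_fintype, mul_assoc]

lemma tendsto_mul_polarization_inv_smul_right :
    Tendsto (fun s : ℝ => (s : ℂ) ^ degree κ * polarization κ b z ((s : ℂ)⁻¹ • u)) (𝓝[≠] 0)
      (𝓝 (MvPolynomial.eval z (leadingPoly κ b) * conj (∏ q, u q ^ κ q))) := by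
  have hlim := tendsto_finsetSum b.support fun α _ =>
    (tendsto_polarPhi_zero κ z (conj u) α).const_mul (b α)
  rw [show conj (∏ q, u q ^ κ q) = ∏ q, (conj u) q ^ κ q by simp, eval_leadingPoly_mul]
  refine hlim.congr' ?_
  filter_upwards [self_mem_nhdsWithin] with s hs
  rw [polarization, Finsupp.sum, Finset.mul_sum]
  refine Finset.sum_congr rfl fun α _ => ?_
  rw [polarPhi_eq_mul_inv_smul_right κ z _ α (Complex.ofReal_ne_zero.2 hs), mul_left_comm]
  congr 4
  ext q
  simp

lemma tendsto_pow_mul_polarPhi_inv_smul_left {α : Fin d → ℕ} {n : ℕ} (hα : degree α ≤ n) :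
    Tendsto (fun s : ℝ => (s : ℂ) ^ n * polarPhi κ α 1 ((s : ℂ)⁻¹ • u) z) (𝓝[≠] 0)
      (𝓝 (0 ^ (n - degree α) * polarPhi κ α 0 u z)) := by
  have hpow : Tendsto (fun s : ℝ => (s : ℂ) ^ (n - degree α)) (𝓝[≠] 0)
      (𝓝 (0 ^ (n - degree α))) :=
    ((Complex.continuous_ofReal.pow _).tendsto' 0 _ (by simp)).mono_left nhdsWithin_le_nhds
  refine (hpow.mul (tendsto_polarPhi_zero κ u z α)).congr' ?_
  filter_upwards [self_mem_nhdsWithin] with s hs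
  rw [polarPhi_eq_mul_inv_smul_left κ u _ α (Complex.ofReal_ne_zero.2 hs), ← mul_assoc, ← pow_add,
    Nat.sub_add_cancel hα]

lemma tendsto_mul_polarization_inv_smul_left {n : ℕ} (hn : ∀ α ∈ b.support, degree α ≤ n) :
    Tendsto (fun s : ℝ => (s : ℂ) ^ n * polarization κ b ((s : ℂ)⁻¹ • u) z) (𝓝[≠] 0)
      (𝓝 (MvPolynomial.eval u (leadingPoly κ (homogeneousPart b n)) *
        conj (∏ q, z q ^ κ q))) := by
  have hsubset : (homogeneousPart b n).support ⊆ b.support := fun α hα => by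
    rw [Finsupp.mem_support_iff] at hα ⊢
    by_cases hdeg : degree α = n
    · rwa [homogeneousPart_apply_of_degree_eq hdeg] at hα
    · exact absurd (homogeneousPart_apply_of_degree_ne hdeg) hα
  have hcoeff (α) (hα : α ∈ b.support) : homogeneousPart b n α = b α * 0 ^ (n - degree α) := by
    rcases (hn α hα).eq_or_lt with hdeg | hdeg
    · simp [homogeneousPart_apply_of_degree_eq hdeg, hdeg]
    · rw [homogeneousPart_apply_of_degree_ne hdeg.ne, zero_pow (Nat.sub_ne_zero_of_lt hdeg),
        mul_zero]
  have hlim := tendsto_finsetSum b.support fun α hα =>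
    (tendsto_pow_mul_polarPhi_inv_smul_left κ (conj z) u (hn α hα)).const_mul (b α)
  rw [show conj (∏ q, z q ^ κ q) = ∏ q, (conj z) q ^ κ q by simp, eval_leadingPoly_mul,
    Finsupp.sum_of_support_subset _ hsubset _ (by simp)]
  refine (hlim.congr fun s => ?_).trans_eq <|
    congrArg 𝓝 (Finset.sum_congr rfl fun α hα => ?_)
  · simp only [polarization, Finsupp.sum, Finset.mul_sum, mul_left_comm]
  · rw [hcoeff α hα, mul_assoc]

theorem leadingPoly_identity
    (hid : ∀ z, trueHermitePoly κ c z * conj (trueHermitePoly κ p z) +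
      conj (trueHermitePoly κ c z) * (trueHermitePoly κ p z + ε * trueHermitePoly κ c z) = 0)
    {n : ℕ} (hcn : ∀ α ∈ c.support, degree α ≤ n) (hpn : ∀ α ∈ p.support, degree α ≤ n) :
    (MvPolynomial.eval z (leadingPoly κ c) *
        conj (MvPolynomial.eval u (leadingPoly κ (homogeneousPart p n))) +
      conj (MvPolynomial.eval u (leadingPoly κ (homogeneousPart c n))) *
        (MvPolynomial.eval z (leadingPoly κ p) + ε * MvPolynomial.eval z (leadingPoly κ c))) *
      ((∏ q, z q ^ κ q) * conj (∏ q, u q ^ κ q)) = 0 := by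
  have hright (b) := tendsto_mul_polarization_inv_smul_right κ b z u
  have hleft {b} (hb : ∀ α ∈ b.support, degree α ≤ n) :=
    (Complex.continuous_conj.tendsto _).comp (tendsto_mul_polarization_inv_smul_left κ b z u hb)
  have hlim := ((hright c).mul (hleft hpn)).add
    ((hleft hcn).mul ((hright p).add ((hright c).const_mul ε)))
  have heq := tendsto_nhds_unique (hlim.congr (f₂ := fun _ => 0) fun s => ?_) tendsto_const_nhds
  · simp only [map_mul, Complex.conj_conj] at heq ⊢
    linear_combination heq
  · simp only [Function.comp_apply, map_mul, map_pow, Complex.conj_ofReal]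
    linear_combination (s : ℂ) ^ n * (s : ℂ) ^ degree κ *
      polarization_identity κ z ((s : ℂ)⁻¹ • u) hid

lemma eq_zero_of_eval_leadingPoly_mul_eq_zero
    (hb : ∀ z, MvPolynomial.eval z (leadingPoly κ b) * ∏ q, z q ^ κ q = 0) : b = 0 := by
  have hprod : leadingPoly κ b * ∏ q, MvPolynomial.X q ^ κ q = 0 :=
    MvPolynomial.funext fun z => by simpa [map_prod] using hb z
  have hmonomial : ∏ q, (MvPolynomial.X q : MvPolynomial (Fin d) ℂ) ^ κ q ≠ 0 :=
    Finset.prod_ne_zero_iff.2 fun q _ => pow_ne_zero _ (MvPolynomial.X_ne_zero q)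
  refine leadingPoly_injective κ ?_
  rw [(mul_eq_zero.1 hprod).resolve_right hmonomial, map_zero]

lemma exists_eval_leadingPoly_ne_zero (hb : b ≠ 0) :
    ∃ z : Fin d → ℂ, ∏ q, z q ^ κ q ≠ 0 ∧ MvPolynomial.eval z (leadingPoly κ b) ≠ 0 := by
  by_contra! hzero
  exact hb <| eq_zero_of_eval_leadingPoly_mul_eq_zero κ b fun z =>
    mul_eq_zero.2 (or_iff_not_imp_right.2 (hzero z))

theorem exists_eq_smul_of_identity (hp : p ≠ 0)
    (hid : ∀ z, trueHermitePoly κ c z * conj (trueHermitePoly κ p z) +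
      conj (trueHermitePoly κ c z) * (trueHermitePoly κ p z + ε * trueHermitePoly κ c z) = 0) :
    ∃ ν : ℂ, c = ν • p := by
  set n := (c.support ∪ p.support).sup degree
  set σ : (Fin d → ℂ) → ℂ := fun u =>
    conj (MvPolynomial.eval u (leadingPoly κ (homogeneousPart p n)))
  set τ : (Fin d → ℂ) → ℂ := fun u =>
    conj (MvPolynomial.eval u (leadingPoly κ (homogeneousPart c n)))
  have hcn : ∀ α ∈ c.support, degree α ≤ n := fun α hα =>
    Finset.le_sup (Finset.mem_union_left _ hα)
  have hpn : ∀ α ∈ p.support, degree α ≤ n := fun α hα =>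
    Finset.le_sup (Finset.mem_union_right _ hα)
  have hdependent (u) (hu : ∏ q, u q ^ κ q ≠ 0) : (σ u + τ u * ε) • c + τ u • p = 0 :=
    eq_zero_of_eval_leadingPoly_mul_eq_zero κ _ fun z => by
      have hz := leadingPoly_identity κ z u hid hcn hpn
      rw [← mul_assoc, mul_eq_zero_iff_right ((map_ne_zero _).2 hu)] at hz
      simp only [map_add, map_smul, MvPolynomial.smul_eval]
      linear_combination hz
  obtain ⟨u, hu, hστ⟩ : ∃ u : Fin d → ℂ, ∏ q, u q ^ κ q ≠ 0 ∧ (τ u = 0 → σ u ≠ 0) := by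
    obtain ⟨α, hα, hdeg⟩ := Finset.exists_mem_eq_sup _
      ((Finsupp.support_nonempty_iff.2 hp).mono Finset.subset_union_right) degree
    rcases Finset.mem_union.1 hα with hα | hα
    · obtain ⟨u, hu, hτ⟩ := exists_eval_leadingPoly_ne_zero κ _
        (homogeneousPart_ne_zero (Finsupp.mem_support_iff.1 hα) hdeg.symm)
      exact ⟨u, hu, fun h0 => absurd h0 ((map_ne_zero _).2 hτ)⟩
    · obtain ⟨u, hu, hσ⟩ := exists_eval_leadingPoly_ne_zero κ _
        (homogeneousPart_ne_zero (Finsupp.mem_support_iff.1 hα) hdeg.symm)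
      exact ⟨u, hu, fun _ => (map_ne_zero _).2 hσ⟩
  have hdet : σ u + τ u * ε ≠ 0 := fun h0 => by
    have hτ : τ u = 0 := by simpa [h0, hp] using hdependent u hu
    exact hστ hτ (by simpa [hτ] using h0)
  refine ⟨-(τ u / (σ u + τ u * ε)), ?_⟩
  have hsolve := eq_neg_of_add_eq_zero_left (hdependent u hu)
  rw [← inv_smul_smul₀ hdet c, hsolve, ← neg_smul, smul_smul, div_eq_inv_mul, mul_neg]

end LeadingPolynomial

section Rigidity

/-- The difference quotient `(‖P + ε H‖² - ‖P‖²) / ε`, in expanded form so that it extends to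
`ε = 0`. -/
noncomputable def squareIncrement (ε : ℝ) (P H : ℂ) : ℝ := 2 * (H * conj P).re + ε * ‖H‖ ^ 2

variable {d : ℕ} (κ : Fin d → ℕ) {p : (Fin d → ℕ) →₀ ℂ} {c : (Fin d → ℕ) → ℂ} {C ε : ℝ}

theorem eq_zero_of_squareIncrement_eq_zero (hp : p ≠ 0) (hc : ∀ α, ‖c α‖ ≤ C)
    (hid : ∀ z, squareIncrement ε (trueHermitePoly κ p z) (hermiteSeries κ c z) = 0)
    (him : (∑ α ∈ p.support, c α * conj (p α)).im = 0)
    (hre : 0 ≤ coeffSq p + ε * (∑ α ∈ p.support, c α * conj (p α)).re) : c = 0 := by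
  have hcomplex (z) : hermiteSeries κ c z * conj (trueHermitePoly κ p z) +
      conj (hermiteSeries κ c z) * (trueHermitePoly κ p z + ε * hermiteSeries κ c z) = 0 := by
    have hadd := Complex.add_conj (hermiteSeries κ c z * conj (trueHermitePoly κ p z))
    have hsq := Complex.conj_mul' (hermiteSeries κ c z)
    have hcast := congrArg Complex.ofReal (hid z)
    rw [squareIncrement] at hcast
    push_cast at hcast hadd
    rw [map_mul, Complex.conj_conj] at hadd
    linear_combination hcast + hadd + ε * hsq
  lift c to (Fin d → ℕ) →₀ ℂ using finite_support_of_identity κ hp hc hcomplex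
  simp only [hermiteSeries_coe] at hcomplex
  obtain ⟨ν, rfl⟩ := exists_eq_smul_of_identity κ hp hcomplex
  have hsum : ∑ α ∈ p.support, (ν • p) α * conj (p α) = ν * (coeffSq p : ℝ) := by
    rw [coeffSq, Complex.ofReal_sum, Finset.mul_sum]
    refine Finset.sum_congr rfl fun α _ => ?_
    rw [Finsupp.smul_apply, smul_eq_mul, mul_assoc, Complex.mul_conj', Complex.ofReal_pow]
  have hpos : 0 < coeffSq p := coeffSq_pos hp
  rw [hsum, Complex.im_mul_ofReal, mul_eq_zero_iff_right hpos.ne'] at him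
  rw [hsum, Complex.re_mul_ofReal] at hre
  lift ν to ℝ using him
  obtain ⟨z, hz⟩ := (ae_trueHermitePoly_ne_zero κ hp).exists
  have hquad : (ν * (2 + ε * ν)) * ‖trueHermitePoly κ p z‖ ^ 2 = 0 := by
    have h := hid z
    rw [squareIncrement, hermiteSeries_coe, trueHermitePoly_smul, mul_assoc, Complex.mul_conj',
      norm_mul, mul_pow, Complex.norm_real, Real.norm_eq_abs, sq_abs, ← Complex.ofReal_pow,
      ← Complex.ofReal_mul, Complex.ofReal_re] at h
    linear_combination h
  rcases mul_eq_zero.1 (mul_eq_zero_iff_right (by positivity) |>.1 hquad) with hν | hν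
  · rw [hν, Complex.ofReal_zero, zero_smul, Finsupp.coe_zero]
  · rw [Complex.ofReal_re] at hre
    nlinarith

end Rigidity

/-! ### Passage to the limit -/

section HermiteSeriesLimits

open Filter
open scoped Topology

variable {d : ℕ} (κ : Fin d → ℕ) {c : (Fin d → ℕ) → ℂ} {C : ℝ}

lemma norm_mul_PhiBasis_le {x : ℂ} (hx : ‖x‖ ≤ C) (α : Fin d → ℕ) {z : Fin d → ℂ} {ρ : ℝ}
    (hρ : 1 ≤ ρ) (hz : ‖z‖ ≤ ρ) : ‖x * PhiBasis κ α z‖ ≤ C * phiBound κ ρ α := by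
  rw [norm_mul]
  gcongr
  · exact (norm_nonneg x).trans hx
  · exact norm_PhiBasis_le κ hρ (fun q => (norm_le_pi_norm z q).trans hz) α

lemma continuous_hermiteSeries (hc : ∀ α, ‖c α‖ ≤ C) : Continuous (hermiteSeries κ c) := by
  refine continuous_iff_continuousAt.2 fun z => ?_
  have hρ : 1 ≤ 1 + ‖z‖ := le_add_of_nonneg_right (norm_nonneg z)
  have hball : ContinuousOn (hermiteSeries κ c) (Metric.ball 0 (1 + ‖z‖)) :=
    continuousOn_tsum (fun α => by fun_prop) ((summable_phiBound κ hρ).mul_left C) fun α y hy =>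
      norm_mul_PhiBasis_le κ (hc α) α hρ (mem_ball_zero_iff.1 hy).le
  exact hball.continuousAt (Metric.isOpen_ball.mem_nhds (by simp))

lemma tendsto_hermiteSeries {h : ℕ → (Fin d → ℕ) → ℂ} (hh : ∀ n α, ‖h n α‖ ≤ C)
    (hlim : Tendsto h atTop (𝓝 c)) (z : Fin d → ℂ) :
    Tendsto (fun n => hermiteSeries κ (h n) z) atTop (𝓝 (hermiteSeries κ c z)) := by
  have hρ : 1 ≤ 1 + ‖z‖ := le_add_of_nonneg_right (norm_nonneg z)
  exact tendsto_tsum_of_dominated_convergence ((summable_phiBound κ hρ).mul_left C)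
    (fun α => (tendsto_pi_nhds.1 hlim α).mul_const _)
    (.of_forall fun n α => norm_mul_PhiBasis_le κ (hh n α) α hρ (le_add_of_nonneg_left zero_le_one))

end HermiteSeriesLimits

section LimitIdentity

open Filter
open scoped Topology

lemma ae_eq_zero_of_tendsto_integral_norm {X E : Type*} [MeasurableSpace X] [NormedAddCommGroup E]
    {μ : Measure X} {f : ℕ → X → E} {g : X → E} (hf : ∀ n, Integrable (f n) μ)
    (hg : AEStronglyMeasurable g μ) (hfg : ∀ᵐ x ∂μ, Tendsto (fun n => f n x) atTop (𝓝 (g x)))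
    (hzero : Tendsto (fun n => ∫ x, ‖f n x‖ ∂μ) atTop (𝓝 0)) : g =ᵐ[μ] 0 := by
  have hlintegral : Tendsto (fun n => ∫⁻ x, ‖f n x‖ₑ ∂μ) atTop (𝓝 0) := by
    simpa only [ofReal_integral_norm_eq_lintegral_enorm (hf _), ENNReal.ofReal_zero]
      using ENNReal.tendsto_ofReal hzero
  have hfatou : ∫⁻ x, ‖g x‖ₑ ∂μ ≤ 0 := calc
    _ = ∫⁻ x, liminf (fun n => ‖f n x‖ₑ) atTop ∂μ :=
      lintegral_congr_ae (hfg.mono fun x hx => hx.enorm.liminf_eq.symm)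
    _ ≤ liminf (fun n => ∫⁻ x, ‖f n x‖ₑ ∂μ) atTop :=
      lintegral_liminf_le' fun n => (hf n).1.enorm
    _ = 0 := hlintegral.liminf_eq
  filter_upwards [(lintegral_eq_zero_iff' hg.enorm).1 (le_zero_iff.1 hfatou)] with x hx
  simpa using hx

variable {ε δ : ℝ}

lemma mul_squareIncrement (ε : ℝ) (P H : ℂ) :
    ε * squareIncrement ε P H = ‖P + ε * H‖ ^ 2 - ‖P‖ ^ 2 := by
  simp only [squareIncrement, ← Complex.normSq_eq_norm_sq, Complex.normSq_apply, Complex.add_re,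
    Complex.add_im, Complex.mul_re, Complex.mul_im, Complex.ofReal_re, Complex.ofReal_im,
    Complex.conj_re, Complex.conj_im]
  ring

lemma abs_squareIncrement_le (hε : 0 < ε) (hδ : 0 < δ) (P H : ℂ) :
    |squareIncrement ε P H| ≤
      δ * ‖P‖ ^ 2 + (1 / (δ * ε ^ 2) + ε⁻¹) * (‖P + ε * H‖ - ‖P‖) ^ 2 := by
  set g := ‖P + ε * H‖ - ‖P‖ with hg
  have hfactor : squareIncrement ε P H = ε⁻¹ * (2 * ‖P‖ * g + g ^ 2) := by
    rw [eq_inv_mul_iff_mul_eq₀ hε.ne', mul_squareIncrement, hg]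
    ring
  have hamgm : ε⁻¹ * (2 * ‖P‖ * |g|) ≤ δ * ‖P‖ ^ 2 + 1 / (δ * ε ^ 2) * g ^ 2 := by
    have hsq : 0 ≤ δ * (‖P‖ - |g| / (δ * ε)) ^ 2 := by positivity
    have hexpand : δ * (‖P‖ - |g| / (δ * ε)) ^ 2 =
        δ * ‖P‖ ^ 2 + 1 / (δ * ε ^ 2) * g ^ 2 - ε⁻¹ * (2 * ‖P‖ * |g|) := by
      rw [← sq_abs g]
      field_simp
      ring
    linarith
  calc |squareIncrement ε P H| ≤ ε⁻¹ * (2 * ‖P‖ * |g| + g ^ 2) := by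
        rw [hfactor, abs_mul, abs_of_pos (inv_pos.2 hε)]
        gcongr
        exact (abs_add_le _ _).trans_eq (by simp [abs_mul])
    _ ≤ _ := by linarith

variable {d : ℕ} (κ : Fin d → ℕ) (p h : (Fin d → ℕ) →₀ ℂ)

lemma integrable_squareIncrement (ε : ℝ) :
    Integrable (fun z => squareIncrement ε (trueHermitePoly κ p z) (trueHermitePoly κ h z))
      (gaussian d) := by
  have hprod : Integrable (fun z => trueHermitePoly κ h z * conj (trueHermitePoly κ p z))
      (gaussian d) := (memLp_trueHermitePoly κ h).integrable_mul (memLp_trueHermitePoly κ p).star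
  exact (hprod.re.const_mul 2).add ((integrable_sq_norm_trueHermitePoly κ h).const_mul ε)

lemma integral_abs_squareIncrement_le (hε : 0 < ε) (hδ : 0 < δ)
    (hgap : ∫ z, modulusGap κ p ((ε : ℂ) • h) z ∂gaussian d ≤ (δ * ε) ^ 2) :
    ∫ z, |squareIncrement ε (trueHermitePoly κ p z) (trueHermitePoly κ h z)| ∂gaussian d ≤
      δ * coeffSq p + δ + ε * δ ^ 2 := by
  have hp := (integrable_sq_norm_trueHermitePoly κ p).const_mul δ
  have hg := (integrable_modulusGap κ p ((ε : ℂ) • h)).const_mul (1 / (δ * ε ^ 2) + ε⁻¹)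
  calc _ ≤ ∫ z, (δ * ‖trueHermitePoly κ p z‖ ^ 2 +
          (1 / (δ * ε ^ 2) + ε⁻¹) * modulusGap κ p ((ε : ℂ) • h) z) ∂gaussian d := by
        refine integral_mono (integrable_squareIncrement κ p h ε).abs (hp.add hg) fun z => ?_
        simpa only [modulusGap, trueHermitePoly_smul] using abs_squareIncrement_le hε hδ _ _
    _ = δ * coeffSq p +
          (1 / (δ * ε ^ 2) + ε⁻¹) * ∫ z, modulusGap κ p ((ε : ℂ) • h) z ∂gaussian d := by
        rw [integral_add hp hg, integral_const_mul, integral_const_mul,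
          integral_sq_norm_trueHermitePoly]
    _ ≤ δ * coeffSq p + (1 / (δ * ε ^ 2) + ε⁻¹) * (δ * ε) ^ 2 := by gcongr
    _ = _ := by field_simp; ring

theorem squareIncrement_eq_zero_of_tendsto {h : ℕ → (Fin d → ℕ) →₀ ℂ} {c : (Fin d → ℕ) → ℂ}
    {ε δ : ℕ → ℝ} {ε₀ C : ℝ} (hC : ∀ n α, ‖h n α‖ ≤ C) (hε : ∀ n, 0 < ε n) (hδ : ∀ n, 0 < δ n)
    (hgap : ∀ n, ∫ z, modulusGap κ p ((ε n : ℂ) • h n) z ∂gaussian d ≤ (δ n * ε n) ^ 2)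
    (hδ_lim : Tendsto δ atTop (𝓝 0)) (hε_lim : Tendsto ε atTop (𝓝 ε₀))
    (hh_lim : Tendsto (fun n => (h n : (Fin d → ℕ) → ℂ)) atTop (𝓝 c)) (z : Fin d → ℂ) :
    squareIncrement ε₀ (trueHermitePoly κ p z) (hermiteSeries κ c z) = 0 := by
  have hc (α) : ‖c α‖ ≤ C := le_of_tendsto' (tendsto_pi_nhds.1 hh_lim α).norm fun n => hC n α
  have hcont : Continuous fun z =>
      squareIncrement ε₀ (trueHermitePoly κ p z) (hermiteSeries κ c z) := by
    have := continuous_hermiteSeries κ hc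
    unfold squareIncrement
    fun_prop
  have hlim (z) : Tendsto
      (fun n => squareIncrement (ε n) (trueHermitePoly κ p z) (trueHermitePoly κ (h n) z)) atTop
      (𝓝 (squareIncrement ε₀ (trueHermitePoly κ p z) (hermiteSeries κ c z))) := by
    have hseries := tendsto_hermiteSeries κ hC hh_lim z
    simp only [hermiteSeries_coe] at hseries
    exact (((Complex.continuous_re.tendsto _).comp (hseries.mul_const _)).const_mul 2).add
      (hε_lim.mul (hseries.norm.pow 2))
  have hbound : Tendsto (fun n => δ n * coeffSq p + δ n + ε n * δ n ^ 2) atTop (𝓝 0) := by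
    simpa using ((hδ_lim.mul_const _).add hδ_lim).add (hε_lim.mul (hδ_lim.pow 2))
  have hzero : Tendsto (fun n => ∫ z, ‖squareIncrement (ε n) (trueHermitePoly κ p z)
      (trueHermitePoly κ (h n) z)‖ ∂gaussian d) atTop (𝓝 0) :=
    squeeze_zero (fun n => integral_nonneg fun z => norm_nonneg _)
      (fun n => integral_abs_squareIncrement_le κ p (h n) (hε n) (hδ n) (hgap n)) hbound
  have hae := ae_eq_zero_of_tendsto_integral_norm
    (fun n => integrable_squareIncrement κ p (h n) (ε n)) hcont.aestronglyMeasurable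
    (.of_forall hlim) hzero
  exact congrFun ((Continuous.ae_eq_iff_eq volume hcont continuous_const).1
    ((absolutelyContinuous_gaussian).ae_eq hae)) z

end LimitIdentity

/-! ### Stability -/

section Compactness

open Filter
open scoped Topology

variable {d : ℕ} (κ : Fin d → ℕ) (p e : (Fin d → ℕ) →₀ ℂ)

lemma coeffSq_le_integral_modulusGap :
    coeffSq e ≤ 2 * (∫ z, modulusGap κ p e z ∂gaussian d) + 8 * coeffSq p := by
  have hg := (integrable_modulusGap κ p e).const_mul 2
  have hp := (integrable_sq_norm_trueHermitePoly κ p).const_mul 8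
  rw [← integral_sq_norm_trueHermitePoly κ e, ← integral_sq_norm_trueHermitePoly κ p,
    ← integral_const_mul, ← integral_const_mul, ← integral_add hg hp]
  refine integral_mono (integrable_sq_norm_trueHermitePoly κ e) (hg.add hp) fun z => ?_
  simp only [modulusGap]
  set P := trueHermitePoly κ p z
  set E := trueHermitePoly κ e z
  have htriangle : ‖E‖ ≤ (‖P + E‖ - ‖P‖) + 2 * ‖P‖ := by
    linarith [norm_le_add_norm_add' P E]
  calc ‖E‖ ^ 2 ≤ ((‖P + E‖ - ‖P‖) + 2 * ‖P‖) ^ 2 := by gcongr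
    _ ≤ 2 * ((‖P + E‖ - ‖P‖) ^ 2 + (2 * ‖P‖) ^ 2) := add_sq_le
    _ = _ := by ring

lemma le_of_integral_modulusGap_le {h : (Fin d → ℕ) →₀ ℂ} (hh : coeffSq h = 1) {ε δ : ℝ}
    (hδ : δ ^ 2 ≤ 1 / 4) (hgap : ∫ z, modulusGap κ p ((ε : ℂ) • h) z ∂gaussian d ≤ (δ * ε) ^ 2) :
    ε ≤ 4 * √(coeffSq p) := by
  have hle := coeffSq_le_integral_modulusGap κ p ((ε : ℂ) • h)
  rw [coeffSq_smul, hh, Complex.norm_real, Real.norm_eq_abs, sq_abs, mul_one] at hle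
  refine (abs_le_of_sq_le_sq' ?_ (by positivity)).2
  rw [mul_pow, Real.sq_sqrt (coeffSq_nonneg p)]
  nlinarith [mul_le_mul_of_nonneg_right hδ (sq_nonneg ε)]

lemma ne_zero_of_tendsto_of_coeffSq_eq_one {h : ℕ → (Fin d → ℕ) →₀ ℂ} {c : (Fin d → ℕ) → ℂ}
    {ε δ : ℕ → ℝ} (hε : ∀ n, 0 < ε n) (hh : ∀ n, coeffSq (h n) = 1)
    (hgap : ∀ n, ∫ z, modulusGap κ p ((ε n : ℂ) • h n) z ∂gaussian d ≤ (δ n * ε n) ^ 2)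
    (hδ_lim : Tendsto δ atTop (𝓝 0))
    (hh_lim : Tendsto (fun n => (h n : (Fin d → ℕ) → ℂ)) atTop (𝓝 c)) : c ≠ 0 := by
  rintro rfl
  obtain ⟨C, A, hC, hcoeff⟩ := exists_coeffSq_le κ p
  have hlower (n) : 1 ≤ C * δ n ^ 2 + C * ∑ α ∈ A, ‖h n α‖ ^ 2 := by
    have hn := (hcoeff ((ε n : ℂ) • h n)).trans
      (add_le_add_left (mul_le_mul_of_nonneg_left (hgap n) hC) _)
    simp only [coeffSq_smul, hh, Finsupp.smul_apply, smul_eq_mul, norm_mul, mul_pow,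
      ← Finset.mul_sum, Complex.norm_real, Real.norm_eq_abs, sq_abs] at hn
    refine le_of_mul_le_mul_left ?_ (pow_pos (hε n) 2)
    linarith
  have hlim : Tendsto (fun n => C * δ n ^ 2 + C * ∑ α ∈ A, ‖h n α‖ ^ 2) atTop
      (𝓝 (C * 0 ^ 2 + C * ∑ α ∈ A, ‖(0 : (Fin d → ℕ) → ℂ) α‖ ^ 2)) :=
    ((hδ_lim.pow 2).const_mul C).add <| (tendsto_finsetSum _ fun α _ =>
      (tendsto_pi_nhds.1 hh_lim α).norm.pow 2).const_mul C
  have hone := ge_of_tendsto' hlim hlower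
  norm_num at hone

theorem exists_lt_integral_modulusGap (hp : p ≠ 0) :
    ∃ δ : ℝ, 0 < δ ∧ ∀ (h : (Fin d → ℕ) →₀ ℂ) (ε : ℝ), coeffSq h = 1 → 0 < ε →
      (∑ α ∈ p.support, h α * conj (p α)).im = 0 →
      0 ≤ coeffSq p + ε * (∑ α ∈ p.support, h α * conj (p α)).re →
      (δ * ε) ^ 2 < ∫ z, modulusGap κ p ((ε : ℂ) • h) z ∂gaussian d := by
  by_contra! hcontra
  set δ : ℕ → ℝ := fun n => ((n : ℝ) + 2)⁻¹
  have hδ (n) : 0 < δ n := by positivity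
  choose h ε hh hε him hre hgap using fun n => hcontra (δ n) (hδ n)
  have hC (n) (α) : ‖h n α‖ ≤ 1 := by
    simpa [hh n] using norm_apply_le_sqrt_coeffSq (h n) α
  have hδ_half (n) : δ n ≤ 1 / 2 := by
    rw [one_div]
    exact inv_anti₀ two_pos (le_add_of_nonneg_left n.cast_nonneg)
  have hε_le (n) : ε n ≤ 4 * √(coeffSq p) :=
    le_of_integral_modulusGap_le κ p (hh n) (by nlinarith [hδ n, hδ_half n]) (hgap n)
  have hcompact : IsCompact (Set.Icc 0 (4 * √(coeffSq p)) ×ˢ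
      Set.univ.pi fun _ : Fin d → ℕ => Metric.closedBall (0 : ℂ) 1) :=
    isCompact_Icc.prod (isCompact_univ_pi fun _ => isCompact_closedBall _ _)
  obtain ⟨⟨ε₀, c⟩, -, φ, hφ, hlim⟩ := hcompact.tendsto_subseq
    (x := fun n => (ε n, (h n : (Fin d → ℕ) → ℂ))) fun n =>
      ⟨⟨(hε n).le, hε_le n⟩, fun α _ => mem_closedBall_zero_iff.2 (hC n α)⟩
  have hε_lim : Tendsto (fun n => ε (φ n)) atTop (𝓝 ε₀) := (continuous_fst.tendsto _).comp hlim
  have hh_lim : Tendsto (fun n => (h (φ n) : (Fin d → ℕ) → ℂ)) atTop (𝓝 c) :=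
    (continuous_snd.tendsto _).comp hlim
  have hδ_lim : Tendsto (fun n => δ (φ n)) atTop (𝓝 0) :=
    ((tendsto_atTop_add_const_right _ _ tendsto_natCast_atTop_atTop).inv_tendsto_atTop).comp
      hφ.tendsto_atTop
  have hsum_lim : Tendsto (fun n => ∑ α ∈ p.support, h (φ n) α * conj (p α)) atTop
      (𝓝 (∑ α ∈ p.support, c α * conj (p α))) :=
    tendsto_finsetSum _ fun α _ => (tendsto_pi_nhds.1 hh_lim α).mul_const _
  refine ne_zero_of_tendsto_of_coeffSq_eq_one κ p (fun n => hε (φ n)) (fun n => hh (φ n))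
    (fun n => hgap (φ n)) hδ_lim hh_lim ?_
  refine eq_zero_of_squareIncrement_eq_zero κ hp (ε := ε₀) (C := 1)
    (fun α => le_of_tendsto' (tendsto_pi_nhds.1 hh_lim α).norm fun n => hC _ α)
    (squareIncrement_eq_zero_of_tendsto κ p (fun n => hC (φ n)) (fun n => hε (φ n))
      (fun n => hδ (φ n)) (fun n => hgap (φ n)) hδ_lim hε_lim hh_lim) ?_ ?_
  · exact tendsto_nhds_unique ((Complex.continuous_im.tendsto _).comp hsum_lim)
      (tendsto_const_nhds.congr fun n => (him (φ n)).symm)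
  · exact ge_of_tendsto' ((hε_lim.mul ((Complex.continuous_re.tendsto _).comp hsum_lim)).const_add
      (coeffSq p)) fun n => hre (φ n)

end Compactness

section Stability

variable {d : ℕ} (κ : Fin d → ℕ) (p : (Fin d → ℕ) →₀ ℂ)

theorem exists_sqrt_coeffSq_le (hp : p ≠ 0) :
    ∃ M : ℝ, 0 < M ∧ ∀ e : (Fin d → ℕ) →₀ ℂ,
      (∑ α ∈ p.support, e α * conj (p α)).im = 0 →
      0 ≤ coeffSq p + (∑ α ∈ p.support, e α * conj (p α)).re →
      √(coeffSq e) ≤ M * √(∫ z, modulusGap κ p e z ∂gaussian d) := by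
  obtain ⟨δ, hδ, hlt⟩ := exists_lt_integral_modulusGap κ p hp
  refine ⟨δ⁻¹, inv_pos.2 hδ, fun e him hre => ?_⟩
  rcases (coeffSq_nonneg e).eq_or_lt with he | he
  · rw [← he, Real.sqrt_zero]
    positivity
  set ε := √(coeffSq e)
  have hε : 0 < ε := Real.sqrt_pos.2 he
  have hεC : (ε : ℂ) ≠ 0 := Complex.ofReal_ne_zero.2 hε.ne'
  set h := (ε : ℂ)⁻¹ • e with hh
  have hsmul : (ε : ℂ) • h = e := smul_inv_smul₀ hεC e
  have hnorm : coeffSq h = 1 := by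
    rw [hh, coeffSq_smul, norm_inv, inv_pow, Complex.norm_real, Real.norm_eq_abs, sq_abs,
      Real.sq_sqrt he.le, inv_mul_cancel₀ he.ne']
  have hsum : ∑ α ∈ p.support, e α * conj (p α) =
      (ε : ℂ) * ∑ α ∈ p.support, h α * conj (p α) := by
    simp only [← hsmul, Finsupp.smul_apply, smul_eq_mul, mul_assoc, Finset.mul_sum]
  rw [hsum, Complex.im_ofReal_mul, mul_eq_zero_iff_left hε.ne'] at him
  rw [hsum, Complex.re_ofReal_mul] at hre
  have hgap := hlt h ε hnorm hε him hre
  rw [hsmul] at hgap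
  rw [le_inv_mul_iff₀ hδ]
  exact Real.le_sqrt_of_sq_le hgap.le

theorem exists_gammaNormD_sub_le (hp : p ≠ 0) :
    ∃ M : ℝ, 0 < M ∧ ∀ G : (Fin d → ℕ) →₀ ℂ, ∃ θ : ℂ, ‖θ‖ = 1 ∧
      gammaNormD d (fun z => trueHermitePoly κ G z - θ * trueHermitePoly κ p z) ≤
        M * gammaNormD d (fun z => ‖trueHermitePoly κ G z‖ - ‖trueHermitePoly κ p z‖) := by
  obtain ⟨M, hM, hstable⟩ := exists_sqrt_coeffSq_le κ p hp
  refine ⟨M, hM, fun G => ?_⟩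
  obtain ⟨η, hη, hpair⟩ := RCLike.exists_norm_eq_mul_self (∑ α ∈ p.support, G α * conj (p α))
  have hη0 : η ≠ 0 := norm_ne_zero_iff.1 (hη ▸ one_ne_zero)
  have hreal : ∑ α ∈ p.support, (η • G - p) α * conj (p α) =
      (‖∑ α ∈ p.support, G α * conj (p α)‖ - coeffSq p : ℝ) := by
    simp only [Complex.ofReal_sub, Complex.coe_algebraMap] at hpair ⊢
    simp only [hpair, coeffSq, Complex.ofReal_sum, Finset.mul_sum, ← Finset.sum_sub_distrib,
      Finsupp.sub_apply, Finsupp.smul_apply, smul_eq_mul, sub_mul, Complex.mul_conj,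
      Complex.normSq_eq_norm_sq, mul_assoc]
  have hdist (z) : ‖trueHermitePoly κ (η • G - p) z‖ =
      ‖trueHermitePoly κ G z - η⁻¹ * trueHermitePoly κ p z‖ := by
    rw [trueHermitePoly_sub, trueHermitePoly_smul, ← one_mul ‖_ - η⁻¹ * _‖, ← hη, ← norm_mul,
      mul_sub, mul_inv_cancel_left₀ hη0]
  have hgap (z) : modulusGap κ p (η • G - p) z =
      ‖‖trueHermitePoly κ G z‖ - ‖trueHermitePoly κ p z‖‖ ^ 2 := by
    rw [modulusGap, trueHermitePoly_sub, trueHermitePoly_smul, add_sub_cancel, norm_mul, hη,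
      one_mul, Real.norm_eq_abs, sq_abs]
  refine ⟨η⁻¹, by rw [norm_inv, hη, inv_one], ?_⟩
  simp only [gammaNormD_eq_sqrt_integral, ← hdist, ← hgap, integral_sq_norm_trueHermitePoly]
  apply hstable
  · rw [hreal, Complex.ofReal_im]
  · rw [hreal, Complex.ofReal_re, add_sub_cancel]
    exact norm_nonneg _

end Stability

section Closure

variable {d : ℕ} {E : Type*} [NormedAddCommGroup E]

lemma gammaNormD_sub_eq_lpNorm {f g : (Fin d → ℂ) → E} (hf : MemLp f 2 (gaussian d))
    (hg : MemLp g 2 (gaussian d)) :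
    gammaNormD d (fun z => f z - g z) = lpNorm (f - g) 2 (gaussian d) := by
  rw [gammaNormD_eq_sqrt_integral, lpNorm_eq_integral_norm_rpow_toReal two_ne_zero
    ENNReal.ofNat_ne_top (hf.sub hg).1, Real.sqrt_eq_rpow]
  norm_num

lemma iInf_gammaNormD_sub_le (F P : (Fin d → ℂ) → ℂ) {θ : ℂ} (hθ : ‖θ‖ = 1) :
    ⨅ θ : Metric.sphere (0 : ℂ) 1, gammaNormD d (fun z => F z - θ.1 * P z) ≤
      gammaNormD d (fun z => F z - θ * P z) :=
  ciInf_le (f := fun θ : Metric.sphere (0 : ℂ) 1 => gammaNormD d (fun z => F z - θ.1 * P z))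
    ⟨0, Set.forall_mem_range.2 fun _ => Real.sqrt_nonneg _⟩ ⟨θ, mem_sphere_zero_iff_norm.2 hθ⟩

lemma sum_sq_norm_sub_mul_eq (w p : ℂ) :
    ((‖w - -1 * p‖ ^ 2 - ‖w - 1 * p‖ ^ 2 : ℝ) : ℂ) +
      (‖w - -Complex.I * p‖ ^ 2 - ‖w - Complex.I * p‖ ^ 2 : ℝ) * Complex.I =
        w * (4 * conj p) := by
  simp only [← Complex.normSq_eq_norm_sq]
  apply Complex.ext <;> simp [Complex.normSq_apply] <;> ring

/- Polarisation recovers `F * conj P` from the four functions `‖F - θ * P‖ ^ 2`, `θ ^ 4 = 1`. -/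
lemma aemeasurable_of_integrable_sq_norm_sub {X : Type*} [MeasurableSpace X] {μ : Measure X}
    {F P : X → ℂ} (hP : AEMeasurable P μ) (hP0 : ∀ᵐ x ∂μ, P x ≠ 0)
    (hI : ∀ θ : ℂ, ‖θ‖ = 1 → Integrable (fun x => ‖F x - θ * P x‖ ^ 2) μ) :
    AEMeasurable F μ := by
  have hmeas {θ : ℂ} (hθ : ‖θ‖ = 1) : AEMeasurable (fun x => ‖F x - θ * P x‖ ^ 2) μ :=
    (hI θ hθ).aemeasurable
  have hre := (hmeas (θ := -1) (by simp)).sub (hmeas (θ := 1) (by simp))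
  have him := (hmeas (θ := -Complex.I) (by simp)).sub (hmeas (θ := Complex.I) (by simp))
  have hconj : AEMeasurable (fun x => 4 * conj (P x)) μ :=
    (Complex.continuous_conj.measurable.comp_aemeasurable hP).const_mul 4
  refine ((hre.complex_ofReal.add (him.complex_ofReal.mul_const Complex.I)).div hconj).congr ?_
  filter_upwards [hP0] with x hx
  have hx' : (4 : ℂ) * conj (P x) ≠ 0 := by simpa using hx
  simp only [Pi.div_apply, Pi.add_apply, Pi.sub_apply]
  rw [sum_sq_norm_sub_mul_eq, mul_div_cancel_right₀ _ hx']

lemma gammaNormD_norm_sub_norm_le {f g h : (Fin d → ℂ) → E} (hf : MemLp f 2 (gaussian d))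
    (hg : MemLp g 2 (gaussian d)) (hh : MemLp h 2 (gaussian d)) :
    gammaNormD d (fun z => ‖g z‖ - ‖h z‖) ≤
      gammaNormD d (fun z => f z - g z) + gammaNormD d (fun z => ‖f z‖ - ‖h z‖) := by
  rw [gammaNormD_sub_eq_lpNorm hg.norm hh.norm, gammaNormD_sub_eq_lpNorm hf.norm hh.norm,
    gammaNormD_sub_eq_lpNorm hf hg]
  refine (lpNorm_sub_le_lpNorm_sub_add_lpNorm_sub hg.norm hf.norm one_le_two).trans ?_
  gcongr
  rw [← lpNorm_norm (hf.sub hg).1]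
  refine lpNorm_mono_real (hf.sub hg).norm fun z => ?_
  rw [Pi.sub_apply, Pi.sub_apply, norm_sub_rev (f z)]
  exact abs_norm_sub_norm_le _ _

lemma gammaNormD_sub_le {f g h : (Fin d → ℂ) → E} (hf : MemLp f 2 (gaussian d))
    (hg : MemLp g 2 (gaussian d)) (hh : MemLp h 2 (gaussian d)) :
    gammaNormD d (fun z => f z - h z) ≤
      gammaNormD d (fun z => f z - g z) + gammaNormD d (fun z => g z - h z) := by
  rw [gammaNormD_sub_eq_lpNorm hf hg, gammaNormD_sub_eq_lpNorm hg hh,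
    gammaNormD_sub_eq_lpNorm hf hh]
  exact lpNorm_sub_le_lpNorm_sub_add_lpNorm_sub hf hg one_le_two

variable (κ : Fin d → ℕ) (p : (Fin d → ℕ) →₀ ℂ)

lemma memLp_of_integrable_sq_norm_sub {F : (Fin d → ℂ) → ℂ} (hp : p ≠ 0)
    (hI : ∀ θ : ℂ, ‖θ‖ = 1 →
      Integrable (fun z => ‖F z - θ * trueHermitePoly κ p z‖ ^ 2) (gaussian d)) :
    MemLp F 2 (gaussian d) := by
  have hP := memLp_trueHermitePoly κ p
  have hF : AEStronglyMeasurable F (gaussian d) :=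
    (aemeasurable_of_integrable_sq_norm_sub hP.1.aemeasurable
      (gaussian_absolutelyContinuous.ae_le (ae_trueHermitePoly_ne_zero κ hp)) hI
      ).aestronglyMeasurable
  have hsub : MemLp (F - trueHermitePoly κ p) 2 (gaussian d) := by
    refine (memLp_two_iff_integrable_sq_norm (hF.sub hP.1)).2 ?_
    simpa using hI 1 norm_one
  simpa using hsub.add hP

lemma iInf_gammaNormD_sub_le_of_memLp {F : (Fin d → ℂ) → ℂ} (hF : MemLp F 2 (gaussian d))
    (hclosure : ∀ ε : ℝ, 0 < ε → ∃ G : (Fin d → ℕ) →₀ ℂ,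
      gammaNormD d (fun z => F z - trueHermitePoly κ G z) < ε) {M : ℝ} (hM : 0 < M)
    (hstable : ∀ G : (Fin d → ℕ) →₀ ℂ, ∃ θ : ℂ, ‖θ‖ = 1 ∧
      gammaNormD d (fun z => trueHermitePoly κ G z - θ * trueHermitePoly κ p z) ≤
        M * gammaNormD d (fun z => ‖trueHermitePoly κ G z‖ - ‖trueHermitePoly κ p z‖)) :
    ⨅ θ : Metric.sphere (0 : ℂ) 1,
        gammaNormD d (fun z => F z - θ.1 * trueHermitePoly κ p z) ≤
      M * gammaNormD d (fun z => ‖F z‖ - ‖trueHermitePoly κ p z‖) := by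
  refine le_of_forall_pos_le_add fun ε hε => ?_
  obtain ⟨G, hG⟩ := hclosure (ε / (1 + M)) (by positivity)
  obtain ⟨θ, hθ, hθG⟩ := hstable G
  have hP := memLp_trueHermitePoly κ p
  have hGL := memLp_trueHermitePoly κ G
  set D := gammaNormD d fun z => F z - trueHermitePoly κ G z
  calc _ ≤ gammaNormD d (fun z => F z - θ * trueHermitePoly κ p z) :=
        iInf_gammaNormD_sub_le _ _ hθ
    _ ≤ D + gammaNormD d (fun z => trueHermitePoly κ G z - θ * trueHermitePoly κ p z) :=
        gammaNormD_sub_le hF hGL (hP.const_mul θ)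
    _ ≤ D + M * (D + gammaNormD d fun z => ‖F z‖ - ‖trueHermitePoly κ p z‖) := by
        grw [hθG, gammaNormD_norm_sub_norm_le hF hGL hP]
    _ = M * gammaNormD d (fun z => ‖F z‖ - ‖trueHermitePoly κ p z‖) + D * (1 + M) := by ring
    _ ≤ _ := by grw [hG, div_mul_cancel₀ ε (by positivity)]

end Closure

end HermitePhaseRetrieval

/-- **General stability for Hermite phase retrieval.** Fix `d ≥ 1` and a multi-index `κ`.
For every `P₀` in the finite span of the basis `Φ_{κ,α}` there is `M > 0` such that every
`F` in the `γ_d`-closure of that span satisfies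
`inf_{|λ|=1} ‖F − λP₀‖_{γ_d} ≤ M ‖|F| − |P₀|‖_{γ_d}`. -/
theorem stmt3 (d : ℕ) (hd : 1 ≤ d) (κ : Fin d → ℕ) (P₀ : (Fin d → ℕ) →₀ ℂ) :
    ∃ M : ℝ, 0 < M ∧
      ∀ F : (Fin d → ℂ) → ℂ,
        (∀ ε : ℝ, 0 < ε → ∃ G : (Fin d → ℕ) →₀ ℂ,
            gammaNormD d (fun z => F z - trueHermitePoly κ G z) < ε) →
        (⨅ θ : Metric.sphere (0 : ℂ) 1,
            gammaNormD d (fun z => F z - θ.1 * trueHermitePoly κ P₀ z))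
          ≤ M * gammaNormD d (fun z => ‖F z‖ - ‖trueHermitePoly κ P₀ z‖) := by
  open HermitePhaseRetrieval in
  rcases eq_or_ne P₀ 0 with rfl | hP₀
  · refine ⟨1, one_pos, fun F _ => (iInf_gammaNormD_sub_le F _ norm_one).trans_eq ?_⟩
    simp [gammaNormD, trueHermitePoly]
  obtain ⟨M, hM, hstable⟩ := exists_gammaNormD_sub_le κ P₀ hP₀
  refine ⟨M, hM, fun F hF => ?_⟩
  by_cases hI : ∀ θ : ℂ, ‖θ‖ = 1 →
      Integrable (fun z => ‖F z - θ * trueHermitePoly κ P₀ z‖ ^ 2) (gaussian d)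
  · exact iInf_gammaNormD_sub_le_of_memLp κ P₀ (memLp_of_integrable_sq_norm_sub κ P₀ hP₀ hI) hF
      hM hstable
  · -- a non-integrable `‖F - θ P₀‖ ^ 2` has Bochner integral `0`, hence `gammaNormD` equal to `0`
    push Not at hI
    obtain ⟨θ, hθ, hθI⟩ := hI
    refine (iInf_gammaNormD_sub_le F _ hθ).trans ?_
    rw [gammaNormD_eq_sqrt_integral, integral_undef hθI, Real.sqrt_zero]
    exact mul_nonneg hM.le (Real.sqrt_nonneg _)
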